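/- arXiv:2303.15367 — 4 statements merged into one kernel-verified Lean document; each statement's English description precedes it below -/
import Mathlib

section
/- Let G be a triangle-free graph of maximum degree at most Δ, let ε ∈ (0,1) be fixed with Δ sufficiently large in terms of ε, and let k satisfy (1-ε)·k·ln k ≥ Δ. Then for every vertex v of G, the number of proper k-colourings of G is at least Δ^{ε/2} times the number of proper k-colourings of G \ v. -/
open Finset

namespace TF

open Classical in
/-- colourings of all of `V` that are proper on `S` -/
noncomputable def P {V : Type} [Fintype V] (G : SimpleGraph V) (k : ℕ) (S : Finset V) :
    Finset (V → Fin k) :=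
  univ.filter fun σ => ∀ a ∈ S, ∀ b ∈ S, G.Adj a b → σ a ≠ σ b

open Classical in
/-- colours available at `u` given the colours on `S` -/
noncomputable def Av {V : Type} (G : SimpleGraph V) (k : ℕ) (S : Finset V)
    (u : V) (σ : V → Fin k) : Finset (Fin k) :=
  univ.filter fun c => ∀ w ∈ S, G.Adj u w → σ w ≠ c

set_option linter.unusedSectionVars false

section
variable {V : Type} [Fintype V] [DecidableEq V] (G : SimpleGraph V) (k : ℕ)

lemma sum_update (u : V) (g : (V → Fin k) → ℝ) :
    ∑ σ, ∑ c : Fin k, g (Function.update σ u c) = k * ∑ σ, g σ := by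
  have h : ∑ σ, ∑ c : Fin k, g (Function.update σ u c) = ∑ σ : V → Fin k, ∑ _c : Fin k, g σ := by
    rw [← Finset.sum_product', ← Finset.sum_product']
    refine Finset.sum_nbij' (fun p => (Function.update p.1 u p.2, p.1 u))
      (fun p => (Function.update p.1 u p.2, p.1 u)) ?_ ?_ ?_ ?_ ?_ <;> simp
  rw [h, Finset.mul_sum]
  simp

lemma Av_update (S : Finset V) (u w : V) (hw : ¬ (w ∈ S ∧ G.Adj u w)) (σ : V → Fin k) (c : Fin k) :
    Av G k S u (Function.update σ w c) = Av G k S u σ := by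
  unfold Av
  ext d
  simp only [mem_filter, mem_univ, true_and]
  refine forall_congr' fun x => forall_congr' fun hx => forall_congr' fun ha => ?_
  have : x ≠ w := by rintro rfl; exact hw ⟨hx, ha⟩
  rw [Function.update_of_ne this]

lemma Av_erase (S : Finset V) (u : V) (σ : V → Fin k) :
    Av G k (S.erase u) u σ = Av G k S u σ := by
  unfold Av
  ext d
  simp only [mem_filter, mem_univ, true_and, mem_erase]
  constructor
  · intro h w hw ha
    exact h w ⟨ha.ne', hw⟩ ha
  · intro h w hw ha
    exact h w hw.2 ha

lemma mem_P_update (S : Finset V) (u : V) (hu : u ∉ S) (σ : V → Fin k) (c : Fin k) :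
    Function.update σ u c ∈ P G k (insert u S) ↔ σ ∈ P G k S ∧ c ∈ Av G k S u σ := by
  unfold P Av
  simp only [mem_filter, mem_univ, true_and]
  have hne : ∀ x ∈ S, x ≠ u := by rintro x hx rfl; exact hu hx
  constructor
  · intro h
    refine ⟨fun a ha b hb hab => ?_, fun w hw huw => ?_⟩
    · have := h a (mem_insert_of_mem ha) b (mem_insert_of_mem hb) hab
      rwa [Function.update_of_ne (hne a ha), Function.update_of_ne (hne b hb)] at this
    · have := h w (mem_insert_of_mem hw) u (mem_insert_self _ _) huw.symm
      rwa [Function.update_of_ne (hne w hw), Function.update_self] at this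
  · rintro ⟨h1, h2⟩ a ha b hb hab
    by_cases hau : a = u
    · by_cases hbu : b = u
      · exact absurd (hau.trans hbu.symm) hab.ne
      · have hb' := (mem_insert.1 hb).resolve_left hbu
        subst hau
        rw [Function.update_of_ne hbu, Function.update_self]
        exact (h2 b hb' hab).symm
    · have ha' := (mem_insert.1 ha).resolve_left hau
      by_cases hbu : b = u
      · subst hbu
        rw [Function.update_of_ne hau, Function.update_self]
        exact (h2 a ha' hab.symm)
      · have hb' := (mem_insert.1 hb).resolve_left hbu
        rw [Function.update_of_ne hau, Function.update_of_ne hbu]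
        exact h1 a ha' b hb' hab

lemma sum_P_insert (S : Finset V) (u : V) (hu : u ∉ S) (g : (V → Fin k) → ℝ) :
    k * ∑ σ ∈ P G k (insert u S), g σ
      = ∑ σ ∈ P G k S, ∑ c ∈ Av G k S u σ, g (Function.update σ u c) := by
  classical
  have h := sum_update k u (fun σ => if σ ∈ P G k (insert u S) then g σ else 0)
  simp only [mem_P_update G k S u hu] at h
  rw [← Finset.sum_filter, Finset.filter_mem_eq_inter, Finset.univ_inter] at h
  rw [← h, ← Finset.sum_filter_add_sum_filter_not univ (fun σ => σ ∈ P G k S)]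
  rw [Finset.filter_mem_eq_inter, Finset.univ_inter]
  rw [Finset.sum_eq_zero (s := univ.filter (fun σ => ¬ σ ∈ P G k S)), add_zero]
  · refine Finset.sum_congr rfl fun σ hσ => ?_
    simp only [hσ, true_and]
    rw [← Finset.sum_filter, Finset.filter_mem_eq_inter, Finset.univ_inter]
  · intro σ hσ
    simp only [mem_filter, mem_univ, true_and] at hσ
    simp [hσ]

/-- resampling the colour of a single vertex `u ∈ S` -/
lemma resample (hk : 0 < k) (S : Finset V) (u : V) (hu : u ∈ S) (c : Fin k)
    (w : (V → Fin k) → ℝ) (hw : ∀ σ d, w (Function.update σ u d) = w σ) :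
    ∑ σ ∈ P G k S, w σ * (if σ u ≠ c then 1 else 0)
      = ∑ σ ∈ P G k S, w σ * (1 - (if c ∈ Av G k S u σ then 1 else 0) / (Av G k S u σ).card) := by
  have hk' : (k : ℝ) ≠ 0 := by positivity
  apply mul_left_cancel₀ hk'
  have e : insert u (S.erase u) = S := Finset.insert_erase hu
  have h1 := sum_P_insert G k (S.erase u) u (Finset.notMem_erase _ _)
    (fun σ => w σ * (if σ u ≠ c then 1 else 0))
  have h2 := sum_P_insert G k (S.erase u) u (Finset.notMem_erase _ _)
    (fun σ => w σ * (1 - (if c ∈ Av G k S u σ then 1 else 0) / (Av G k S u σ).card))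
  rw [e] at h1 h2
  rw [h1, h2]
  refine Finset.sum_congr rfl fun σ _ => ?_
  simp only [hw, Function.update_self, Av_erase]
  simp only [Av_update G k S u u (by simp)]
  rw [← Finset.mul_sum, Finset.sum_const, nsmul_eq_mul]
  set A := Av G k S u σ
  have h3 : ∑ d ∈ A, (if d ≠ c then (1:ℝ) else 0) = A.card - (if c ∈ A then 1 else 0) := by
    have : ∀ d ∈ A, (if d ≠ c then (1:ℝ) else 0) = 1 - if d = c then 1 else 0 := by
      intro d _; by_cases h : d = c <;> simp [h]
    rw [Finset.sum_congr rfl this]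
    simp [Finset.sum_sub_distrib]
  rw [h3]
  by_cases hA : A.card = 0
  · rw [Finset.card_eq_zero] at hA
    simp [hA]
  · have : (A.card : ℝ) ≠ 0 := by exact_mod_cast hA
    field_simp

/-- number of small-list configurations -/
lemma bad_count (S : Finset V) (u : V) (hu : u ∈ S) (t L : ℝ) (hL : 0 < L) (hk : 0 < k)
    (ih : L * (P G k (S.erase u)).card ≤
      ∑ σ ∈ P G k (S.erase u), ((Av G k (S.erase u) u σ).card : ℝ)) (ht : 0 ≤ t) :
    ∑ σ ∈ P G k S, (if ((Av G k S u σ).card : ℝ) < t then (1:ℝ) else 0)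
      ≤ t / L * (P G k S).card := by
  have hk' : (0 : ℝ) < k := by positivity
  have e : insert u (S.erase u) = S := Finset.insert_erase hu
  have h1 := sum_P_insert G k (S.erase u) u (Finset.notMem_erase _ _)
    (fun σ => (if ((Av G k S u σ).card : ℝ) < t then (1:ℝ) else 0))
  have h2 := sum_P_insert G k (S.erase u) u (Finset.notMem_erase _ _) (fun σ => (1:ℝ))
  rw [e] at h1 h2
  simp only [Av_update G k S u u (by simp), Av_erase, Finset.sum_const, nsmul_eq_mul, mul_one] at h1 h2 ih
  rw [← h2] at ih
  have h3 : ∑ σ ∈ P G k (S.erase u), ((Av G k S u σ).card : ℝ) *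
      (if ((Av G k S u σ).card : ℝ) < t then (1:ℝ) else 0) ≤ (P G k (S.erase u)).card * t := by
    rw [← nsmul_eq_mul]
    apply Finset.sum_le_card_nsmul
    intro σ _
    split_ifs with h <;> linarith
  rw [← h1] at h3
  rw [div_mul_eq_mul_div, le_div_iff₀ hL]
  set X := ∑ σ ∈ P G k S, (if ((Av G k S u σ).card : ℝ) < t then (1:ℝ) else 0)
  have : k * (X * L) ≤ k * (t * (P G k S).card) := by
    calc k * (X * L) = (k * X) * L := by ring
      _ ≤ ((P G k (S.erase u)).card * t) * L := by gcongr
      _ = t * (L * (P G k (S.erase u)).card) := by ring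
      _ ≤ t * (k * (P G k S).card) := by gcongr
      _ = _ := by ring
  exact le_of_mul_le_mul_left this hk'

open Classical in
/-- local factor: averaged for good vertices in `Y`, indicator otherwise -/
noncomputable def phi (S : Finset V) (t : ℝ) (Y : Finset V) (σ : V → Fin k) (c : Fin k) (u : V) : ℝ :=
  if u ∈ Y ∧ t ≤ ((Av G k S u σ).card : ℝ) then
    1 - (if c ∈ Av G k S u σ then 1 else 0) / (Av G k S u σ).card
  else if σ u ≠ c then 1 else 0

lemma phi_update (S : Finset V) (t : ℝ) (Y : Finset V) (σ : V → Fin k) (c d : Fin k) (u x : V)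
    (hne : x ≠ u) (hadj : ¬ G.Adj x u) :
    phi G k S t Y (Function.update σ u d) c x = phi G k S t Y σ c x := by
  unfold phi
  rw [Av_update G k S x u (fun h => hadj h.2), Function.update_of_ne hne]

lemma swap (hk : 0 < k) (S D : Finset V) (hDS : D ⊆ S) (hD : ∀ a ∈ D, ∀ b ∈ D, ¬ G.Adj a b)
    (t : ℝ) (W : (V → Fin k) → ℝ) (hW : ∀ u ∈ D, ∀ σ d, W (Function.update σ u d) = W σ)
    (c : Fin k) (Y : Finset V) (hY : Y ⊆ D) :
    ∑ σ ∈ P G k S, W σ * ∏ u ∈ D, phi G k S t ∅ σ c u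
      = ∑ σ ∈ P G k S, W σ * ∏ u ∈ D, phi G k S t Y σ c u := by
  classical
  induction Y using Finset.induction_on with
  | empty => rfl
  | insert u Y huY ih =>
    rw [ih (fun x hx => hY (mem_insert_of_mem hx))]
    have huD : u ∈ D := hY (mem_insert_self _ _)
    have hoth : ∀ σ, ∏ x ∈ D.erase u, phi G k S t (insert u Y) σ c x
        = ∏ x ∈ D.erase u, phi G k S t Y σ c x := by
      intro σ
      refine Finset.prod_congr rfl fun x hx => ?_
      unfold phi
      have : x ≠ u := (mem_erase.1 hx).1
      simp [mem_insert, this]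
    set h : (V → Fin k) → ℝ := fun σ => W σ * ∏ x ∈ D.erase u, phi G k S t Y σ c x with hh
    have hinv : ∀ σ d, h (Function.update σ u d) = h σ := by
      intro σ d
      simp only [hh]
      rw [hW u huD]
      congr 1
      refine Finset.prod_congr rfl fun x hx => ?_
      exact phi_update G k S t Y σ c d u x (mem_erase.1 hx).1 (hD x (mem_erase.1 hx).2 u huD)
    have key := resample G k hk S u (hDS huD) c
      (fun σ => h σ * (if t ≤ ((Av G k S u σ).card : ℝ) then 1 else 0)) (by
        intro σ d
        simp only [hinv, Av_update G k S u u (by simp)])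
    have e1 : ∀ σ, W σ * ∏ x ∈ D, phi G k S t Y σ c x
        = h σ * (if t ≤ ((Av G k S u σ).card : ℝ) then 1 else 0) * (if σ u ≠ c then 1 else 0)
          + h σ * (if t ≤ ((Av G k S u σ).card : ℝ) then 0 else 1) * (if σ u ≠ c then 1 else 0) := by
      intro σ
      rw [← Finset.mul_prod_erase D _ huD]
      have : phi G k S t Y σ c u = if σ u ≠ c then 1 else 0 := by
        unfold phi; simp [huY]
      rw [this]
      simp only [hh]
      split_ifs <;> ring
    have e2 : ∀ σ, W σ * ∏ x ∈ D, phi G k S t (insert u Y) σ c x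
        = h σ * (if t ≤ ((Av G k S u σ).card : ℝ) then 1 else 0) *
            (1 - (if c ∈ Av G k S u σ then 1 else 0) / (Av G k S u σ).card)
          + h σ * (if t ≤ ((Av G k S u σ).card : ℝ) then 0 else 1) * (if σ u ≠ c then 1 else 0) := by
      intro σ
      rw [← Finset.mul_prod_erase D _ huD, hoth]
      simp only [hh]
      unfold phi
      by_cases ht : t ≤ ((Av G k S u σ).card : ℝ)
      · simp only [ht, mem_insert_self, true_and, if_true]; ring
      · simp only [ht, and_false, if_false]; ring
    rw [Finset.sum_congr rfl fun σ _ => e1 σ, Finset.sum_congr rfl fun σ _ => e2 σ,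
      Finset.sum_add_distrib, Finset.sum_add_distrib, key]

lemma one_sub_inv_ge (a : ℝ) (ha : 1 < a) : Real.exp (-(1 / (a - 1))) ≤ 1 - 1 / a := by
  have h1 : 0 < a - 1 := by linarith
  have h := Real.add_one_le_exp (1 / (a - 1))
  rw [Real.exp_neg]
  have e : 1 / (a - 1) + 1 = a / (a - 1) := by field_simp; ring
  rw [e] at h
  calc (Real.exp (1 / (a - 1)))⁻¹ ≤ (a / (a - 1))⁻¹ := by
        apply inv_anti₀ _ h; positivity
    _ = 1 - 1 / a := by field_simp

lemma pointwise (S D : Finset V) (σ : V → Fin k) (t τ β Δ : ℝ) (ht : 1 < t)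
    (hτ : t / (t - 1) ≤ τ) (hΔ : (D.card : ℝ) ≤ Δ) (hκ : 0 < k - β)
    (hb : ∑ u ∈ D, (if ((Av G k S u σ).card : ℝ) < t then (1:ℝ) else 0) ≤ β) :
    (k - β) * Real.exp (-(Δ * τ / (k - β))) ≤ ∑ c, ∏ u ∈ D, phi G k S t D σ c u := by
  classical
  set Bd := D.filter (fun u => ((Av G k S u σ).card : ℝ) < t) with hBd
  set K : Finset (Fin k) := univ \ Bd.image σ with hK
  set a : V → ℝ := fun u => ((Av G k S u σ).card : ℝ) with ha
  set Gd := D.filter (fun u => ¬ ((Av G k S u σ).card : ℝ) < t) with hGd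
  set s : Fin k → ℝ := fun c => ∑ u ∈ Gd, (if c ∈ Av G k S u σ then 1 / (a u - 1) else 0) with hs
  have hτ0 : 0 ≤ τ := le_trans (by apply div_nonneg <;> linarith) hτ
  have hBcard : (Bd.card : ℝ) ≤ β := by
    rw [← Finset.sum_filter] at hb
    simpa using hb
  have hKc : (k : ℝ) - β ≤ K.card := by
    have h1 : (univ : Finset (Fin k)).card ≤ K.card + (Bd.image σ).card := by
      rw [hK]
      exact Finset.card_le_card_sdiff_add_card
    have h2 := Finset.card_image_le (s := Bd) (f := σ)
    have h3 : k ≤ K.card + Bd.card := by simp at h1; omega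
    have h4 : (k : ℝ) ≤ K.card + Bd.card := by exact_mod_cast h3
    linarith
  have hfac : ∀ u ∈ Gd, ∀ c, Real.exp (-(if c ∈ Av G k S u σ then 1 / (a u - 1) else 0))
      ≤ phi G k S t D σ c u := by
    intro u hu c
    rw [hGd, mem_filter] at hu
    unfold phi
    have hg : u ∈ D ∧ t ≤ ((Av G k S u σ).card : ℝ) := ⟨hu.1, not_lt.1 hu.2⟩
    rw [if_pos hg]
    by_cases hc : c ∈ Av G k S u σ
    · rw [if_pos hc, if_pos hc]
      apply one_sub_inv_ge
      exact lt_of_lt_of_le ht (not_lt.1 hu.2)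
    · rw [if_neg hc, if_neg hc]; simp
  have hfac' : ∀ u ∈ Bd, ∀ c ∈ K, phi G k S t D σ c u = 1 := by
    intro u hu c hc
    have : σ u ≠ c := by
      rintro rfl
      rw [hK, mem_sdiff] at hc
      exact hc.2 (mem_image_of_mem _ hu)
    rw [hBd, mem_filter] at hu
    unfold phi
    rw [if_neg (fun h => absurd hu.2 (not_lt.2 h.2)), if_pos this]
  have hnn : ∀ c, ∀ u ∈ D, 0 ≤ phi G k S t D σ c u := by
    intro c u hu
    by_cases h : ((Av G k S u σ).card : ℝ) < t
    · unfold phi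
      rw [if_neg (fun h' => absurd h (not_lt.2 h'.2))]
      split_ifs <;> norm_num
    · exact le_trans (Real.exp_pos _).le (hfac u (by rw [hGd, mem_filter]; exact ⟨hu, h⟩) c)
  have hprod : ∀ c ∈ K, Real.exp (-(s c)) ≤ ∏ u ∈ D, phi G k S t D σ c u := by
    intro c hc
    rw [← Finset.prod_filter_mul_prod_filter_not D (fun u => ((Av G k S u σ).card : ℝ) < t)]
    rw [Finset.prod_eq_one (fun u hu => hfac' u hu c hc), one_mul]
    simp only [hs]
    rw [← Finset.sum_neg_distrib, Real.exp_sum]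
    exact Finset.prod_le_prod (fun _ _ => (Real.exp_pos _).le) (fun u hu => hfac u hu c)
  have hsum : ∑ c ∈ K, s c ≤ Δ * τ := by
    simp only [hs]
    rw [Finset.sum_comm]
    calc ∑ u ∈ Gd, ∑ c ∈ K, (if c ∈ Av G k S u σ then 1 / (a u - 1) else 0)
        ≤ ∑ u ∈ Gd, τ := by
          refine Finset.sum_le_sum fun u hu => ?_
          rw [hGd, mem_filter] at hu
          have hau : t ≤ a u := not_lt.1 hu.2
          have hpos : 0 < a u - 1 := by linarith
          rw [← Finset.sum_filter, Finset.sum_const, nsmul_eq_mul]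
          have hc : ((K.filter (fun c => c ∈ Av G k S u σ)).card : ℝ) ≤ a u := by
            simp only [ha]
            norm_cast
            apply Finset.card_le_card
            intro c hc
            exact (mem_filter.1 hc).2
          calc _ ≤ a u * (1 / (a u - 1)) := by gcongr
            _ ≤ t / (t - 1) := by
              rw [mul_one_div, div_le_div_iff₀ hpos (by linarith)]
              nlinarith
            _ ≤ τ := hτ
      _ = Gd.card * τ := by simp
      _ ≤ Δ * τ := by
        gcongr
        refine le_trans ?_ hΔ
        exact_mod_cast Finset.card_filter_le _ _
  set m := Δ * τ / (k - β) with hm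
  have hΔ0 : 0 ≤ Δ := le_trans (by positivity) hΔ
  have hm0 : 0 ≤ m := by rw [hm]; positivity
  have hmk : m * (k - β) = Δ * τ := by rw [hm]; field_simp
  calc (k - β) * Real.exp (-m) ≤ Real.exp (-m) * (K.card + K.card * m - ∑ c ∈ K, s c) := by
        rw [mul_comm]
        apply mul_le_mul_of_nonneg_left _ (Real.exp_pos _).le
        nlinarith
    _ = ∑ c ∈ K, Real.exp (-m) * (1 + m - s c) := by
        rw [← Finset.mul_sum, Finset.sum_sub_distrib, Finset.sum_const, nsmul_eq_mul]; ring
    _ ≤ ∑ c ∈ K, Real.exp (-(s c)) := by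
        refine Finset.sum_le_sum fun c _ => ?_
        have h := Real.add_one_le_exp (m - s c)
        have : Real.exp (-(s c)) = Real.exp (-m) * Real.exp (m - s c) := by
          rw [← Real.exp_add]; ring_nf
        rw [this]
        gcongr
        linarith
    _ ≤ ∑ c ∈ K, ∏ u ∈ D, phi G k S t D σ c u := Finset.sum_le_sum hprod
    _ ≤ _ := Finset.sum_le_sum_of_subset_of_nonneg (Finset.subset_univ _)
        fun c _ _ => Finset.prod_nonneg (hnn c)

lemma step (hk : 0 < k) (S D : Finset V) (v : V) (hD : ∀ u, u ∈ D ↔ u ∈ S ∧ G.Adj v u)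
    (hind : ∀ a ∈ D, ∀ b ∈ D, ¬ G.Adj a b)
    (t τ Δ L β : ℝ) (ht : 1 < t) (hτ : t / (t - 1) ≤ τ) (hΔ : (D.card : ℝ) ≤ Δ)
    (hL : 0 < L) (hβ : 0 < β) (hβe : 2 * Δ * t / L = β) (hκ : 0 < k - β)
    (hM : 2 * L ≤ (k - β) * Real.exp (-(Δ * τ / (k - β))))
    (ih : ∀ u ∈ D, L * (P G k (S.erase u)).card ≤
      ∑ σ ∈ P G k (S.erase u), ((Av G k (S.erase u) u σ).card : ℝ)) :
    L * (P G k S).card ≤ ∑ σ ∈ P G k S, ((Av G k S v σ).card : ℝ) := by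
  classical
  set b : (V → Fin k) → ℝ := fun σ =>
    ∑ u ∈ D, (if ((Av G k S u σ).card : ℝ) < t then (1:ℝ) else 0) with hb
  set W : (V → Fin k) → ℝ := fun σ => if b σ ≤ β then 1 else 0 with hWdef
  have hDS : D ⊆ S := fun u hu => ((hD u).1 hu).1
  have hb0 : ∀ σ, 0 ≤ b σ := fun σ => Finset.sum_nonneg fun u _ => by split_ifs <;> norm_num
  have hW : ∀ u ∈ D, ∀ σ d, W (Function.update σ u d) = W σ := by
    intro u hu σ d
    have : b (Function.update σ u d) = b σ := by
      simp only [hb]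
      refine Finset.sum_congr rfl fun x hx => ?_
      rw [Av_update G k S x u (fun h => hind x hx u hu h.2)]
    simp only [hWdef, this]
  have hbs : ∑ σ ∈ P G k S, b σ ≤ β / 2 * (P G k S).card := by
    simp only [hb]
    rw [Finset.sum_comm]
    calc _ ≤ ∑ u ∈ D, t / L * (P G k S).card :=
          Finset.sum_le_sum fun u hu => bad_count G k S u (hDS hu) t L hL hk (ih u hu) (by linarith)
      _ = D.card * (t / L * (P G k S).card) := by simp
      _ ≤ Δ * (t / L * (P G k S).card) := by
        have : 0 ≤ t := by linarith
        gcongr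
      _ = _ := by rw [← hβe]; ring
  have hWs : ((P G k S).card : ℝ) / 2 ≤ ∑ σ ∈ P G k S, W σ := by
    have h1 : ∀ σ ∈ P G k S, 1 - b σ / β ≤ W σ := by
      intro σ _
      simp only [hWdef]
      split_ifs with h
      · have : 0 ≤ b σ / β := div_nonneg (hb0 σ) hβ.le
        linarith
      · have : 1 ≤ b σ / β := by rw [le_div_iff₀ hβ]; linarith
        linarith
    have h2 := Finset.sum_le_sum h1
    rw [Finset.sum_sub_distrib, ← Finset.sum_div] at h2
    have h3 : (∑ σ ∈ P G k S, b σ) / β ≤ (P G k S).card / 2 := by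
      rw [div_le_iff₀ hβ]; linarith
    simp at h2
    linarith
  have hAv : ∀ σ, ((Av G k S v σ).card : ℝ) = ∑ c, ∏ u ∈ D, phi G k S t ∅ σ c u := by
    intro σ
    have : ∀ c, ∏ u ∈ D, phi G k S t ∅ σ c u = if c ∈ Av G k S v σ then 1 else 0 := by
      intro c
      have h1 : ∀ u ∈ D, phi G k S t ∅ σ c u = if σ u ≠ c then 1 else 0 := by
        intro u _; unfold phi; simp
      rw [Finset.prod_congr rfl h1, Finset.prod_ite_zero]
      simp only [Finset.prod_const_one]
      congr 1
      unfold Av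
      simp only [mem_filter, mem_univ, true_and, eq_iff_iff, hD]
      exact ⟨fun h w hw ha => h w ⟨hw, ha⟩, fun h w hw => h w hw.1 hw.2⟩
    simp [this]
  set M := (k - β) * Real.exp (-(Δ * τ / (k - β))) with hMdef
  calc L * (P G k S).card = (2 * L) * ((P G k S).card / 2) := by ring
    _ ≤ M * ∑ σ ∈ P G k S, W σ := by
      have : 0 ≤ M := by linarith
      gcongr
    _ = ∑ σ ∈ P G k S, W σ * M := by rw [Finset.mul_sum]; simp [mul_comm]
    _ ≤ ∑ σ ∈ P G k S, W σ * ∑ c, ∏ u ∈ D, phi G k S t D σ c u := by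
      refine Finset.sum_le_sum fun σ _ => ?_
      simp only [hWdef]
      split_ifs with h
      · rw [one_mul, one_mul]
        exact pointwise G k S D σ t τ β Δ ht hτ hΔ hκ h
      · simp
    _ = ∑ σ ∈ P G k S, W σ * ∑ c, ∏ u ∈ D, phi G k S t ∅ σ c u := by
      simp only [Finset.mul_sum]
      rw [Finset.sum_comm, Finset.sum_comm (s := P G k S)]
      refine Finset.sum_congr rfl fun c _ => ?_
      exact (swap G k hk S D hDS hind t W hW c D (Finset.Subset.refl _)).symm
    _ ≤ ∑ σ ∈ P G k S, ((Av G k S v σ).card : ℝ) := by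
      refine Finset.sum_le_sum fun σ _ => ?_
      rw [← hAv]
      simp only [hWdef]
      split_ifs <;> simp

lemma main_ind (hk : 0 < k) [DecidableRel G.Adj] (Δ : ℕ) (htf : G.CliqueFree 3)
    (hdeg : G.maxDegree ≤ Δ)
    (t τ L β : ℝ) (ht : 1 < t) (hτ : t / (t - 1) ≤ τ)
    (hL : 0 < L) (hβ : 0 < β) (hβe : 2 * Δ * t / L = β) (hκ : 0 < k - β)
    (hM : 2 * L ≤ (k - β) * Real.exp (-(Δ * τ / (k - β)))) :
    ∀ n : ℕ, ∀ S : Finset V, S.card = n → ∀ v,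
    L * (P G k S).card ≤ ∑ σ ∈ P G k S, ((Av G k S v σ).card : ℝ) := by
  intro n
  induction n using Nat.strong_induction_on with
  | _ n ihn =>
    intro S hS v
    refine step G k hk S (S.filter (fun u => G.Adj v u)) v (by simp) ?_ t τ Δ L β ht hτ ?_
      hL hβ hβe hκ hM ?_
    · intro a ha b hb hab
      exact htf {v, a, b} (SimpleGraph.is3Clique_triple_iff.2
        ⟨(mem_filter.1 ha).2, (mem_filter.1 hb).2, hab⟩)
    · have h1 : S.filter (fun u => G.Adj v u) ⊆ G.neighborFinset v := by
        intro u hu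
        simpa using (mem_filter.1 hu).2
      have h2 := Finset.card_le_card h1
      rw [SimpleGraph.card_neighborFinset_eq_degree] at h2
      exact_mod_cast h2.trans ((G.degree_le_maxDegree v).trans hdeg)
    · intro u hu
      have huS := (mem_filter.1 hu).1
      exact ihn (S.erase u).card (by rw [← hS]; exact Finset.card_erase_lt_of_mem huS) _ rfl u

lemma card_full : Nat.card {σ : V → Fin k // ∀ u w : V, G.Adj u w → σ u ≠ σ w}
    = (P G k univ).card := by
  classical
  rw [Nat.card_eq_fintype_card, Fintype.card_subtype]
  unfold P
  congr 1
  ext σ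
  simp

lemma mem_P (S : Finset V) (σ : V → Fin k) :
    σ ∈ P G k S ↔ ∀ a ∈ S, ∀ b ∈ S, G.Adj a b → σ a ≠ σ b := by
  unfold P
  simp only [mem_filter, mem_univ, true_and]

lemma card_erase (v : V) : (P G k (univ.erase v)).card =
    k * Nat.card {σ : {u : V // u ≠ v} → Fin k //
              ∀ a b : {u : V // u ≠ v}, G.Adj a.1 b.1 → σ a ≠ σ b} := by
  classical
  have e : {σ : V → Fin k // σ ∈ P G k (univ.erase v)} ≃
      Fin k × {σ : {u : V // u ≠ v} → Fin k //
              ∀ a b : {u : V // u ≠ v}, G.Adj a.1 b.1 → σ a ≠ σ b} :=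
    { toFun := fun σ => (σ.1 v, ⟨fun a => σ.1 a.1, by
        intro a b hab
        exact (mem_P G k _ _).1 σ.2 a.1 (mem_erase.2 ⟨a.2, mem_univ _⟩) b.1
          (mem_erase.2 ⟨b.2, mem_univ _⟩) hab⟩)
      invFun := fun p => ⟨fun u => if h : u = v then p.1 else p.2.1 ⟨u, h⟩, by
        rw [mem_P]
        intro a ha' b hb' hab
        have ha := ne_of_mem_erase ha'
        have hb := ne_of_mem_erase hb'
        rw [dif_neg ha, dif_neg hb]
        exact p.2.2 ⟨a, ha⟩ ⟨b, hb⟩ hab⟩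
      left_inv := by
        rintro ⟨σ, hσ⟩
        apply Subtype.ext
        funext u
        by_cases h : u = v
        · subst h; simp
        · simp [h]
      right_inv := by
        rintro ⟨c, σ, hσ⟩
        refine Prod.ext (by simp) (Subtype.ext (funext fun u => ?_))
        simp [u.2] }
  have := Nat.card_congr e
  rw [Nat.card_prod, Nat.card_fin] at this
  rw [← this]
  simp

end
end TF

open Filter Topology in
lemma TF.numeric (ε : ℝ) (hε0 : 0 < ε) (hε1 : ε < 1) :
    ∃ Δ₀ : ℕ, ∀ Δ : ℕ, Δ₀ ≤ Δ → ∀ k : ℕ, (Δ : ℝ) ≤ (1 - ε) * k * Real.log k →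
      0 < Δ ∧ 0 < k ∧ 0 < (k : ℝ) - 2 * Δ * (1 + 8 / ε) / (Δ : ℝ) ^ (ε / 2) ∧
      2 * (Δ : ℝ) ^ (ε / 2) ≤ ((k : ℝ) - 2 * Δ * (1 + 8 / ε) / (Δ : ℝ) ^ (ε / 2)) *
        Real.exp (-(Δ * (1 + ε / 8) / ((k : ℝ) - 2 * Δ * (1 + 8 / ε) / (Δ : ℝ) ^ (ε / 2)))) := by
  -- eventually: log x ≤ x^(ε/8)
  have ev1 : ∀ᶠ n : ℕ in atTop, Real.log n ≤ (n : ℝ) ^ (ε / 8) := by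
    have h := (isLittleO_log_rpow_atTop (r := ε / 8) (by positivity)).bound (c := 1) one_pos
    have h2 := tendsto_natCast_atTop_atTop (R := ℝ) |>.eventually h
    filter_upwards [h2, eventually_ge_atTop 1] with n hn hn1
    rw [one_mul, Real.norm_eq_abs, Real.norm_eq_abs] at hn
    rw [abs_of_nonneg (by positivity : (0:ℝ) ≤ (n:ℝ) ^ (ε/8))] at hn
    exact (le_abs_self _).trans hn
  obtain ⟨k₀, hk₀⟩ := eventually_atTop.1 ev1
  have tend : ∀ r : ℝ, 0 < r → Tendsto (fun n : ℕ => (n : ℝ) ^ r) atTop atTop := fun r hr =>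
    (tendsto_rpow_atTop hr).comp tendsto_natCast_atTop_atTop
  -- k is at least k₀ + 1 once Δ is large
  obtain ⟨Δ₁, hΔ₁⟩ := eventually_atTop.1 ((tend (ε / 8) (by positivity)).eventually_ge_atTop (4 : ℝ))
  obtain ⟨Δ₂, hΔ₂⟩ := eventually_atTop.1
    ((tend (ε / 4) (by positivity)).eventually_ge_atTop (2 * (1 + 8 / ε) * (8 / ε)))
  refine ⟨max (max Δ₁ Δ₂) (k₀ * k₀ + 1), fun Δ hΔ k hk => ?_⟩
  have h1 := hΔ₁ Δ (by omega)
  have h2 := hΔ₂ Δ (by omega)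
  have hΔ3 : k₀ * k₀ + 1 ≤ Δ := by omega
  have hΔ0 : 0 < Δ := by omega
  have hΔR : (0 : ℝ) < Δ := by exact_mod_cast hΔ0
  have hΔ1 : (1 : ℝ) ≤ Δ := by exact_mod_cast hΔ0
  have hk0 : 0 < k := by
    rcases Nat.eq_zero_or_pos k with h | h
    · subst h; simp at hk; omega
    · exact h
  have hkR : (0 : ℝ) < k := by exact_mod_cast hk0
  have hk1 : (1 : ℝ) ≤ k := by exact_mod_cast hk0
  have hlog0 : 0 ≤ Real.log k := Real.log_nonneg hk1
  have hΔk : (Δ : ℝ) ≤ k * Real.log k := by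
    refine hk.trans ?_
    have : 0 ≤ k * Real.log k := by positivity
    nlinarith
  have hkk : k₀ ≤ k := by
    by_contra hcon
    push Not at hcon
    have : (Δ : ℝ) ≤ k * k := by
      refine hΔk.trans ?_
      have := Real.log_le_sub_one_of_pos hkR
      gcongr
      linarith
    have h' : Δ ≤ k * k := by exact_mod_cast this
    have : k * k ≤ k₀ * k₀ := Nat.mul_le_mul hcon.le hcon.le
    omega
  have hlog := hk₀ k hkk
  have hΔk' : (Δ : ℝ) ≤ (k : ℝ) ^ (1 + ε / 8) := by
    rw [Real.rpow_add hkR, Real.rpow_one]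
    exact hΔk.trans (by gcongr)
  -- k ≥ Δ^(1/(1+ε/8)) ≥ Δ^(1-ε/8)
  have hkΔ : (Δ : ℝ) ^ (1 - ε / 8) ≤ k := by
    have e1 : (Δ : ℝ) ^ (1 - ε / 8) ≤ ((k : ℝ) ^ (1 + ε / 8)) ^ (1 - ε / 8) :=
      Real.rpow_le_rpow hΔR.le hΔk' (by linarith)
    rw [← Real.rpow_mul hkR.le] at e1
    refine e1.trans ?_
    calc (k : ℝ) ^ ((1 + ε / 8) * (1 - ε / 8)) ≤ (k : ℝ) ^ (1 : ℝ) :=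
          Real.rpow_le_rpow_of_exponent_le hk1 (by nlinarith)
      _ = k := Real.rpow_one _
  set L : ℝ := (Δ : ℝ) ^ (ε / 2) with hL
  set β := 2 * Δ * (1 + 8 / ε) / L with hβ
  have hLpos : 0 < L := by positivity
  have hβk : β ≤ ε / 8 * k := by
    rw [hβ, div_le_iff₀ hLpos]
    have e1 : (Δ : ℝ) ^ (1 - ε / 8) * L = Δ * ((Δ : ℝ) ^ (ε / 4) * (Δ : ℝ) ^ (ε / 8)) := by
      rw [hL, ← Real.rpow_add hΔR, ← Real.rpow_add hΔR]
      nth_rewrite 2 [← Real.rpow_one (Δ : ℝ)]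
      rw [← Real.rpow_add hΔR]
      ring_nf
    have e2 : Δ * ((Δ : ℝ) ^ (ε / 4) * (Δ : ℝ) ^ (ε / 8)) ≤ k * L := by
      rw [← e1]; gcongr
    have e3 : (2 * (1 + 8 / ε) * (8 / ε)) * 1 ≤ (Δ : ℝ) ^ (ε / 4) * (Δ : ℝ) ^ (ε / 8) := by
      gcongr; linarith
    have e4 : Δ * ((2 * (1 + 8 / ε) * (8 / ε)) * 1) ≤ k * L := le_trans (by gcongr) e2
    calc 2 * Δ * (1 + 8 / ε) = ε / 8 * (Δ * ((2 * (1 + 8 / ε) * (8 / ε)) * 1)) := by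
          field_simp
      _ ≤ ε / 8 * (k * L) := by gcongr
      _ = _ := by ring
  set κ := (k : ℝ) - β with hκ
  have hκk : (1 - ε / 8) * k ≤ κ := by rw [hκ]; linarith
  have hκ0 : 0 < κ := lt_of_lt_of_le (by apply mul_pos _ hkR; linarith) hκk
  refine ⟨hΔ0, hk0, hκ0, ?_⟩
  have hm : Δ * (1 + ε / 8) / κ ≤ (1 - 3 * ε / 4) * Real.log k := by
    rw [div_le_iff₀ hκ0]
    have hlk : 0 ≤ k * Real.log k := by positivity
    calc Δ * (1 + ε / 8) ≤ ((1 - ε) * k * Real.log k) * (1 + ε / 8) := by gcongr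
      _ = ((1 - ε) * (1 + ε / 8)) * (k * Real.log k) := by ring
      _ ≤ ((1 - 3 * ε / 4) * (1 - ε / 8)) * (k * Real.log k) := by
        gcongr ?_ * _
        nlinarith
      _ = (1 - 3 * ε / 4) * Real.log k * ((1 - ε / 8) * k) := by ring
      _ ≤ (1 - 3 * ε / 4) * Real.log k * κ := by
        have : 0 ≤ (1 - 3 * ε / 4) * Real.log k := mul_nonneg (by linarith) hlog0
        gcongr
  have hexp : (k : ℝ) ^ (-(1 - 3 * ε / 4)) ≤ Real.exp (-(Δ * (1 + ε / 8) / κ)) := by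
    rw [Real.rpow_def_of_pos hkR]
    apply Real.exp_le_exp.2
    linarith
  have hκ2 : (k : ℝ) / 2 ≤ κ := by nlinarith
  have hfin : 4 * L ≤ (k : ℝ) ^ (3 * ε / 4) := by
    have e1 : ((Δ : ℝ) ^ (1 - ε / 8)) ^ (3 * ε / 4) ≤ (k : ℝ) ^ (3 * ε / 4) :=
      Real.rpow_le_rpow (by positivity) hkΔ (by positivity)
    refine le_trans ?_ e1
    calc 4 * L ≤ (Δ : ℝ) ^ (ε / 8) * (Δ : ℝ) ^ (ε / 2) := by gcongr
      _ = (Δ : ℝ) ^ (ε / 8 + ε / 2) := by rw [Real.rpow_add hΔR]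
      _ ≤ (Δ : ℝ) ^ ((1 - ε / 8) * (3 * ε / 4)) :=
        Real.rpow_le_rpow_of_exponent_le hΔ1 (by nlinarith)
      _ = _ := by rw [Real.rpow_mul hΔR.le]
  calc 2 * L ≤ (k : ℝ) ^ (3 * ε / 4) / 2 := by linarith
    _ = (k / 2) * (k : ℝ) ^ (-(1 - 3 * ε / 4)) := by
      have : (k : ℝ) ^ (3 * ε / 4) = k * (k : ℝ) ^ (-(1 - 3 * ε / 4)) := by
        nth_rewrite 2 [← Real.rpow_one (k : ℝ)]
        rw [← Real.rpow_add hkR]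
        ring_nf
      rw [this]; ring
    _ ≤ κ * Real.exp (-(Δ * (1 + ε / 8) / κ)) := by gcongr

theorem stmt_5 (ε : ℝ) (hε0 : 0 < ε) (hε1 : ε < 1) :
    ∃ Δ₀ : ℕ, ∀ Δ : ℕ, Δ₀ ≤ Δ → ∀ k : ℕ, (Δ : ℝ) ≤ (1 - ε) * k * Real.log k →
    ∀ (V : Type) [Fintype V] [DecidableEq V] (G : SimpleGraph V) [DecidableRel G.Adj],
      G.CliqueFree 3 → G.maxDegree ≤ Δ → ∀ v : V,
      (Δ : ℝ) ^ (ε / 2) *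
          (Nat.card {σ : {u : V // u ≠ v} → Fin k //
              ∀ a b : {u : V // u ≠ v}, G.Adj a.1 b.1 → σ a ≠ σ b} : ℝ) ≤
        (Nat.card {σ : V → Fin k // ∀ u w : V, G.Adj u w → σ u ≠ σ w} : ℝ) := by
  obtain ⟨Δ₀, h⟩ := TF.numeric ε hε0 hε1
  refine ⟨Δ₀, fun Δ hΔ k hk V _ _ G _ htf hdeg v => ?_⟩
  obtain ⟨hΔ0, hk0, hκ, hM⟩ := h Δ hΔ k hk
  have hΔR : (0 : ℝ) < Δ := by exact_mod_cast hΔ0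
  have hkR : (0 : ℝ) < k := by exact_mod_cast hk0
  have hmain := TF.main_ind G k hk0 Δ htf hdeg (1 + 8 / ε) (1 + ε / 8) ((Δ : ℝ) ^ (ε / 2))
    (2 * Δ * (1 + 8 / ε) / (Δ : ℝ) ^ (ε / 2))
    (by have : 0 < 8 / ε := by positivity
        linarith)
    (by apply le_of_eq; field_simp; ring) (by positivity) (by positivity) rfl hκ hM _
    (Finset.univ.erase v) rfl v
  have h2 := TF.sum_P_insert G k (Finset.univ.erase v) v (Finset.notMem_erase _ _) (fun _ => (1:ℝ))
  rw [Finset.insert_erase (Finset.mem_univ v)] at h2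
  simp only [Finset.sum_const, nsmul_eq_mul, mul_one] at h2
  rw [← h2, TF.card_erase] at hmain
  rw [TF.card_full]
  push_cast at hmain
  refine le_of_mul_le_mul_left (le_trans (le_of_eq ?_) hmain) hkR
  ring
end

section
/- Let ε ∈ (0,1), Δ sufficiently large in terms of ε, and k with (1-ε)k ln k ≥ Δ. Let G be a triangle-free graph of maximum degree at most Δ, set ℓ = Δ^{ε/2}, and let I be an independent set in G. If 𝛔 is a uniformly random proper k-colouring of G, then for every 0 < p < 1 and every subset J ⊆ I, the probability that ℓ_𝛔(v) ≤ p·ℓ for all v ∈ J is at most p^{|J|}. -/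
open Finset

lemma resample {V : Type} [Fintype V] [DecidableEq V] {k : ℕ} (A : (V → Fin k) → Finset V)
    (hA : ∀ σ τ : V → Fin k, A ((A σ).piecewise τ σ) = A σ) (f : (V → Fin k) → ℝ) :
    ∑ σ : V → Fin k, ∑ τ : V → Fin k, f ((A σ).piecewise τ σ)
      = (Fintype.card (V → Fin k) : ℝ) * ∑ σ, f σ := by
  have hinv : Function.Involutive (fun x : (V → Fin k) × (V → Fin k) =>
      ((A x.1).piecewise x.2 x.1, (A x.1).piecewise x.1 x.2)) := by
    rintro ⟨σ, τ⟩
    refine Prod.ext ?_ ?_ <;> dsimp only <;> rw [hA] <;> funext u <;>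
      by_cases h : u ∈ A σ <;> simp [h]
  rw [← Fintype.sum_prod_type' (f := fun σ τ => f ((A σ).piecewise τ σ))]
  have := Equiv.sum_comp hinv.toPerm (fun x : (V → Fin k) × (V → Fin k) => f x.1)
  simp only [Function.Involutive.coe_toPerm] at this
  rw [this, Fintype.sum_prod_type]
  simp [mul_sum]

lemma resample1 {V : Type} [Fintype V] [DecidableEq V] {k : ℕ} (v : V) (f : (V → Fin k) → ℝ) :
    ∑ σ : V → Fin k, ∑ c : Fin k, f (Function.update σ v c) = (k : ℝ) * ∑ σ, f σ := by
  have hinv : Function.Involutive (fun x : (V → Fin k) × (Fin k) =>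
      (Function.update x.1 v x.2, x.1 v)) := by
    rintro ⟨σ, τ⟩
    simp
  rw [← Fintype.sum_prod_type' (f := fun σ c => f (Function.update σ v c))]
  have := Equiv.sum_comp hinv.toPerm (fun x : (V → Fin k) × (Fin k) => f x.1)
  simp only [Function.Involutive.coe_toPerm] at this
  rw [this, Fintype.sum_prod_type]
  simp [mul_sum]

lemma exp_bound (t n : ℝ) (ht : 0 < t) (hn : t + 1 ≤ n) :
    n * Real.exp (-((1 + 1 / t) / n)) ≤ n - 1 := by
  have hn1 : 0 < n - 1 := by linarith
  have hn0 : 0 < n := by linarith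
  have h1 : 1 / (n - 1) ≤ (1 + 1 / t) / n := by
    rw [div_le_div_iff₀ hn1 hn0]
    have : 1 ≤ (n - 1) / t := by rw [le_div_iff₀ ht]; linarith
    have e : (1 + 1 / t) * (n - 1) = (n - 1) + (n - 1) / t := by ring
    rw [e]; linarith
  have h2 : n / (n - 1) ≤ Real.exp ((1 + 1 / t) / n) := by
    have h3 := Real.add_one_le_exp ((1 + 1 / t) / n)
    have : n / (n - 1) = 1 / (n - 1) + 1 := by field_simp; ring
    linarith
  rw [Real.exp_neg, ← div_eq_mul_inv, div_le_iff₀ (Real.exp_pos _)]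
  rw [div_le_iff₀ hn1] at h2
  linarith

lemma inner_bound {V : Type} [Fintype V] [DecidableEq V] {k : ℕ} (A : Finset V)
    (L : V → Finset (Fin k)) (C : Finset (Fin k)) (t : ℕ) (a c₀ : ℝ) (ht : 0 < t)
    (hL : ∀ u ∈ A, t < (L u).card) (hC : c₀ ≤ C.card) (ha0 : 0 ≤ a)
    (ha : (1 + 1 / (t : ℝ)) * A.card ≤ a * c₀) :
    c₀ * Real.exp (-a) * ((univ.filter fun τ : V → Fin k => ∀ u ∈ A, τ u ∈ L u).card : ℝ)
      ≤ ∑ τ ∈ univ.filter (fun τ : V → Fin k => ∀ u ∈ A, τ u ∈ L u),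
        ((C.filter fun c => ∀ u ∈ A, τ u ≠ c).card : ℝ) := by
  have ht' : (0 : ℝ) < t := by exact_mod_cast ht
  set N := univ.filter (fun τ : V → Fin k => ∀ u ∈ A, τ u ∈ L u) with hN
  have hNpi : N = Fintype.piFinset (fun u => if u ∈ A then L u else univ) := by
    ext τ
    simp only [hN, mem_filter, mem_univ, true_and, Fintype.mem_piFinset]
    refine forall_congr' fun u => ?_
    by_cases h : u ∈ A <;> simp [h]
  have hcpi : ∀ c, N.filter (fun τ => ∀ u ∈ A, τ u ≠ c)
      = Fintype.piFinset (fun u => if u ∈ A then (L u).erase c else univ) := by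
    intro c
    ext τ
    simp only [hN, mem_filter, mem_univ, true_and, Fintype.mem_piFinset, ← forall_and]
    refine forall_congr' fun u => ?_
    by_cases h : u ∈ A <;> simp [h, and_comm]
  have hswap : ∑ τ ∈ N, ((C.filter fun c => ∀ u ∈ A, τ u ≠ c).card : ℝ)
      = ∑ c ∈ C, ((N.filter (fun τ => ∀ u ∈ A, τ u ≠ c)).card : ℝ) := by
    simp only [card_filter, Nat.cast_sum]
    rw [sum_comm]
  let y : V → Fin k → ℝ := fun u c =>
    if u ∈ A ∧ c ∈ L u then (1 + 1 / (t : ℝ)) / (L u).card else 0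
  have hc : ∀ c, (N.card : ℝ) * Real.exp (-∑ u, y u c)
      ≤ ((N.filter (fun τ => ∀ u ∈ A, τ u ≠ c)).card : ℝ) := by
    intro c
    rw [hcpi, hNpi, Fintype.card_piFinset, Fintype.card_piFinset, ← sum_neg_distrib,
      Real.exp_sum, Nat.cast_prod, Nat.cast_prod, ← prod_mul_distrib]
    apply prod_le_prod
    · intros; positivity
    · intro u _
      by_cases hu : u ∈ A
      · by_cases hcu : c ∈ L u
        · simp only [hu, hcu, y, if_true, and_self, card_erase_of_mem hcu]
          have h1 := hL u hu
          rw [Nat.cast_sub (by omega)]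
          have := exp_bound t (L u).card ht' (by exact_mod_cast h1)
          simpa using this
        · simp [hu, hcu, y]
      · simp [hu, y]
  have hy : ∑ c ∈ C, ∑ u, y u c ≤ a * c₀ := by
    refine le_trans ?_ ha
    rw [sum_comm]
    calc ∑ u, ∑ c ∈ C, y u c ≤ ∑ u, ∑ c, y u c := by
          refine sum_le_sum fun u _ => sum_le_sum_of_subset_of_nonneg (subset_univ _) ?_
          intro c _ _
          simp only [y]; split_ifs <;> positivity
      _ ≤ ∑ u, (if u ∈ A then (1 + 1 / (t : ℝ)) else 0) := by
          refine sum_le_sum fun u _ => ?_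
          by_cases hu : u ∈ A
          · simp only [y, hu, true_and, if_true]
            have h1 : (0 : ℝ) < (L u).card := by
              have := hL u hu
              exact_mod_cast (by omega : 0 < (L u).card)
            rw [← sum_filter, sum_const, nsmul_eq_mul]
            simp only [filter_mem_eq_inter, univ_inter]
            apply le_of_eq; field_simp
          · simp [y, hu]
      _ = _ := by rw [← sum_filter]; simp; ring
  rw [hswap]
  have hfin : c₀ * Real.exp (-a) ≤ ∑ c ∈ C, Real.exp (-∑ u, y u c) := by
    calc c₀ * Real.exp (-a)
        ≤ Real.exp (-a) * (C.card * (1 + a) - ∑ c ∈ C, ∑ u, y u c) := by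
          rw [mul_comm]
          apply mul_le_mul_of_nonneg_left _ (Real.exp_pos _).le
          nlinarith
      _ = ∑ c ∈ C, Real.exp (-a) * ((1 + a) - ∑ u, y u c) := by
          rw [← mul_sum, sum_sub_distrib]; simp; ring_nf
      _ ≤ _ := by
          refine sum_le_sum fun c _ => ?_
          have := Real.add_one_le_exp (a - ∑ u, y u c)
          calc _ ≤ Real.exp (-a) * Real.exp (a - ∑ u, y u c) := by
                apply mul_le_mul_of_nonneg_left _ (Real.exp_pos _).le
                linarith
            _ = _ := by rw [← Real.exp_add]; congr 1; ring
  calc _ ≤ (∑ c ∈ C, Real.exp (-∑ u, y u c)) * N.card :=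
        mul_le_mul_of_nonneg_right hfin (by positivity)
    _ = ∑ c ∈ C, (N.card : ℝ) * Real.exp (-∑ u, y u c) := by
        rw [sum_mul]; simp only [mul_comm]
    _ ≤ _ := sum_le_sum fun c _ => hc c

variable {V : Type} [Fintype V] [DecidableEq V] (G : SimpleGraph V) [DecidableRel G.Adj]

def PC (k : ℕ) (S : Finset V) : Finset (V → Fin k) :=
  univ.filter fun σ => ∀ u ∈ S, ∀ w ∈ S, G.Adj u w → σ u ≠ σ w

def LL {k : ℕ} (S : Finset V) (σ : V → Fin k) (v : V) : Finset (Fin k) :=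
  univ.filter fun c => ∀ u ∈ S, G.Adj u v → σ u ≠ c

lemma mem_PC {k : ℕ} {S : Finset V} {σ : V → Fin k} :
    σ ∈ PC G k S ↔ ∀ u ∈ S, ∀ w ∈ S, G.Adj u w → σ u ≠ σ w := by simp [PC]

lemma mem_LL {k : ℕ} {S : Finset V} {σ : V → Fin k} {v : V} {c : Fin k} :
    c ∈ LL G S σ v ↔ ∀ u ∈ S, G.Adj u v → σ u ≠ c := by simp [LL]

lemma update_mem_PC {k : ℕ} {S : Finset V} {v : V} (hv : v ∉ S) (σ : V → Fin k) (c : Fin k) :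
    Function.update σ v c ∈ PC G k (insert v S) ↔ σ ∈ PC G k S ∧ c ∈ LL G S σ v := by
  rw [mem_PC, mem_PC, mem_LL]
  have hne : ∀ u ∈ S, u ≠ v := fun u hu h => hv (h ▸ hu)
  constructor
  · intro h
    refine ⟨fun u hu w hw huw => ?_, fun u hu huv => ?_⟩
    · have := h u (mem_insert_of_mem hu) w (mem_insert_of_mem hw) huw
      simpa [hne u hu, hne w hw] using this
    · have := h u (mem_insert_of_mem hu) v (mem_insert_self _ _) huv
      simpa [hne u hu] using this
  · rintro ⟨h1, h2⟩ u hu w hw huw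
    rw [mem_insert] at hu hw
    rcases hu with rfl | hu <;> rcases hw with rfl | hw
    · exact absurd huw (G.loopless.irrefl _)
    · simpa [hne w hw] using (h2 w hw huw.symm).symm
    · simpa [hne u hu] using h2 u hu huw
    · simpa [hne u hu, hne w hw] using h1 u hu w hw huw

lemma step {k : ℕ} {S : Finset V} {v : V} (hv : v ∉ S) (F : (V → Fin k) → ℝ)
    (hF : ∀ σ c, F (Function.update σ v c) = F σ) :
    (k : ℝ) * ∑ σ ∈ PC G k (insert v S), F σ
      = ∑ σ ∈ PC G k S, ((LL G S σ v).card : ℝ) * F σ := by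
  have e : ∀ X : Finset (V → Fin k), ∑ σ ∈ X, F σ = ∑ σ, if σ ∈ X then F σ else 0 := by
    intro X; simp
  rw [e, ← resample1 v]
  rw [← sum_filter_add_sum_filter_not univ (fun σ => σ ∈ PC G k S)]
  rw [sum_eq_zero (s := filter (fun σ => σ ∉ PC G k S) univ)]
  · simp only [filter_mem_eq_inter, univ_inter, add_zero]
    refine sum_congr rfl fun σ hσ => ?_
    simp only [update_mem_PC G hv, hF, hσ, true_and]
    simp
  · intro σ hσ
    simp only [mem_filter, mem_univ, true_and] at hσ
    simp [update_mem_PC G hv, hσ]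

lemma LL_congr {k : ℕ} {S S' : Finset V} {σ σ' : V → Fin k} {v : V}
    (h : ∀ u, G.Adj u v → (u ∈ S ↔ u ∈ S') ∧ (u ∈ S → σ u = σ' u)) :
    LL G S σ v = LL G S' σ' v := by
  ext c
  rw [mem_LL, mem_LL]
  constructor
  · intro H u hu huv
    have := h u huv
    rw [← this.2 (this.1.2 hu)]
    exact H u (this.1.2 hu) huv
  · intro H u hu huv
    have := h u huv
    rw [this.2 hu]
    exact H u (this.1.1 hu) huv

/-- Joint short-list bound at independent `J ⊆ S`, one vertex step. -/
lemma short_step {k : ℕ} {S J : Finset V} {v : V} (hv : v ∉ S)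
    (hJ : ∀ w ∈ J, ¬ G.Adj v w) (x : ℝ) (y : ℝ) (hx : 0 ≤ x) :
    (k : ℝ) * (((PC G k (insert v S)).filter (fun σ =>
        ((LL G (insert v S) σ v).card : ℝ) ≤ x ∧
        ∀ w ∈ J, ((LL G (insert v S) σ w).card : ℝ) ≤ y)).card : ℝ)
      ≤ x * (((PC G k S).filter (fun σ =>
        ∀ w ∈ J, ((LL G S σ w).card : ℝ) ≤ y)).card : ℝ) := by
  have hvL : ∀ (σ : V → Fin k), LL G (insert v S) σ v = LL G S σ v := by
    intro σ
    apply LL_congr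
    intro u huv
    have : u ≠ v := fun h => G.loopless.irrefl v (h ▸ huv)
    simp [this]
  have hwL : ∀ (σ : V → Fin k), ∀ w ∈ J, LL G (insert v S) σ w = LL G S σ w := by
    intro σ w hw
    apply LL_congr
    intro u huw
    have : u ≠ v := fun h => hJ w hw (h ▸ huw)
    simp [this]
  have hup : ∀ (σ : V → Fin k) c w, LL G S (Function.update σ v c) w = LL G S σ w := by
    intro σ c w
    apply LL_congr
    intro u _
    refine ⟨Iff.rfl, fun hu => ?_⟩
    have : u ≠ v := fun h => hv (h ▸ hu)
    simp [this]
  have hQ : ∀ σ : V → Fin k, (((LL G (insert v S) σ v).card : ℝ) ≤ x ∧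
        ∀ w ∈ J, ((LL G (insert v S) σ w).card : ℝ) ≤ y) ↔
        (((LL G S σ v).card : ℝ) ≤ x ∧ ∀ w ∈ J, ((LL G S σ w).card : ℝ) ≤ y) := by
    intro σ
    rw [hvL]
    refine and_congr Iff.rfl (forall₂_congr fun w hw => ?_)
    rw [hwL σ w hw]
  simp only [hQ]
  have := step G hv (fun σ : V → Fin k => if (((LL G S σ v).card : ℝ) ≤ x ∧
    ∀ w ∈ J, ((LL G S σ w).card : ℝ) ≤ y) then (1 : ℝ) else 0)
    (by intro σ c; simp only [hup])
  simp only [card_filter, Nat.cast_sum, Nat.cast_ite, Nat.cast_one, Nat.cast_zero]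
  rw [this, mul_sum]
  refine sum_le_sum fun σ _ => ?_
  by_cases h2 : ∀ w ∈ J, ((LL G S σ w).card : ℝ) ≤ y
  · by_cases h1 : ((LL G S σ v).card : ℝ) ≤ x
    · rw [if_pos ⟨h1, h2⟩, if_pos h2]; linarith
    · rw [if_neg (fun h => h1 h.1), if_pos h2]
      simpa using hx
  · rw [if_neg (fun h => h2 h.2), if_neg h2]; simp

lemma key_good {k : ℕ} (hG : G.CliqueFree 3) {S : Finset V} (v : V) (t : ℕ) (ht : 0 < t)
    (δ a : ℝ) (ha0 : 0 ≤ a) (T : Finset V) (hT : T = S.filter (fun u => G.Adj u v))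
    (hδ : δ ≤ 1)
    (ha : (1 + 1 / (t : ℝ)) * T.card ≤ a * ((1 - δ) * k))
    (A : (V → Fin k) → Finset V) (hA : A = fun σ => T.filter (fun u => t < (LL G (S \ T) σ u).card))
    (Q : Finset (V → Fin k))
    (hQ : Q = (PC G k S).filter (fun σ => ((T \ A σ).card : ℝ) ≤ δ * k)) :
    ((1 - δ) * k * Real.exp (-a)) * (Q.card : ℝ) ≤ ∑ σ ∈ Q, ((LL G S σ v).card : ℝ) := by
  set m := (1 - δ) * k * Real.exp (-a) with hm
  have hTind : ∀ u ∈ T, ∀ w ∈ T, ¬ G.Adj u w := by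
    intro u hu w hw huw
    rw [hT, mem_filter] at hu hw
    refine hG {u, w, v} ?_
    rw [SimpleGraph.is3Clique_triple_iff]
    exact ⟨huw, hu.2, hw.2⟩
  have hAT : ∀ σ, A σ ⊆ T := by intro σ; rw [hA]; exact filter_subset _ _
  have hTS : T ⊆ S := by rw [hT]; exact filter_subset _ _
  have hLpw : ∀ (σ τ : V → Fin k) u,
      LL G (S \ T) ((A σ).piecewise τ σ) u = LL G (S \ T) σ u := by
    intro σ τ u
    apply LL_congr
    intro w _
    refine ⟨Iff.rfl, fun hw => ?_⟩
    have : w ∉ A σ := fun h => (mem_sdiff.1 hw).2 (hAT σ h)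
    simp [this]
  have hAinv : ∀ σ τ : V → Fin k, A ((A σ).piecewise τ σ) = A σ := by
    intro σ τ
    have : ∀ ρ, A ρ = T.filter (fun u => t < (LL G (S \ T) ρ u).card) := by
      intro ρ; rw [hA]
    rw [this ((A σ).piecewise τ σ)]
    simp only [hLpw]
    rw [this σ]
  have hPC : ∀ σ τ : V → Fin k, (A σ).piecewise τ σ ∈ PC G k S ↔
      (σ ∈ PC G k (S \ A σ) ∧ ∀ u ∈ A σ, τ u ∈ LL G (S \ T) σ u) := by
    intro σ τ
    have hAS : ∀ u ∈ A σ, u ∈ S := fun u hu => hTS (hAT σ hu)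
    simp only [mem_PC, mem_LL, mem_sdiff]
    constructor
    · intro h
      refine ⟨fun u hu w hw huw => ?_, fun u hu w hw hwu => ?_⟩
      · simpa [hu.2, hw.2] using h u hu.1 w hw.1 huw
      · have : w ∉ A σ := fun h => hw.2 (hAT σ h)
        simpa [hu, this] using h w hw.1 u (hAS u hu) hwu
    · rintro ⟨h1, h2⟩ u hu w hw huw
      by_cases hu' : u ∈ A σ <;> by_cases hw' : w ∈ A σ
      · exact absurd huw (hTind u (hAT σ hu') w (hAT σ hw'))
      · have : w ∉ T := fun h => hTind u (hAT σ hu') w h huw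
        simpa [hu', hw'] using (h2 u hu' w ⟨hw, this⟩ huw.symm).symm
      · have : u ∉ T := fun h => hTind u h w (hAT σ hw') huw
        simpa [hu', hw'] using h2 w hw' u ⟨hu, this⟩ huw
      · simpa [hu', hw'] using h1 u ⟨hu, hu'⟩ w ⟨hw, hw'⟩ huw
  have hkey : 0 ≤ ∑ σ : V → Fin k, ∑ τ : V → Fin k,
      (fun ρ : V → Fin k => if ρ ∈ Q then ((LL G S ρ v).card : ℝ) - m else 0)
        ((A σ).piecewise τ σ) := by
    refine sum_nonneg fun σ _ => ?_
    dsimp only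
    have hQmem : ∀ τ : V → Fin k, (A σ).piecewise τ σ ∈ Q ↔
        ((σ ∈ PC G k (S \ A σ) ∧ ((T \ A σ).card : ℝ) ≤ δ * k) ∧
          ∀ u ∈ A σ, τ u ∈ LL G (S \ T) σ u) := by
      intro τ
      rw [hQ, mem_filter, hPC, hAinv]; tauto
    simp only [hQmem]
    by_cases hσ : σ ∈ PC G k (S \ A σ) ∧ ((T \ A σ).card : ℝ) ≤ δ * k
    · simp only [hσ, true_and]
      rw [← sum_filter, sum_sub_distrib, sum_const, nsmul_eq_mul]
      set C : Finset (Fin k) := univ \ (T \ A σ).image σ with hC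
      have hCc : (1 - δ) * k ≤ (C.card : ℝ) := by
        have h1 : (((T \ A σ).image σ).card : ℝ) ≤ δ * k :=
          le_trans (by exact_mod_cast card_image_le) hσ.2
        have h2 : C.card + ((T \ A σ).image σ).card = k := by
          rw [hC, card_sdiff_add_card_eq_card (subset_univ _)]; simp
        have h3 : (C.card : ℝ) + (((T \ A σ).image σ).card : ℝ) = k := by exact_mod_cast h2
        linarith
      have hL : ∀ τ : V → Fin k, LL G S ((A σ).piecewise τ σ) v
          = C.filter fun c => ∀ u ∈ A σ, τ u ≠ c := by
        intro τ
        ext c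
        simp only [mem_LL, hC, mem_filter, mem_sdiff, mem_univ, true_and, mem_image, not_exists,
          not_and]
        have hmT : ∀ u, u ∈ T ↔ u ∈ S ∧ G.Adj u v := by intro u; rw [hT, mem_filter]
        constructor
        · intro h
          refine ⟨fun u hu huc => ?_, fun u hu => ?_⟩
          · have h3 := (hmT u).1 hu.1
            have := h u h3.1 h3.2
            simp [hu.2] at this
            exact this huc
          · have h3 := (hmT u).1 (hAT σ hu)
            have := h u h3.1 h3.2
            simpa [hu] using this
        · rintro ⟨h1, h2⟩ u hu huv
          by_cases huA : u ∈ A σ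
          · simpa [huA] using h2 u huA
          · simpa [huA] using h1 u ⟨(hmT u).2 ⟨hu, huv⟩, huA⟩
      simp only [hL]
      have hcard : ((A σ).card : ℝ) ≤ T.card := by exact_mod_cast card_le_card (hAT σ)
      have := inner_bound (A σ) (LL G (S \ T) σ) C t a ((1 - δ) * k) ht
        (by intro u hu; rw [hA, mem_filter] at hu; exact hu.2) hCc ha0
        (le_trans (mul_le_mul_of_nonneg_left hcard (by positivity)) ha)
      rw [← hm] at this
      linarith
    · simp [hσ]
  replace hkey := le_of_le_of_eq hkey (resample A hAinv
    (fun ρ : V → Fin k => if ρ ∈ Q then ((LL G S ρ v).card : ℝ) - m else 0))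
  by_cases hne : Nonempty (V → Fin k)
  · have hpos : (0 : ℝ) < (Fintype.card (V → Fin k) : ℝ) := by
      exact_mod_cast Fintype.card_pos
    have h5 := nonneg_of_mul_nonneg_right hkey hpos
    simp only [sum_ite_mem, univ_inter, sum_sub_distrib, sum_const, nsmul_eq_mul] at h5
    linarith
  · have : Q = ∅ := by
      apply eq_empty_of_forall_notMem
      intro x; exact absurd ⟨x⟩ hne
    simp [this]

lemma main_ext {k : ℕ} (hG : G.CliqueFree 3) (t : ℕ) (ht : 0 < t) (D ℓ δ a : ℝ)
    (hD : ∀ v, ((univ.filter (fun u => G.Adj u v)).card : ℝ) ≤ D)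
    (hℓ : 0 < ℓ) (hδ0 : 0 < δ) (hδ : δ ≤ 1) (hk : 0 < k) (ha0 : 0 ≤ a)
    (h1 : D * t ≤ ℓ * (δ * k / 2))
    (ha : (1 + 1 / (t : ℝ)) * D ≤ a * ((1 - δ) * k))
    (h2 : 2 * ℓ ≤ (1 - δ) * k * Real.exp (-a)) :
    ∀ n : ℕ, ∀ S : Finset V, S.card = n → ∀ v ∉ S,
      ℓ * ((PC G k S).card : ℝ) ≤ k * ((PC G k (insert v S)).card : ℝ) := by
  intro n
  induction n with
  | zero =>
    intro S hS v hv
    have hS0 : S = ∅ := card_eq_zero.1 hS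
    subst hS0
    have hk' : (0 : ℝ) < k := by exact_mod_cast hk
    have e : PC G k (insert v ∅) = PC G k ∅ := by
      ext σ; simp [mem_PC]
    rw [e]
    apply mul_le_mul_of_nonneg_right _ (by positivity)
    have : Real.exp (-a) ≤ 1 := Real.exp_le_one_iff.2 (by linarith)
    have h3 : (1 - δ) * k * Real.exp (-a) ≤ (1 - δ) * k * 1 :=
      mul_le_mul_of_nonneg_left this (mul_nonneg (by linarith) hk'.le)
    nlinarith
  | succ n ih =>
    intro S hS v hv
    have hk' : (0 : ℝ) < k := by exact_mod_cast hk
    set T := S.filter (fun u => G.Adj u v) with hT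
    have hTS : T ⊆ S := filter_subset _ _
    have hTD : (T.card : ℝ) ≤ D := le_trans (by
      exact_mod_cast card_le_card (filter_subset_filter _ (subset_univ S))) (hD v)
    have hTind : ∀ u ∈ T, ∀ w ∈ T, ¬ G.Adj u w := by
      intro u hu w hw huw
      rw [hT, mem_filter] at hu hw
      refine hG {u, w, v} ?_
      rw [SimpleGraph.is3Clique_triple_iff]
      exact ⟨huw, hu.2, hw.2⟩
    set A : (V → Fin k) → Finset V :=
      fun σ => T.filter (fun u => t < (LL G (S \ T) σ u).card) with hA
    set Q := (PC G k S).filter (fun σ => ((T \ A σ).card : ℝ) ≤ δ * k) with hQ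
    have hgood := key_good G hG v t ht δ a ha0 T hT hδ
      (le_trans (mul_le_mul_of_nonneg_left hTD (by positivity)) ha) A hA Q hQ
    have hstep := step (k := k) G hv (fun _ => (1 : ℝ)) (fun _ _ => rfl)
    simp only [sum_const, nsmul_eq_mul, mul_one] at hstep
    rw [hstep]
    -- bad vertices
    have hbad1 : ∀ u ∈ T, ((((PC G k S).filter
        (fun σ => u ∉ A σ)).card : ℝ)) * ℓ ≤ t * ((PC G k S).card : ℝ) := by
      intro u hu
      have huS := hTS hu
      have hins : insert u (S.erase u) = S := insert_erase huS
      have i1 := ih (S.erase u) (by rw [card_erase_of_mem huS]; omega) u (notMem_erase _ _)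
      rw [hins] at i1
      have i2 := short_step (k := k) G (J := ∅) (notMem_erase u S) (by simp) (t : ℝ) 0
        (by positivity)
      rw [hins] at i2
      simp only [notMem_empty, false_imp_iff, implies_true, and_true, filter_true] at i2
      have e : (PC G k S).filter (fun σ => u ∉ A σ)
          = (PC G k S).filter (fun σ => ((LL G S σ u).card : ℝ) ≤ t) := by
        apply filter_congr
        intro σ _
        have : LL G (S \ T) σ u = LL G S σ u := by
          apply LL_congr
          intro w hw
          have : w ∉ T := fun h => hTind w h u hu hw
          simp [this]
        simp [hA, hu, this]
      rw [e]
      have i3 : (k : ℝ) * (((PC G k S).filter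
          (fun σ => ((LL G S σ u).card : ℝ) ≤ t)).card * ℓ) ≤ k * (t * (PC G k S).card) := by
        calc _ = (k * (((PC G k S).filter
          (fun σ => ((LL G S σ u).card : ℝ) ≤ t)).card : ℝ)) * ℓ := by ring
          _ ≤ (t * (PC G k (S.erase u)).card) * ℓ := mul_le_mul_of_nonneg_right i2 hℓ.le
          _ = t * (ℓ * (PC G k (S.erase u)).card) := by ring
          _ ≤ t * (k * (PC G k S).card) := mul_le_mul_of_nonneg_left i1 (by positivity)
          _ = _ := by ring
      exact le_of_mul_le_mul_left i3 hk'
    have hsum : ∑ σ ∈ PC G k S, ((T \ A σ).card : ℝ)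
        = ∑ u ∈ T, (((PC G k S).filter (fun σ => u ∉ A σ)).card : ℝ) := by
      have : ∀ σ, T \ A σ = T.filter (fun u => u ∉ A σ) := by
        intro σ; ext u; simp
      simp only [this, card_filter, Nat.cast_sum]
      rw [sum_comm]
    have hsum2 : (∑ σ ∈ PC G k S, ((T \ A σ).card : ℝ)) * ℓ ≤
        (δ * k / 2 * (PC G k S).card) * ℓ := by
      rw [hsum, sum_mul]
      calc _ ≤ ∑ u ∈ T, t * ((PC G k S).card : ℝ) := sum_le_sum hbad1
        _ = (T.card * t) * (PC G k S).card := by rw [sum_const, nsmul_eq_mul]; ring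
        _ ≤ (D * t) * (PC G k S).card := by gcongr
        _ ≤ (ℓ * (δ * k / 2)) * (PC G k S).card := by gcongr
        _ = _ := by ring
    have hsum3 := le_of_mul_le_mul_right hsum2 hℓ
    have hmark : ((PC G k S).filter (fun σ => ¬ ((T \ A σ).card : ℝ) ≤ δ * k)).card * (δ * k)
        ≤ ∑ σ ∈ PC G k S, ((T \ A σ).card : ℝ) := by
      rw [← nsmul_eq_mul]
      refine le_trans (card_nsmul_le_sum _ (fun σ => ((T \ A σ).card : ℝ)) _ ?_)
        (sum_le_sum_of_subset_of_nonneg (filter_subset _ _) (fun _ _ _ => by positivity))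
      intro σ hσ
      exact (not_le.1 (mem_filter.1 hσ).2).le
    have hsplit : (Q.card : ℝ) +
        (((PC G k S).filter (fun σ => ¬ ((T \ A σ).card : ℝ) ≤ δ * k)).card : ℝ)
        = (PC G k S).card := by
      exact_mod_cast card_filter_add_card_filter_not (s := PC G k S) _
    have hhalf : ((PC G k S).card : ℝ) / 2 ≤ Q.card := by
      have hdk : 0 < δ * k := by positivity
      have : (((PC G k S).filter (fun σ => ¬ ((T \ A σ).card : ℝ) ≤ δ * k)).card : ℝ) * (δ * k)
        ≤ ((PC G k S).card / 2 : ℝ) * (δ * k) := by linarith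
      have := le_of_mul_le_mul_right this hdk
      linarith
    calc ℓ * ((PC G k S).card : ℝ) = 2 * ℓ * ((PC G k S).card / 2) := by ring
      _ ≤ 2 * ℓ * Q.card := by gcongr
      _ ≤ ((1 - δ) * k * Real.exp (-a)) * Q.card := by gcongr
      _ ≤ _ := hgood
      _ ≤ _ := sum_le_sum_of_subset_of_nonneg (filter_subset _ _) (fun _ _ _ => by positivity)

lemma joint {k : ℕ} (ℓ p : ℝ) (hk : 0 < k) (hℓ : 0 < ℓ) (hp : 0 < p)
    (hmain : ∀ S : Finset V, ∀ v ∉ S,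
      ℓ * ((PC G k S).card : ℝ) ≤ k * ((PC G k (insert v S)).card : ℝ)) (J : Finset V) :
    (∀ u ∈ J, ∀ w ∈ J, ¬ G.Adj u w) → ∀ S : Finset V, J ⊆ S →
    (((PC G k S).filter (fun σ => ∀ w ∈ J, ((LL G S σ w).card : ℝ) ≤ p * ℓ)).card : ℝ)
      ≤ p ^ J.card * (PC G k S).card := by
  have hk' : (0 : ℝ) < k := by exact_mod_cast hk
  induction J using Finset.induction_on with
  | empty => intro _ S _; simp
  | insert v J hvJ ih =>
    intro hind S hJS
    have hvS : v ∈ S := hJS (mem_insert_self _ _)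
    have hins : insert v (S.erase v) = S := insert_erase hvS
    have i1 := hmain (S.erase v) v (notMem_erase _ _)
    rw [hins] at i1
    have i2 := short_step (k := k) G (J := J) (notMem_erase v S)
      (fun w hw => hind v (mem_insert_self _ _) w (mem_insert_of_mem hw)) (p * ℓ) (p * ℓ)
      (by positivity)
    rw [hins] at i2
    have i3 := ih (fun u hu w hw => hind u (mem_insert_of_mem hu) w (mem_insert_of_mem hw))
      (S.erase v) (fun u hu => mem_erase.2 ⟨fun h => hvJ (h ▸ hu), hJS (mem_insert_of_mem hu)⟩)
    simp only [forall_mem_insert]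
    rw [card_insert_of_notMem hvJ]
    refine le_of_mul_le_mul_left (le_trans i2 ?_) hk'
    calc _ ≤ p * ℓ * (p ^ J.card * (PC G k (S.erase v)).card) := by gcongr
      _ = p ^ (J.card + 1) * (ℓ * (PC G k (S.erase v)).card) := by ring
      _ ≤ p ^ (J.card + 1) * (k * (PC G k S).card) := by gcongr
      _ = _ := by ring

lemma numerics (ε : ℝ) (hε0 : 0 < ε) (hε1 : ε < 1) (t : ℕ) :
    ∃ K : ℕ, ∀ k : ℕ, K ≤ k → 1 < k ∧ Real.log k ≤ (k : ℝ) ^ (ε / 4) ∧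
      16 * t / ε ≤ (k : ℝ) ^ (ε / 4) ∧ 16 / 7 ≤ (k : ℝ) ^ (ε / 8) := by
  have h1 : ∀ᶠ k : ℕ in Filter.atTop, 1 < k := Filter.eventually_gt_atTop 1
  have h2 : ∀ᶠ x : ℝ in Filter.atTop, Real.log x ≤ x ^ (ε / 4) := by
    have := (isLittleO_log_rpow_atTop (by positivity : 0 < ε / 4)).bound one_pos
    filter_upwards [this, Filter.eventually_gt_atTop 0] with x hx hx0
    rw [one_mul, Real.norm_eq_abs, Real.norm_eq_abs, abs_of_nonneg (Real.rpow_nonneg hx0.le _)] at hx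
    exact le_trans (le_abs_self _) hx
  have h3 := (tendsto_rpow_atTop (by positivity : 0 < ε / 4)).eventually_ge_atTop (16 * t / ε)
  have h4 := (tendsto_rpow_atTop (by positivity : 0 < ε / 8)).eventually_ge_atTop (16 / 7)
  have hc := tendsto_natCast_atTop_atTop (R := ℝ)
  exact Filter.eventually_atTop.1
    (h1.and ((hc.eventually h2).and ((hc.eventually h3).and (hc.eventually h4))))

theorem stmt_10 (ε : ℝ) (hε0 : 0 < ε) (hε1 : ε < 1) :
    ∃ Δ₀ : ℕ, ∀ Δ : ℕ, Δ₀ ≤ Δ → ∀ k : ℕ, (Δ : ℝ) ≤ (1 - ε) * k * Real.log k →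
    ∀ (V : Type) [Fintype V] [DecidableEq V] (G : SimpleGraph V) [DecidableRel G.Adj],
      G.CliqueFree 3 → G.maxDegree ≤ Δ →
    ∀ I : Finset V, (∀ u ∈ I, ∀ w ∈ I, ¬ G.Adj u w) →
    ∀ p : ℝ, 0 < p → p < 1 → ∀ J : Finset V, J ⊆ I →
      ((Finset.univ.filter
            (fun σ : V → Fin k => (∀ u w : V, G.Adj u w → σ u ≠ σ w) ∧
              ∀ v ∈ J, ((Finset.univ.filter
                (fun c : Fin k => ∀ u : V, G.Adj u v → σ u ≠ c)).card : ℝ) ≤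
                  p * (Δ : ℝ) ^ (ε / 2))).card : ℝ) /
          ((Finset.univ.filter
            (fun σ : V → Fin k => ∀ u w : V, G.Adj u w → σ u ≠ σ w)).card : ℝ) ≤
        p ^ J.card := by
  obtain ⟨t, ht⟩ := exists_nat_ge (8 / ε)
  have ht0 : (0 : ℝ) < t := lt_of_lt_of_le (by positivity) ht
  have ht0' : 0 < t := by exact_mod_cast ht0
  obtain ⟨K, hK⟩ := numerics ε hε0 hε1 t
  refine ⟨K ^ 2 + 1, ?_⟩
  intro Δ hΔ k hk V _ _ G _ hG hdeg I hI p hp0 hp1 J hJ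
  have hΔ0 : (0 : ℝ) < Δ := by exact_mod_cast (by omega : 0 < Δ)
  have hlogle : Real.log k ≤ k := Real.log_le_self (by positivity)
  have hlog0 : 0 ≤ Real.log k := Real.log_natCast_nonneg k
  have hΔk : (Δ : ℝ) ≤ k * Real.log k := by
    have : 0 ≤ k * Real.log k := by positivity
    nlinarith
  have hKk : K ≤ k := by
    by_contra hlt
    push Not at hlt
    have h1 : (Δ : ℝ) ≤ (k : ℝ) * k := le_trans hΔk (by gcongr)
    have h2 : Δ ≤ k * k := by exact_mod_cast h1
    nlinarith
  obtain ⟨hk1, hl, hk2, hk3⟩ := hK k hKk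
  have hkpos : (0 : ℝ) < k := by exact_mod_cast (by omega : 0 < k)
  have hk1' : (1 : ℝ) ≤ k := by exact_mod_cast hk1.le
  have hlogpos : 0 < Real.log k := Real.log_pos (by exact_mod_cast hk1)
  have hΔpow : (Δ : ℝ) ≤ (k : ℝ) ^ (1 + ε / 4) := by
    rw [Real.rpow_add hkpos, Real.rpow_one]
    exact le_trans hΔk (by gcongr)
  have hpw : ∀ x : ℝ, 0 ≤ x → ∀ y, (1 + ε / 4) * x ≤ y → (Δ : ℝ) ^ x ≤ (k : ℝ) ^ y := by
    intro x hx y hy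
    calc (Δ : ℝ) ^ x ≤ ((k : ℝ) ^ (1 + ε / 4)) ^ x := Real.rpow_le_rpow hΔ0.le hΔpow hx
      _ = (k : ℝ) ^ ((1 + ε / 4) * x) := by rw [Real.rpow_mul hkpos.le]
      _ ≤ _ := Real.rpow_le_rpow_of_exponent_le hk1' hy
  set ℓ : ℝ := (Δ : ℝ) ^ (ε / 2) with hℓ
  have hℓ0 : 0 < ℓ := Real.rpow_pos_of_pos hΔ0 _
  have hmain := main_ext (k := k) G hG t ht0' (Δ : ℝ) ℓ (ε / 8) ((1 - 3 * ε / 4) * Real.log k)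
    (by
      intro v
      have : (univ.filter (fun u => G.Adj u v)).card = G.degree v := by
        rw [← SimpleGraph.card_neighborFinset_eq_degree]
        congr 1
        ext u; simp [G.adj_comm]
      rw [this]
      exact_mod_cast le_trans (G.degree_le_maxDegree v) hdeg)
    hℓ0 (by positivity) (by linarith) (by omega)
    (mul_nonneg (by linarith) hlog0)
    (by
      have e1 : (Δ : ℝ) = ℓ * (Δ : ℝ) ^ (1 - ε / 2) := by
        rw [hℓ, ← Real.rpow_add hΔ0]; simp
      have e2 : (Δ : ℝ) ^ (1 - ε / 2) ≤ (k : ℝ) ^ (1 - ε / 4) :=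
        hpw _ (by linarith) _ (by nlinarith)
      have e3 : (k : ℝ) = (k : ℝ) ^ (1 - ε / 4) * (k : ℝ) ^ (ε / 4) := by
        rw [← Real.rpow_add hkpos]; simp
      have e4 : (Δ : ℝ) ^ (1 - ε / 2) * t ≤ ε / 8 * k / 2 := by
        have : (k : ℝ) ^ (1 - ε / 4) * (16 * t / ε) ≤ k := by
          conv_rhs => rw [e3]
          gcongr
        calc (Δ : ℝ) ^ (1 - ε / 2) * t ≤ (k : ℝ) ^ (1 - ε / 4) * t := by gcongr
          _ = ε / 16 * ((k : ℝ) ^ (1 - ε / 4) * (16 * t / ε)) := by field_simp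
          _ ≤ ε / 16 * k := by gcongr
          _ = _ := by ring
      calc (Δ : ℝ) * t = ℓ * ((Δ : ℝ) ^ (1 - ε / 2) * t) := by
            conv_lhs => rw [e1]
            ring
        _ ≤ _ := by gcongr)
    (by
      have e1 : 1 / (t : ℝ) ≤ ε / 8 := by
        rw [div_le_iff₀ ht0]
        rw [div_le_iff₀ hε0] at ht
        linarith
      calc (1 + 1 / (t : ℝ)) * Δ ≤ (1 + ε / 8) * ((1 - ε) * k * Real.log k) := by gcongr
        _ = ((1 + ε / 8) * (1 - ε)) * (k * Real.log k) := by ring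
        _ ≤ ((1 - 3 * ε / 4) * (1 - ε / 8)) * (k * Real.log k) := by
            apply mul_le_mul_of_nonneg_right _ (by positivity)
            nlinarith
        _ = _ := by ring)
    (by
      have e1 : Real.exp (-((1 - 3 * ε / 4) * Real.log k)) = (k : ℝ) ^ (-(1 - 3 * ε / 4)) := by
        rw [Real.rpow_def_of_pos hkpos]; congr 1; ring
      have e2 : (k : ℝ) * (k : ℝ) ^ (-(1 - 3 * ε / 4)) = (k : ℝ) ^ (5 * ε / 8) * (k : ℝ) ^ (ε / 8) := by
        rw [← Real.rpow_one_add' hkpos.le (by linarith), ← Real.rpow_add hkpos]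
        congr 1; ring
      have e3 : ℓ ≤ (k : ℝ) ^ (5 * ε / 8) := hpw _ (by positivity) _ (by nlinarith)
      rw [e1, mul_assoc, e2]
      have e4 : (k : ℝ) ^ (5 * ε / 8) * (16 / 7) ≤ (k : ℝ) ^ (5 * ε / 8) * (k : ℝ) ^ (ε / 8) := by
        gcongr
      have e5 : 0 < (k : ℝ) ^ (5 * ε / 8) := by positivity
      calc 2 * ℓ ≤ (7 / 8) * ((k : ℝ) ^ (5 * ε / 8) * (16 / 7)) := by linarith
        _ ≤ (7 / 8) * ((k : ℝ) ^ (5 * ε / 8) * (k : ℝ) ^ (ε / 8)) := by gcongr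
        _ ≤ _ := by
          apply mul_le_mul_of_nonneg_right _ (by positivity)
          linarith)
  have hj := joint G ℓ p (by omega : 0 < k) hℓ0 hp0 (fun S v hv => hmain _ S rfl v hv) J
    (fun u hu w hw => hI u (hJ hu) w (hJ hw)) univ (subset_univ _)
  apply div_le_of_le_mul₀ (by positivity) (by positivity)
  simpa [PC, LL, filter_filter] using hj
end

section
/- Let G be a triangle-free graph, v a vertex, and σ₀ a proper k-colouring of G \ N[v] admitting at least one extension to a proper k-colouring of G. Let 𝛔 be a uniformly random such extension, and ℓ = E[ℓ_𝛔(v)]. Then for all δ ∈ (0,1), P(ℓ_𝛔(v) ≤ (1-δ)·ℓ) ≤ exp(-δ²ℓ/2). -/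
/-- Analytic core: Cantelli near the mean, Chernoff far away. -/
lemma core_tail {Ω : Type} [Fintype Ω] (W X : Ω → ℝ) (hW : ∀ ω, 0 ≤ W ω)
    (hX : ∀ ω, 0 ≤ X ω) (m l b : ℝ) (hm0 : 0 < m)
    (h1 : ∑ ω, W ω * X ω = m) (h2 : ∑ ω, W ω * X ω ^ 2 = m * l)
    (h3 : ∑ ω, W ω * X ω ^ 3 ≤ m * (l ^ 2 + l))
    (hexp : ∀ s : ℝ, 0 ≤ s → ∑ ω, W ω * Real.exp (-s * X ω) ≤ Real.exp (-m * s + m * s ^ 2 / 2))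
    (hml : m ≤ l) (hlm : l ≤ m + 1) (hl1 : 1 ≤ l) (hb0 : 0 < b) (hbl : b < l) :
    ∑ ω, W ω * (X ω * (if X ω ≤ l - b then 1 else 0)) ≤ m * Real.exp (-(b ^ 2 / (2 * l))) := by
  have hl0 : 0 < l := by linarith
  by_cases hc : b ^ 2 ≤ 2 * l
  · -- Cantelli
    have hu : 0 < b + l / b := by positivity
    have e1 : ∑ ω, W ω * (X ω * (if X ω ≤ l - b then 1 else 0)) ≤
        ∑ ω, W ω * (X ω * ((l - X ω + l / b) ^ 2 / (b + l / b) ^ 2)) := by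
      apply Finset.sum_le_sum
      intro ω _
      apply mul_le_mul_of_nonneg_left _ (hW ω)
      apply mul_le_mul_of_nonneg_left _ (hX ω)
      split_ifs with h
      · rw [one_le_div (by positivity)]
        apply pow_le_pow_left₀ hu.le
        linarith
      · positivity
    have e2 : ∑ ω, W ω * (X ω * ((l - X ω + l / b) ^ 2 / (b + l / b) ^ 2)) =
        (∑ ω, W ω * X ω ^ 3 - 2 * (l + l / b) * ∑ ω, W ω * X ω ^ 2
          + (l + l / b) ^ 2 * ∑ ω, W ω * X ω) / (b + l / b) ^ 2 := by
      rw [Finset.mul_sum, Finset.mul_sum, ← Finset.sum_sub_distrib, ← Finset.sum_add_distrib,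
        Finset.sum_div]
      apply Finset.sum_congr rfl
      intro ω _
      ring
    have e3 : (∑ ω, W ω * X ω ^ 3 - 2 * (l + l / b) * ∑ ω, W ω * X ω ^ 2
          + (l + l / b) ^ 2 * ∑ ω, W ω * X ω) / (b + l / b) ^ 2 ≤
        m * (l + (l / b) ^ 2) / (b + l / b) ^ 2 := by
      rw [h1, h2]
      gcongr
      nlinarith
    have e4 : m * (l + (l / b) ^ 2) / (b + l / b) ^ 2 = m * (l / (l + b ^ 2)) := by
      field_simp
      ring
    have e5 : l / (l + b ^ 2) ≤ Real.exp (-(b ^ 2 / (2 * l))) := by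
      set z := b ^ 2 / (2 * l) with hz
      have hz0 : 0 ≤ z := by positivity
      have hz1 : z ≤ 1 := by rw [hz, div_le_one (by positivity)]; exact hc
      have hh := Real.abs_exp_sub_one_sub_id_le (x := z) (by rw [abs_of_nonneg hz0]; exact hz1)
      have hh2 := (abs_le.mp hh).2
      have : Real.exp z ≤ 1 + 2 * z := by nlinarith
      have e : l / (l + b ^ 2) = (1 + 2 * z)⁻¹ := by
        rw [hz]; field_simp
      rw [e, Real.exp_neg]
      exact inv_anti₀ (Real.exp_pos _) this
    calc _ ≤ _ := e1
      _ = _ := e2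
      _ ≤ _ := e3
      _ = _ := e4
      _ ≤ _ := by gcongr
  · push Not at hc
    obtain ⟨v, hv⟩ : ∃ v, v = l - m := ⟨_, rfl⟩
    obtain ⟨a, ha⟩ : ∃ a, a = b - v := ⟨_, rfl⟩
    have hb1 : 1 < b := by nlinarith
    have ha0 : 0 < a := by linarith
    have ht : l - b = m - a := by linarith
    have ht0 : 0 < m - a := by linarith
    set s := a / m with hs
    have hs0 : 0 < s := by positivity
    have e1 : ∑ ω, W ω * (X ω * (if X ω ≤ l - b then 1 else 0)) ≤
        ∑ ω, (m - a) * Real.exp (s * (m - a)) * (W ω * Real.exp (-s * X ω)) := by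
      apply Finset.sum_le_sum
      intro ω _
      have : X ω * (if X ω ≤ l - b then 1 else 0) ≤
          (m - a) * Real.exp (s * (m - a)) * Real.exp (-s * X ω) := by
        split_ifs with h
        · rw [ht] at h
          rw [mul_assoc, ← Real.exp_add]
          apply mul_le_mul h _ zero_le_one ht0.le
          apply Real.one_le_exp
          nlinarith
        · simp only [mul_zero]; positivity
      nlinarith [mul_le_mul_of_nonneg_left this (hW ω)]
    rw [← Finset.mul_sum] at e1
    refine e1.trans ?_
    have e2 : m - a ≤ m * Real.exp (-s) := by
      have := Real.add_one_le_exp (-s)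
      have e : m - a = m * (-s + 1) := by rw [hs]; field_simp; ring
      rw [e]; gcongr
    calc (m - a) * Real.exp (s * (m - a)) * ∑ ω, W ω * Real.exp (-s * X ω)
        ≤ (m * Real.exp (-s)) * Real.exp (s * (m - a)) * Real.exp (-m * s + m * s ^ 2 / 2) := by
          have hnn : 0 ≤ ∑ ω, W ω * Real.exp (-s * X ω) :=
            Finset.sum_nonneg fun ω _ => mul_nonneg (hW ω) (Real.exp_pos _).le
          gcongr
          exact hexp s hs0.le
      _ = m * Real.exp (-s + s * (m - a) + (-m * s + m * s ^ 2 / 2)) := by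
          rw [Real.exp_add (-s + s * (m - a)), Real.exp_add (-s)]; ring
      _ ≤ m * Real.exp (-(b ^ 2 / (2 * l))) := by
          gcongr
          have e : -s + s * (m - a) + (-m * s + m * s ^ 2 / 2) = -((2 * a + a ^ 2) / (2 * m)) := by
            rw [hs]; field_simp; ring
          rw [e, neg_le_neg_iff, div_le_div_iff₀ (by positivity) (by positivity)]
          have hl : l = m + v := by linarith
          have hb : b = a + v := by linarith
          have hv0 : 0 ≤ v := by linarith
          have hv1 : v ≤ 1 := by linarith
          have key : m ≤ a ^ 2 + 2 * a := by nlinarith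
          have k2 : 0 ≤ v * (a ^ 2 + 2 * a - m * v) := by
            apply mul_nonneg hv0
            nlinarith
          have k3 : 0 ≤ a * m * (1 - v) := by
            apply mul_nonneg (by positivity); linarith
          rw [hl, hb]
          nlinarith

lemma prod_add_ge {C : Type} [DecidableEq C] (s : Finset C) (y z : C → ℝ)
    (hy : ∀ c, 0 ≤ y c) (hz : ∀ c, 0 ≤ z c) :
    ∏ x ∈ s, y x + ∑ c ∈ s, z c * ∏ x ∈ s.erase c, y x ≤ ∏ x ∈ s, (y x + z x) := by
  induction s using Finset.induction_on with
  | empty => simp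
  | insert a s ha ih =>
    rw [Finset.prod_insert ha, Finset.prod_insert ha, Finset.sum_insert ha,
      Finset.erase_insert ha]
    have : ∀ c ∈ s, z c * ∏ x ∈ (insert a s).erase c, y x
        = y a * (z c * ∏ x ∈ s.erase c, y x) := by
      intro c hc
      have hac : a ≠ c := fun h => ha (h ▸ hc)
      rw [Finset.erase_insert_of_ne hac, Finset.prod_insert (by simp [ha])]
      ring
    rw [Finset.sum_congr rfl this, ← Finset.mul_sum]
    have h0 : 0 ≤ ∑ c ∈ s, z c * ∏ x ∈ s.erase c, y x :=
      Finset.sum_nonneg fun c _ => mul_nonneg (hz c) (Finset.prod_nonneg fun x _ => hy x)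
    have h1 := mul_le_mul_of_nonneg_left ih (add_nonneg (hy a) (hz a))
    have h2 := mul_nonneg (hz a) h0
    nlinarith

/-- indicator that colour `c` is missing from the image of `ω` -/
noncomputable def missY {U C : Type} (ω : U → C) (c : C) : ℝ :=
  open Classical in if ∀ u, ω u ≠ c then 1 else 0

/-- Negative dependence of the missing colours, generating function form. -/
lemma gen_le {C : Type} [Fintype C] [DecidableEq C] (U : Type) [Fintype U] [DecidableEq U] :
    ∀ (q : U → C → ℝ) (_ : ∀ u c, 0 ≤ q u c) (_ : ∀ u, ∑ c, q u c = 1)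
      (a : C → ℝ) (_ : ∀ c, 0 ≤ a c) (_ : ∀ c, a c ≤ 1),
      ∑ ω : U → C, (∏ u, q u (ω u)) * ∏ c, (1 - a c * missY ω c) ≤
        ∏ c, (1 - a c * ∏ u, (1 - q u c)) := by
  refine Fintype.induction_empty_option
    (P := fun U _ => ∀ [DecidableEq U] (q : U → C → ℝ) (_ : ∀ u c, 0 ≤ q u c)
      (_ : ∀ u, ∑ c, q u c = 1)
      (a : C → ℝ) (_ : ∀ c, 0 ≤ a c) (_ : ∀ c, a c ≤ 1),
      ∑ ω : U → C, (∏ u, q u (ω u)) * ∏ c, (1 - a c * missY ω c) ≤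
        ∏ c, (1 - a c * ∏ u, (1 - q u c))) ?_ ?_ ?_ U
  · intro α β _ e ih _ q hq hq1 a ha ha1
    let := Fintype.ofEquiv β e.symm
    let : DecidableEq α := e.decidableEq
    have := ih (fun u => q (e u)) (fun u => hq _) (fun u => hq1 _) a ha ha1
    have hp : ∀ c, ∏ u, (1 - q (e u) c) = ∏ u, (1 - q u c) := fun c =>
      Fintype.prod_equiv e _ _ fun u => rfl
    simp only [hp] at this
    refine le_trans (le_of_eq ?_) this
    refine Fintype.sum_equiv (Equiv.arrowCongr e.symm (Equiv.refl C)) _ _ ?_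
    intro ω
    congr 1
    · refine (Fintype.prod_equiv e _ _ fun u => ?_).symm
      simp
    · apply Finset.prod_congr rfl
      intro c _
      congr 2
      unfold missY
      congr 1
      simp [e.forall_congr_left]
  · intro _ q _ _ a _ _
    simp [missY]
  · intro α _ ih _ q hq hq1 a ha ha1
    let : DecidableEq α := Classical.decEq α
    set p : C → ℝ := fun c => ∏ u : α, (1 - q (some u) c) with hp
    have hq_le : ∀ u c, q u c ≤ 1 := fun u c => by
      rw [← hq1 u]; exact Finset.single_le_sum (fun x _ => hq u x) (Finset.mem_univ c)
    have hp0 : ∀ c, 0 ≤ p c := fun c => Finset.prod_nonneg fun u _ => by linarith [hq_le (some u) c]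
    have hp1 : ∀ c, p c ≤ 1 := fun c => Finset.prod_le_one
      (fun u _ => by linarith [hq_le (some u) c]) (fun u _ => by linarith [hq (some u) c])
    have e1 : ∑ ω : Option α → C, (∏ u, q u (ω u)) * ∏ c, (1 - a c * missY ω c) =
        ∑ c, q none c * ∑ ω : α → C, (∏ u, q (some u) (ω u)) *
          ∏ x, (1 - (if x = c then 0 else a x) * missY ω x) := by
      rw [Fintype.sum_equiv (Equiv.piOptionEquivProd (β := fun _ : Option α => C)) _
        (fun z : C × (α → C) => q none z.1 * ((∏ u, q (some u) (z.2 u)) *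
          ∏ x, (1 - (if x = z.1 then 0 else a x) * missY z.2 x)))]
      · rw [Fintype.sum_prod_type]
        simp only [Finset.mul_sum]
      · intro ω
        rw [Fintype.prod_option, mul_assoc]
        simp only [Equiv.piOptionEquivProd_apply]
        congr 2
        apply Finset.prod_congr rfl
        intro x _
        congr 1
        unfold missY
        simp only [Option.forall]
        by_cases h : x = ω none
        · simp [h]
        · have h' : ω none ≠ x := fun h2 => h h2.symm
          simp [h, h']
    rw [e1]
    have e2 : ∀ c, ∑ ω : α → C, (∏ u, q (some u) (ω u)) *
          ∏ x, (1 - (if x = c then 0 else a x) * missY ω x) ≤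
          ∏ x ∈ Finset.univ.erase c, (1 - a x * p x) := by
      intro c
      refine (ih (fun u => q (some u)) (fun u => hq _) (fun u => hq1 _)
        (fun x => if x = c then 0 else a x) ?_ ?_).trans (le_of_eq ?_)
      · intro x; split_ifs <;> simp [ha]
      · intro x; split_ifs <;> simp [ha1]
      · rw [← Finset.mul_prod_erase _ _ (Finset.mem_univ c)]
        simp only [if_true, zero_mul, sub_zero, one_mul]
        apply Finset.prod_congr rfl
        intro x hx
        rw [if_neg (Finset.ne_of_mem_erase hx)]
    have hy0 : ∀ c, 0 ≤ 1 - a c * p c := fun c => by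
      nlinarith [mul_le_mul (ha1 c) (hp1 c) (hp0 c) zero_le_one]
    have e3 := prod_add_ge Finset.univ (fun c => 1 - a c * p c)
      (fun c => q none c * (a c * p c)) hy0
      (fun c => mul_nonneg (hq _ _) (mul_nonneg (ha c) (hp0 c)))
    have e4 : ∏ c, (1 - a c * ∏ u, (1 - q u c)) =
        ∏ c, ((1 - a c * p c) + q none c * (a c * p c)) := by
      apply Finset.prod_congr rfl
      intro c _
      rw [Fintype.prod_option]
      ring
    rw [e4]
    refine le_trans ?_ e3
    refine (Finset.sum_le_sum fun c _ => mul_le_mul_of_nonneg_left (e2 c) (hq none c)).trans ?_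
    have e5 : ∏ c, (1 - a c * p c) = ∑ c, q none c * ∏ x, (1 - a x * p x) := by
      rw [← Finset.sum_mul, hq1, one_mul]
    rw [e5, ← Finset.sum_add_distrib]
    apply le_of_eq
    apply Finset.sum_congr rfl
    intro c _
    rw [← Finset.mul_prod_erase _ _ (Finset.mem_univ c)]
    ring

lemma third_moment {C : Type} [Fintype C] [DecidableEq C] (p : C → ℝ) (p2 : C → C → ℝ)
    (p3 : C → C → C → ℝ) (A : C → C → ℝ) (lam : C → ℝ) (m l : ℝ)
    (hp : ∀ c, 0 ≤ p c) (hA : ∀ c x, 0 ≤ A c x) (hAs : ∀ c x, A c x = A x c)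
    (hAc : ∀ c, A c c = 0)
    (hAl : ∀ c, ∑ x, A c x ≤ lam c) (hlam : ∀ c, p c * (1 + lam c) ≤ 1)
    (h2c : ∀ c, p2 c c = p c) (h2n : ∀ c x, 0 ≤ p2 c x)
    (h2u : ∀ c x, x ≠ c → p2 c x ≤ p c * p x)
    (h2l : ∀ c x, x ≠ c → p c * p x - p2 c x ≤ p c * p x * A c x)
    (h3 : ∀ c x y, x ≠ c → y ≠ c → x ≠ y → p3 c x y * p c ≤ p2 c x * p2 c y)
    (h30 : ∀ c x y, p c = 0 → p3 c x y = 0)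
    (h3a : ∀ c y, p3 c c y = p2 c y) (h3b : ∀ c x, p3 c x c = p2 c x)
    (h3c : ∀ c x, p3 c x x = p2 c x)
    (hm : ∑ c, p c = m) (hl : ∑ c, ∑ x, p2 c x = m * l) (hm0 : 0 < m) :
    ∑ c, ∑ x, ∑ y, p3 c x y ≤ m * (l ^ 2 + l) := by
  obtain ⟨s, hs⟩ : ∃ s : C → ℝ, ∀ c, s c = ∑ x, p2 c x := ⟨_, fun _ => rfl⟩
  obtain ⟨D, hD⟩ : ∃ D : C → ℝ, ∀ c, D c = m + 1 - s c / p c := ⟨_, fun _ => rfl⟩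
  have h20 : ∀ c x, p c = 0 → p2 c x = 0 := by
    intro c x h
    by_cases hx : x = c
    · rw [hx, h2c, h]
    · have := h2u c x hx
      rw [h, zero_mul] at this
      exact le_antisymm this (h2n c x)
  have hs0 : ∀ c, p c = 0 → s c = 0 := by
    intro c h
    rw [hs]; exact Finset.sum_eq_zero fun x _ => h20 c x h
  have hpD : ∀ c, p c * D c = p c * (m + 1) - s c := by
    intro c
    by_cases h : p c = 0
    · rw [h, hs0 c h]; ring
    · rw [hD]; field_simp
  -- pointwise bound
  have hc : ∀ c, ∑ x, ∑ y, p3 c x y ≤ s c ^ 2 / p c + (s c - p c) := by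
    intro c
    by_cases h : p c = 0
    · rw [hs0 c h, h]
      simp [h30 c _ _ h]
    have hpc : 0 < p c := lt_of_le_of_ne (hp c) (Ne.symm h)
    have hpt : ∀ x y, p3 c x y ≤ p2 c x * p2 c y / p c +
        (if x = y then (if x = c then 0 else p2 c x) else 0) := by
      intro x y
      have hnn : 0 ≤ p2 c x * p2 c y / p c :=
        div_nonneg (mul_nonneg (h2n _ _) (h2n _ _)) hpc.le
      by_cases hx : x = c
      · subst hx
        rw [h3a, h2c]
        have : p x * p2 x y / p x = p2 x y := by field_simp
        rw [this]; simp
      by_cases hy : y = c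
      · subst hy
        rw [h3b, h2c]
        have : p2 y x * p y / p y = p2 y x := by field_simp
        rw [this, if_neg hx]; simp
      by_cases hxy : x = y
      · subst hxy
        rw [if_pos rfl, if_neg hx, h3c]; linarith
      · rw [if_neg hxy, add_zero, le_div_iff₀ hpc]
        exact h3 c x y hx hy hxy
    refine (Finset.sum_le_sum fun x _ => Finset.sum_le_sum fun y _ => hpt x y).trans (le_of_eq ?_)
    simp only [Finset.sum_add_distrib, Finset.sum_ite_eq, Finset.mem_univ, if_true]
    congr 1
    · simp only [← Finset.sum_div, ← Finset.mul_sum, ← Finset.sum_mul, ← hs]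
      ring
    · have : ∀ x, (if x = c then 0 else p2 c x) = p2 c x - (if x = c then p c else 0) := by
        intro x; split_ifs with hx
        · rw [hx, h2c]; ring
        · ring
      simp only [this, Finset.sum_sub_distrib, ← hs]
      simp
  -- bound on D
  have hDb : ∀ c, p c * D c ^ 2 ≤ p c ^ 2 + ∑ x, A c x * p x ^ 2 := by
    intro c
    have hRHS : 0 ≤ p c ^ 2 + ∑ x, A c x * p x ^ 2 :=
      add_nonneg (sq_nonneg _) (Finset.sum_nonneg fun x _ => mul_nonneg (hA _ _) (sq_nonneg _))
    by_cases h : p c = 0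
    · rw [h, zero_mul]; rwa [h] at hRHS
    have hpc : 0 < p c := lt_of_le_of_ne (hp c) (Ne.symm h)
    have hDe : D c = ∑ x, (p x + (if x = c then 1 else 0) - p2 c x / p c) := by
      rw [Finset.sum_sub_distrib, Finset.sum_add_distrib, hm, ← Finset.sum_div, ← hs, hD]
      simp
    set B : C → ℝ := fun x => (if x = c then 1 else 0) + A c x with hB
    have hB0 : ∀ x, 0 ≤ B x := by
      intro x; rw [hB]; have := hA c x; dsimp only; split_ifs <;> linarith
    have hD0 : 0 ≤ D c := by
      rw [hDe]; apply Finset.sum_nonneg; intro x _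
      by_cases hx : x = c
      · subst hx; rw [if_pos rfl, h2c, div_self h]; linarith
      · rw [if_neg hx, add_zero, sub_nonneg, div_le_iff₀ hpc]
        linarith [h2u c x hx]
    have hD1 : D c ≤ ∑ x, B x * p x := by
      rw [hDe]; apply Finset.sum_le_sum; intro x _
      by_cases hx : x = c
      · subst hx; simp only [hB, if_true]; rw [h2c, div_self h, hAc]; linarith
      · simp only [hB, if_neg hx, add_zero, zero_add]
        have := h2l c x hx
        rw [sub_le_iff_le_add, ← sub_le_iff_le_add', le_div_iff₀ hpc]
        nlinarith
    have hcs : (∑ x, B x * p x) ^ 2 ≤ (∑ x, B x) * ∑ x, B x * p x ^ 2 := by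
      apply Finset.sum_sq_le_sum_mul_sum_of_sq_le_mul
      · intro x _; exact hB0 x
      · intro x _; exact mul_nonneg (hB0 x) (sq_nonneg _)
      · intro x _; apply le_of_eq; ring
    have hBs : ∑ x, B x ≤ 1 + lam c := by
      simp only [hB, Finset.sum_add_distrib]
      have := hAl c
      simpa using this
    have hBq : ∑ x, B x * p x ^ 2 = p c ^ 2 + ∑ x, A c x * p x ^ 2 := by
      simp only [hB, add_mul, Finset.sum_add_distrib]
      simp
    rw [hBq] at hcs
    have k1 : D c ^ 2 ≤ (1 + lam c) * (p c ^ 2 + ∑ x, A c x * p x ^ 2) :=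
      ((pow_le_pow_left₀ hD0 hD1 2).trans hcs).trans (mul_le_mul_of_nonneg_right hBs hRHS)
    calc p c * D c ^ 2 ≤ p c * ((1 + lam c) * (p c ^ 2 + ∑ x, A c x * p x ^ 2)) := by gcongr
      _ = (p c * (1 + lam c)) * (p c ^ 2 + ∑ x, A c x * p x ^ 2) := by ring
      _ ≤ 1 * (p c ^ 2 + ∑ x, A c x * p x ^ 2) := mul_le_mul_of_nonneg_right (hlam c) hRHS
      _ = _ := one_mul _
  have hDsum : ∑ c, p c * D c ^ 2 ≤ m := by
    refine (Finset.sum_le_sum fun c _ => hDb c).trans ?_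
    rw [Finset.sum_add_distrib, Finset.sum_comm, ← Finset.sum_add_distrib, ← hm]
    apply Finset.sum_le_sum
    intro x _
    rw [← Finset.sum_mul]
    have : ∑ c, A c x ≤ lam x := by
      rw [Finset.sum_congr rfl fun c _ => hAs c x]; exact hAl x
    have h1 := mul_le_mul_of_nonneg_right this (sq_nonneg (p x))
    have h2 := mul_le_mul_of_nonneg_right (hlam x) (hp x)
    nlinarith
  have hsq : ∀ c, s c ^ 2 / p c = (m + 1) * (2 * s c - (m + 1) * p c) + p c * D c ^ 2 := by
    intro c
    by_cases h : p c = 0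
    · rw [h, hs0 c h]; simp
    · rw [hD]; field_simp; ring
  have hss : ∑ c, s c = m * l := by rw [← hl]; exact Finset.sum_congr rfl fun c _ => hs c
  calc ∑ c, ∑ x, ∑ y, p3 c x y ≤ ∑ c, (s c ^ 2 / p c + (s c - p c)) :=
        Finset.sum_le_sum fun c _ => hc c
    _ = (m + 1) * (2 * (m * l) - (m + 1) * m) + ∑ c, p c * D c ^ 2 + (m * l - m) := by
        simp only [hsq, Finset.sum_add_distrib, ← Finset.mul_sum, Finset.sum_sub_distrib, hss, hm]
    _ ≤ m * (l ^ 2 + l) := by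
        nlinarith [mul_nonneg hm0.le (sq_nonneg (m + 1 - l))]

lemma one_sub_prod_le {U : Type} (s : Finset U) (t : U → ℝ)
    (h0 : ∀ u, 0 ≤ t u) (h1 : ∀ u, t u ≤ 1) :
    1 - ∏ u ∈ s, (1 - t u) ≤ ∑ u ∈ s, t u := by
  classical
  induction s using Finset.induction_on with
  | empty => simp
  | insert a s ha ih =>
    rw [Finset.prod_insert ha, Finset.sum_insert ha]
    have hp : ∏ u ∈ s, (1 - t u) ≤ 1 := Finset.prod_le_one
      (fun u _ => by linarith [h1 u]) (fun u _ => by linarith [h0 u])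
    nlinarith [h0 a]

/-- Probability that all the colours of `S` are missing. -/
lemma miss_prob {U C : Type} [Fintype U] [DecidableEq U] [Fintype C] [DecidableEq C]
    (q : U → C → ℝ) (hq1 : ∀ u, ∑ c, q u c = 1) (S : Finset C) :
    ∑ ω : U → C, (∏ u, q u (ω u)) * (if ∀ u, ω u ∉ S then 1 else 0) =
      ∏ u, (1 - ∑ c ∈ S, q u c) := by
  have e : ∀ u, 1 - ∑ c ∈ S, q u c = ∑ c, q u c * (if c ∉ S then 1 else 0) := by
    intro u
    have h := Finset.sum_filter_add_sum_filter_not Finset.univ (fun c => c ∈ S) (q u)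
    rw [hq1 u] at h
    simp only [mul_ite, mul_one, mul_zero]
    rw [← Finset.sum_filter, ← h]
    simp
  simp only [e]
  rw [Finset.prod_univ_sum, Fintype.piFinset_univ]
  apply Finset.sum_congr rfl
  intro ω _
  rw [Finset.prod_mul_distrib]
  congr 1
  rw [Finset.prod_ite_zero]
  simp

lemma filter_mem_univ_aux {C : Type} [Fintype C] [DecidableEq C] (s : Finset C) :
    Finset.univ.filter (fun c => c ∈ s) = s := by
  ext; simp

/-- number of missing colours -/
noncomputable def missX {U C : Type} [Fintype C] (ω : U → C) : ℝ := ∑ c, missY ω c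

lemma missY_prod {U C : Type} [DecidableEq C] [Fintype U] (ω : U → C) (c x y : C) :
    missY ω c * missY ω x * missY ω y = if ∀ u, ω u ∉ ({c, x, y} : Finset C) then 1 else 0 := by
  have : (∀ u, ω u ∉ ({c, x, y} : Finset C)) ↔
      (∀ u, ω u ≠ c) ∧ (∀ u, ω u ≠ x) ∧ (∀ u, ω u ≠ y) := by
    simp only [Finset.mem_insert, Finset.mem_singleton, not_or, forall_and, ne_eq]
  unfold missY
  simp only [this]
  by_cases h1 : ∀ u, ω u ≠ c <;> by_cases h2 : ∀ u, ω u ≠ x <;> by_cases h3 : ∀ u, ω u ≠ y <;>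
    simp [h1, h2, h3]

lemma missY_sq {U C : Type} (ω : U → C) (c : C) : missY ω c * missY ω c = missY ω c := by
  unfold missY; split_ifs <;> simp

lemma missY_nonneg {U C : Type} (ω : U → C) (c : C) : 0 ≤ missY ω c := by
  unfold missY; split_ifs <;> simp

lemma balls {U C : Type} [Fintype U] [DecidableEq U] [Fintype C] [DecidableEq C]
    (L : U → Finset C) (hL : ∀ u, (L u).Nonempty) (l δ : ℝ)
    (hpos : 0 < ∑ ω ∈ Fintype.piFinset L, missX ω)
    (hl : l = (∑ ω ∈ Fintype.piFinset L, missX ω ^ 2) / ∑ ω ∈ Fintype.piFinset L, missX ω)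
    (hint : ∀ ω : U → C, missX ω ≤ missX ω ^ 2)
    (hδ0 : 0 < δ) (hδ1 : δ < 1) :
    ∑ ω ∈ Fintype.piFinset L, missX ω * (if missX ω ≤ (1 - δ) * l then 1 else 0) ≤
      (∑ ω ∈ Fintype.piFinset L, missX ω) * Real.exp (-(δ ^ 2 * l) / 2) := by
  obtain ⟨r, hr⟩ : ∃ r : U → ℝ, ∀ u, r u = ((L u).card : ℝ) := ⟨_, fun _ => rfl⟩
  have hr1 : ∀ u, r u = 1 ∨ 2 ≤ r u := by
    intro u
    have : 0 < (L u).card := (hL u).card_pos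
    rcases Nat.lt_or_ge 1 (L u).card with h | h
    · right; rw [hr]; exact_mod_cast h
    · left; rw [hr]; exact_mod_cast (by omega : (L u).card = 1)
  have hr0 : ∀ u, 0 < r u := fun u => by rcases hr1 u with h | h <;> linarith
  obtain ⟨q, hqd⟩ : ∃ q : U → C → ℝ, ∀ u c, q u c = if c ∈ L u then (r u)⁻¹ else 0 :=
    ⟨_, fun _ _ => rfl⟩
  obtain ⟨o, hod⟩ : ∃ o : U → C → ℝ, ∀ u c, o u c = if c ∈ L u then (r u - 1)⁻¹ else 0 :=
    ⟨_, fun _ _ => rfl⟩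
  have hq : ∀ u c, 0 ≤ q u c := by
    intro u c; rw [hqd]; have := hr0 u; split_ifs <;> positivity
  have hq1 : ∀ u, ∑ c, q u c = 1 := by
    intro u
    simp only [hqd]
    rw [← Finset.sum_filter]
    simp only [filter_mem_univ_aux, Finset.sum_const, nsmul_eq_mul, ← hr]
    exact mul_inv_cancel₀ (hr0 u).ne'
  have hqS : ∀ u (S : Finset C), ∑ c ∈ S, q u c ≤ 1 := fun u S => by
    rw [← hq1 u]
    exact Finset.sum_le_sum_of_subset_of_nonneg (Finset.subset_univ _) fun c _ _ => hq u c
  have ho : ∀ u c, 0 ≤ o u c := by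
    intro u c; rw [hod]
    split_ifs
    · rcases hr1 u with h | h
      · simp [h]
      · apply inv_nonneg.mpr; linarith
    · exact le_rfl
  have ho1 : ∀ u c, o u c ≤ 1 := by
    intro u c; rw [hod]
    split_ifs
    · rcases hr1 u with h | h
      · simp [h]
      · apply inv_le_one_of_one_le₀; linarith
    · exact zero_le_one
  -- if two distinct colours are in L u then r u ≥ 2
  have hr2 : ∀ u c x, c ∈ L u → x ∈ L u → x ≠ c → 2 ≤ r u := by
    intro u c x hc hx hne
    have : 1 < (L u).card := Finset.one_lt_card.mpr ⟨x, hx, c, hc, hne⟩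
    rw [hr]; exact_mod_cast this
  have hfac : ∀ u c x, x ≠ c → 1 - q u c - q u x = (1 - q u c) * (1 - q u x) * (1 - o u c * o u x) := by
    intro u c x hne
    simp only [hqd, hod]
    by_cases hc : c ∈ L u <;> by_cases hx : x ∈ L u
    · have h2 := hr2 u c x hc hx hne
      have h0 := hr0 u
      have h1 : r u - 1 ≠ 0 := by linarith
      simp only [hc, hx, if_true]
      field_simp
      ring
    · simp [hc, hx]
    · simp [hc, hx]
    · simp [hc, hx]
  have hqo : ∀ u c, (1 - q u c) * (1 + o u c) ≤ 1 := by
    intro u c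
    simp only [hqd, hod]
    split_ifs
    · rcases hr1 u with h | h
      · simp [h]
      · have h0 := hr0 u
        have h1 : r u - 1 ≠ 0 := by linarith
        apply le_of_eq
        field_simp
        ring
    · simp
  have hosum : ∀ u c, o u c * ∑ x ∈ Finset.univ.erase c, o u x ≤ o u c := by
    intro u c
    by_cases hc : c ∈ L u
    · have : ∑ x ∈ Finset.univ.erase c, o u x ≤ 1 := by
        rw [Finset.sum_erase_eq_sub (Finset.mem_univ c)]
        simp only [hod]
        rw [← Finset.sum_filter]
        simp only [filter_mem_univ_aux, Finset.sum_const, nsmul_eq_mul, ← hr, if_pos hc]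
        rcases hr1 u with h | h
        · simp [h]
        · have h1 : r u - 1 ≠ 0 := by linarith
          apply le_of_eq
          field_simp
      nlinarith [ho u c]
    · have : o u c = 0 := by rw [hod, if_neg hc]
      simp [this]
  obtain ⟨P, hP⟩ : ∃ P : Finset C → ℝ, ∀ S, P S = ∏ u, (1 - ∑ c ∈ S, q u c) := ⟨_, fun _ => rfl⟩
  have hPn : ∀ S, 0 ≤ P S := fun S => by
    rw [hP]; exact Finset.prod_nonneg fun u _ => by linarith [hqS u S]
  obtain ⟨p, hp⟩ : ∃ p : C → ℝ, ∀ c, p c = ∏ u, (1 - q u c) := ⟨_, fun _ => rfl⟩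
  have hpP : ∀ c, P {c} = p c := fun c => by rw [hP, hp]; simp
  have hpn : ∀ c, 0 ≤ p c := fun c => hpP c ▸ hPn _
  have hP2 : ∀ c x, x ≠ c → P {c, x} = p c * p x * ∏ u, (1 - o u c * o u x) := by
    intro c x hne
    rw [hP, hp, hp, ← Finset.prod_mul_distrib, ← Finset.prod_mul_distrib]
    apply Finset.prod_congr rfl
    intro u _
    rw [Finset.sum_pair hne.symm, ← hfac u c x hne]
    ring
  have hoo0 : ∀ u c x, 0 ≤ o u c * o u x := fun u c x => mul_nonneg (ho _ _) (ho _ _)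
  have hoo1 : ∀ u c x, o u c * o u x ≤ 1 := fun u c x =>
    mul_le_one₀ (ho1 _ _) (ho _ _) (ho1 _ _)
  have hP2u : ∀ c x, x ≠ c → P {c, x} ≤ p c * p x := by
    intro c x hne
    rw [hP2 c x hne]
    apply mul_le_of_le_one_right (mul_nonneg (hpn _) (hpn _))
    exact Finset.prod_le_one (fun u _ => by linarith [hoo1 u c x])
      (fun u _ => by linarith [hoo0 u c x])
  obtain ⟨W, hWd⟩ : ∃ W : (U → C) → ℝ, ∀ ω, W ω = ∏ u, q u (ω u) := ⟨_, fun _ => rfl⟩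
  have hW0 : ∀ ω, 0 ≤ W ω := fun ω => by rw [hWd]; exact Finset.prod_nonneg fun u _ => hq _ _
  have hE : ∀ S : Finset C, ∑ ω, W ω * (if ∀ u, ω u ∉ S then 1 else 0) = P S := by
    intro S; simp only [hWd, hP]; exact miss_prob q hq1 S
  have hW1 : ∑ ω, W ω = 1 := by
    have := hE ∅
    rw [hP] at this
    simpa using this
  have hE3 : ∀ c x y, ∑ ω, W ω * (missY ω c * missY ω x * missY ω y) = P {c, x, y} := by
    intro c x y
    rw [← hE]
    simp only [missY_prod]
  have hE2 : ∀ c x, ∑ ω, W ω * (missY ω c * missY ω x) = P {c, x} := by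
    intro c x
    have := hE3 c c x
    simp only [missY_sq] at this
    rw [this]; simp
  have hE1 : ∀ c, ∑ ω, W ω * missY ω c = p c := by
    intro c
    have := hE2 c c
    simp only [missY_sq] at this
    rw [this, ← hpP]; simp
  obtain ⟨m, hm⟩ : ∃ m : ℝ, m = ∑ c, p c := ⟨_, rfl⟩
  have hm1 : ∑ ω, W ω * missX ω = m := by
    simp only [missX, Finset.mul_sum]
    rw [Finset.sum_comm, hm]
    exact Finset.sum_congr rfl fun c _ => hE1 c
  have hm2 : ∑ ω, W ω * missX ω ^ 2 = ∑ c, ∑ x, P {c, x} := by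
    have : ∀ ω : U → C, W ω * missX ω ^ 2 = ∑ c, ∑ x, W ω * (missY ω c * missY ω x) := by
      intro ω
      rw [sq, missX, Finset.sum_mul_sum, Finset.mul_sum]
      simp only [Finset.mul_sum]
    simp only [this]
    rw [Finset.sum_comm]
    apply Finset.sum_congr rfl; intro c _
    rw [Finset.sum_comm]
    exact Finset.sum_congr rfl fun x _ => hE2 c x
  have hm3 : ∑ ω, W ω * missX ω ^ 3 = ∑ c, ∑ x, ∑ y, P {c, x, y} := by
    have : ∀ ω : U → C, W ω * missX ω ^ 3 =
        ∑ c, ∑ x, ∑ y, W ω * (missY ω c * missY ω x * missY ω y) := by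
      intro ω
      rw [pow_succ, sq, missX, Finset.sum_mul_sum, Finset.sum_mul, Finset.mul_sum]
      apply Finset.sum_congr rfl; intro c _
      rw [Finset.sum_mul_sum]
      simp only [Finset.mul_sum]
    simp only [this]
    rw [Finset.sum_comm]
    apply Finset.sum_congr rfl; intro c _
    rw [Finset.sum_comm]
    apply Finset.sum_congr rfl; intro x _
    rw [Finset.sum_comm]
    exact Finset.sum_congr rfl fun y _ => hE3 c x y
  -- transfer to uniform measure on piFinset
  obtain ⟨N, hN⟩ : ∃ N : ℝ, N = ∏ u, r u := ⟨_, rfl⟩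
  have hN0 : 0 < N := by rw [hN]; exact Finset.prod_pos fun u _ => hr0 u
  have htr : ∀ F : (U → C) → ℝ, ∑ ω ∈ Fintype.piFinset L, F ω = N * ∑ ω, W ω * F ω := by
    intro F
    have hWe : ∀ ω, W ω = if ω ∈ Fintype.piFinset L then N⁻¹ else 0 := by
      intro ω
      rw [hWd]
      simp only [hqd]
      rw [Finset.prod_ite_zero]
      simp [hN, Fintype.mem_piFinset]
    simp only [hWe, ite_mul, zero_mul]
    rw [← Finset.sum_filter, Finset.mul_sum]
    simp only [filter_mem_univ_aux]
    apply Finset.sum_congr rfl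
    intro ω _
    field_simp
  rw [htr] at hpos
  rw [htr, htr] at hl
  rw [htr, htr]
  rw [hm1] at hpos hl ⊢
  have hm0 : 0 < m := by
    by_contra h
    push Not at h
    nlinarith
  have hml : ∑ ω, W ω * missX ω ^ 2 = m * l := by
    rw [hl]; field_simp
  have hX0 : ∀ ω : U → C, 0 ≤ missX ω := fun ω => Finset.sum_nonneg fun c _ => missY_nonneg ω c
  have hl1 : 1 ≤ l := by
    have : m ≤ m * l := by
      rw [← hml, ← hm1]
      exact Finset.sum_le_sum fun ω _ => mul_le_mul_of_nonneg_left (hint ω) (hW0 ω)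
    nlinarith
  have hmlel : m ≤ l := by
    have : 0 ≤ ∑ ω, W ω * (missX ω - m) ^ 2 :=
      Finset.sum_nonneg fun ω _ => mul_nonneg (hW0 ω) (sq_nonneg _)
    have e : ∑ ω, W ω * (missX ω - m) ^ 2 =
        ∑ ω, W ω * missX ω ^ 2 - 2 * m * ∑ ω, W ω * missX ω + m ^ 2 * ∑ ω, W ω := by
      rw [Finset.mul_sum, Finset.mul_sum, ← Finset.sum_sub_distrib, ← Finset.sum_add_distrib]
      apply Finset.sum_congr rfl
      intro ω _
      ring
    rw [e, hm1, hW1, hml] at this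
    nlinarith
  have hPcc : ∀ c, P {c, c} = p c := fun c => by rw [← hpP]; simp
  have hlm : l ≤ m + 1 := by
    have : m * l ≤ m * m + m := by
      rw [← hml, hm2]
      have : ∀ c x, P {c, x} ≤ p c * p x + (if c = x then p c else 0) := by
        intro c x
        by_cases h : c = x
        · subst h
          rw [hPcc, if_pos rfl]
          nlinarith [mul_nonneg (hpn c) (hpn c)]
        · rw [if_neg h, add_zero]
          exact hP2u c x (Ne.symm h)
      refine (Finset.sum_le_sum fun c _ => Finset.sum_le_sum fun x _ => this c x).trans (le_of_eq ?_)
      simp only [Finset.sum_add_distrib, Finset.sum_ite_eq, Finset.mem_univ, if_true]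
      rw [← Finset.sum_mul_sum, ← hm]
    nlinarith
  have h3m : ∑ ω, W ω * missX ω ^ 3 ≤ m * (l ^ 2 + l) := by
    rw [hm3]
    refine third_moment p (fun c x => P {c, x}) (fun c x y => P {c, x, y})
      (fun c x => if x = c then 0 else ∑ u, o u c * o u x) (fun c => ∑ u, o u c) m l hpn
      ?_ ?_ ?_ ?_ ?_ hPcc (fun c x => hPn _) hP2u ?_ ?_ ?_ ?_ ?_ ?_ hm.symm (hm2 ▸ hml) hm0
    · intro c x
      split_ifs
      · exact le_rfl
      · exact Finset.sum_nonneg fun u _ => hoo0 u c x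
    · intro c x
      simp only [eq_comm (a := x)]
      congr 1
      exact Finset.sum_congr rfl fun u _ => mul_comm _ _
    · intro c; simp
    · intro c
      rw [← Finset.add_sum_erase _ _ (Finset.mem_univ c), if_pos rfl, zero_add]
      rw [Finset.sum_congr rfl (g := fun x => ∑ u, o u c * o u x)
        (fun x hx => if_neg (Finset.ne_of_mem_erase hx)), Finset.sum_comm]
      apply Finset.sum_le_sum
      intro u _
      rw [← Finset.mul_sum]
      exact hosum u c
    · intro c
      have h := prod_add_ge Finset.univ (fun _ : U => (1 : ℝ)) (fun u => o u c)
        (fun _ => zero_le_one) (fun u => ho u c)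
      simp only [Finset.prod_const_one, mul_one] at h
      refine (mul_le_mul_of_nonneg_left h (hpn c)).trans ?_
      rw [hp, ← Finset.prod_mul_distrib]
      apply Finset.prod_le_one
      · intro u _
        apply mul_nonneg
        · have := hqS u {c}
          rw [Finset.sum_singleton] at this
          linarith
        · linarith [ho u c]
      · intro u _
        exact hqo u c
    · intro c x hne
      rw [if_neg hne, hP2 c x hne]
      have := one_sub_prod_le Finset.univ (fun u => o u c * o u x) (fun u => hoo0 u c x)
        (fun u => hoo1 u c x)
      have := mul_le_mul_of_nonneg_left this (mul_nonneg (hpn c) (hpn x))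
      linarith
    · intro c x y hx hy hxy
      rw [hP, hP, hP, hp, ← Finset.prod_mul_distrib, ← Finset.prod_mul_distrib]
      apply Finset.prod_le_prod
      · intro u _
        have h1 := hqS u {c, x, y}
        have h2 := hqS u {c}
        rw [Finset.sum_singleton] at h2
        apply mul_nonneg <;> linarith
      · intro u _
        rw [Finset.sum_insert (by simp [hx.symm, hy.symm]), Finset.sum_pair hxy,
          Finset.sum_pair hx.symm, Finset.sum_pair hy.symm]
        nlinarith [mul_nonneg (hq u x) (hq u y)]
    · intro c x y h
      refine le_antisymm ?_ (hPn _)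
      rw [← h, ← hE1, ← hE3]
      apply Finset.sum_le_sum
      intro ω _
      apply mul_le_mul_of_nonneg_left _ (hW0 ω)
      have hle : ∀ d, missY ω d ≤ 1 := fun d => by unfold missY; split_ifs <;> simp
      have h0 := missY_nonneg ω
      rw [mul_assoc]
      exact mul_le_of_le_one_right (h0 c) (mul_le_one₀ (hle x) (h0 y) (hle y))
    · intro c y; simp
    · intro c x
      congr 1
      ext d; simp; tauto
    · intro c x; simp
  have hexp : ∀ s : ℝ, 0 ≤ s →
      ∑ ω, W ω * Real.exp (-s * missX ω) ≤ Real.exp (-m * s + m * s ^ 2 / 2) := by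
    intro s hs
    have ha0 : 0 ≤ 1 - Real.exp (-s) := by
      have : Real.exp (-s) ≤ 1 := Real.exp_le_one_iff.mpr (by linarith)
      linarith
    have ha1 : 1 - Real.exp (-s) ≤ 1 := by linarith [Real.exp_pos (-s)]
    have hg := gen_le U q hq hq1 (fun _ => 1 - Real.exp (-s)) (fun _ => ha0) (fun _ => ha1)
    have e1 : ∀ ω : U → C, Real.exp (-s * missX ω) =
        ∏ c, (1 - (1 - Real.exp (-s)) * missY ω c) := by
      intro ω
      rw [missX, Finset.mul_sum, Real.exp_sum]
      apply Finset.prod_congr rfl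
      intro c _
      unfold missY
      split_ifs <;> simp
    simp only [e1, hWd]
    refine hg.trans ?_
    have e2 : ∏ c, (1 - (1 - Real.exp (-s)) * ∏ u, (1 - q u c)) ≤
        ∏ c, Real.exp (-((1 - Real.exp (-s)) * p c)) := by
      apply Finset.prod_le_prod
      · intro c _
        rw [← hp]
        have : p c ≤ 1 := by
          rw [hp]
          refine Finset.prod_le_one (fun u _ => ?_) (fun u _ => by linarith [hq u c])
          have := hqS u {c}
          rw [Finset.sum_singleton] at this
          linarith
        nlinarith [mul_le_one₀ ha1 (hpn c) this]
      · intro c _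
        rw [← hp]
        linarith [Real.add_one_le_exp (-((1 - Real.exp (-s)) * p c))]
    refine e2.trans ?_
    rw [← Real.exp_sum, Finset.sum_neg_distrib, ← Finset.mul_sum, ← hm]
    apply Real.exp_le_exp.mpr
    have e3 : Real.exp (-s) ≤ 1 - s + s ^ 2 / 2 := by
      have h := Real.quadratic_le_exp_of_nonneg hs
      rw [Real.exp_neg, inv_le_iff_one_le_mul₀ (Real.exp_pos s)]
      have h2 : 0 ≤ 1 - s + s ^ 2 / 2 := by nlinarith [sq_nonneg (s - 1)]
      have h3 := mul_le_mul_of_nonneg_left h h2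
      nlinarith [sq_nonneg (s ^ 2)]
    nlinarith
  have hcore := core_tail W missX hW0 hX0 m l (δ * l) hm0 hm1 hml h3m hexp hmlel hlm hl1
    (by positivity) (by nlinarith)
  have e1 : l - δ * l = (1 - δ) * l := by ring
  have e2 : -((δ * l) ^ 2 / (2 * l)) = -(δ ^ 2 * l) / 2 := by
    have : l ≠ 0 := by linarith
    field_simp
  rw [e1, e2] at hcore
  rw [mul_assoc]
  exact mul_le_mul_of_nonneg_left hcore hN0.le

lemma missX_eq {U C : Type} [Fintype C] (ω : U → C) [DecidablePred fun c => ∀ u, ω u ≠ c] :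
    missX ω = ((Finset.univ.filter fun c => ∀ u, ω u ≠ c).card : ℝ) := by
  unfold missX missY
  rw [Finset.card_filter]
  push_cast
  apply Finset.sum_congr rfl
  intro c _
  congr

/-- Summing over extensions is a size-biased sum over list colourings of the neighbourhood. -/
lemma sum_ext (V : Type) [Fintype V] [DecidableEq V] (G : SimpleGraph V)
    [DecidableRel G.Adj] (htf : G.CliqueFree 3) (v : V) (k : ℕ)
    (σ₀ : V → Fin k)
    (Ext : Finset (V → Fin k))
    (hExt : Ext = Finset.univ.filter (fun τ : V → Fin k =>
      (∀ u w : V, G.Adj u w → τ u ≠ τ w) ∧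
        ∀ u : V, u ∉ insert v (G.neighborFinset v) → τ u = σ₀ u))
    (hne : Ext.Nonempty) :
    ∃ L : {u // G.Adj u v} → Finset (Fin k), (∀ u, (L u).Nonempty) ∧
      ∀ g : ℝ → ℝ, ∑ τ ∈ Ext, g ((Finset.univ.filter
        (fun c : Fin k => ∀ u : V, G.Adj u v → τ u ≠ c)).card : ℝ) =
        ∑ ω ∈ Fintype.piFinset L, missX ω * g (missX ω) := by
  have hmem : ∀ τ, τ ∈ Ext ↔ (∀ u w : V, G.Adj u w → τ u ≠ τ w) ∧
      ∀ u : V, u ≠ v → ¬ G.Adj u v → τ u = σ₀ u := by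
    intro τ
    rw [hExt]
    simp [not_or, G.adj_comm v]
  have hind : ∀ u w, G.Adj u v → G.Adj u w → ¬ G.Adj w v := by
    intro u w h1 h2 h3
    exact htf {u, w, v} (SimpleGraph.is3Clique_triple_iff.mpr ⟨h2, h1, h3⟩)
  obtain ⟨τ₀, hτ₀⟩ := hne
  rw [hmem] at hτ₀
  refine ⟨fun u => Finset.univ.filter fun c => ∀ w, G.Adj u w → w ≠ v → σ₀ w ≠ c, ?_, ?_⟩
  · intro u
    refine ⟨τ₀ u, ?_⟩
    simp only [Finset.mem_filter, Finset.mem_univ, true_and]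
    intro w hw hwv
    rw [← hτ₀.2 w hwv (hind u w u.2 hw)]
    exact (hτ₀.1 _ _ hw).symm
  · intro g
    have hX : ∀ τ : V → Fin k, ((Finset.univ.filter
        (fun c : Fin k => ∀ u : V, G.Adj u v → τ u ≠ c)).card : ℝ) =
        missX (fun u : {u // G.Adj u v} => τ u) := by
      intro τ
      rw [missX_eq]
      simp only [Subtype.forall]
    simp only [hX]
    have hR : ∀ ω : {u // G.Adj u v} → Fin k, missX ω * g (missX ω) =
        ∑ c ∈ Finset.univ.filter (fun c => ∀ u, ω u ≠ c), g (missX ω) := by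
      intro ω
      rw [Finset.sum_const, nsmul_eq_mul, ← missX_eq]
    simp only [hR]
    rw [Finset.sum_sigma']
    refine Finset.sum_bij'
      (fun τ _ => (⟨fun u => τ u, τ v⟩ : (_ : {u // G.Adj u v} → Fin k) × Fin k))
      (fun z _ => fun w => if w = v then z.2 else if h : G.Adj w v then z.1 ⟨w, h⟩ else σ₀ w)
      ?_ ?_ ?_ ?_ ?_
    · intro τ hτ
      rw [hmem] at hτ
      simp only [Finset.mem_sigma, Fintype.mem_piFinset, Finset.mem_filter, Finset.mem_univ,
        true_and]
      refine ⟨fun u w hw hwv => ?_, fun u => hτ.1 _ _ u.2⟩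
      rw [← hτ.2 w hwv (hind u w u.2 hw)]
      exact (hτ.1 _ _ hw).symm
    · rintro ⟨ω, c⟩ hz
      simp only [Finset.mem_sigma, Fintype.mem_piFinset, Finset.mem_filter, Finset.mem_univ,
        true_and] at hz
      obtain ⟨h1, h2⟩ := hz
      rw [hmem]
      refine ⟨?_, ?_⟩
      · intro u w huw
        dsimp only
        by_cases hu : u = v
        · subst hu
          have hwu : w ≠ u := huw.ne'
          rw [if_pos rfl, if_neg hwu, dif_pos huw.symm]
          exact (h2 _).symm
        by_cases hw : w = v
        · subst hw
          rw [if_pos rfl, if_neg hu, dif_pos huw]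
          exact h2 _
        rw [if_neg hu, if_neg hw]
        by_cases hu' : G.Adj u v
        · rw [dif_pos hu', dif_neg (hind u w hu' huw)]
          exact (h1 ⟨u, hu'⟩ w huw hw).symm
        by_cases hw' : G.Adj w v
        · rw [dif_neg hu', dif_pos hw']
          exact h1 ⟨w, hw'⟩ u huw.symm hu
        rw [dif_neg hu', dif_neg hw', ← hτ₀.2 u hu hu', ← hτ₀.2 w hw hw']
        exact hτ₀.1 u w huw
      · intro u hu hu'
        simp [hu, hu']
    · intro τ hτ
      rw [hmem] at hτ
      funext w
      dsimp only
      split_ifs with h1 h2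
      · rw [h1]
      · rfl
      · exact (hτ.2 w h1 h2).symm
    · rintro ⟨ω, c⟩ hz
      simp only [if_true]
      congr 1
      funext u
      have : (u : V) ≠ v := u.2.ne
      simp [this, u.2]
    · intro τ hτ
      rfl

theorem stmt_12 (V : Type) [Fintype V] [DecidableEq V] (G : SimpleGraph V)
    [DecidableRel G.Adj] (htf : G.CliqueFree 3) (v : V) (k : ℕ)
    (σ₀ : V → Fin k)
    (Ext : Finset (V → Fin k))
    (hExt : Ext = Finset.univ.filter (fun τ : V → Fin k =>
      (∀ u w : V, G.Adj u w → τ u ≠ τ w) ∧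
        ∀ u : V, u ∉ insert v (G.neighborFinset v) → τ u = σ₀ u))
    (hne : Ext.Nonempty)
    (ℓ : ℝ)
    (hℓ : ℓ = (∑ τ ∈ Ext, ((Finset.univ.filter
        (fun c : Fin k => ∀ u : V, G.Adj u v → τ u ≠ c)).card : ℝ)) / Ext.card)
    (δ : ℝ) (hδ0 : 0 < δ) (hδ1 : δ < 1) :
    ((Ext.filter (fun τ => ((Finset.univ.filter
          (fun c : Fin k => ∀ u : V, G.Adj u v → τ u ≠ c)).card : ℝ) ≤
            (1 - δ) * ℓ)).card : ℝ) / Ext.card ≤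
      Real.exp (-(δ ^ 2 * ℓ) / 2) := by
  obtain ⟨L, hL, hsum⟩ := sum_ext V G htf v k σ₀ Ext hExt hne
  have hcard : (Ext.card : ℝ) = ∑ ω ∈ Fintype.piFinset L, missX ω := by
    have := hsum (fun _ => 1)
    simpa using this
  have hpos : (0 : ℝ) < Ext.card := by exact_mod_cast hne.card_pos
  have h2 := hsum (fun x => x)
  have h3 := hsum (fun x => if x ≤ (1 - δ) * ℓ then 1 else 0)
  rw [h2, hcard] at hℓ
  simp only [← sq] at hℓ
  have hint : ∀ ω : {u // G.Adj u v} → Fin k, missX ω ≤ missX ω ^ 2 := by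
    intro ω
    rw [missX_eq]
    exact_mod_cast Nat.le_self_pow two_ne_zero _
  have hb := balls L hL ℓ δ (hcard ▸ hpos) hℓ hint hδ0 hδ1
  rw [div_le_iff₀ hpos, Finset.card_filter]
  push_cast
  rw [h3, hcard, mul_comm (Real.exp _)]
  exact hb
end

section
/- Let ε, Δ, k, and G be as follows: ε ∈ (0,1), Δ sufficiently large in terms of ε, k such that (1-ε)k ln k ≥ Δ, G triangle-free with maximum degree at most Δ, and ℓ = Δ^{ε/2}. For any vertex v, let 𝛔 be the uniformly random proper k-colouring of G \ v. Then for all δ ∈ (0,1), P(ℓ_𝛔(v) < (1-δ)ℓ) ≤ 2·exp(-δ²ℓ/2). -/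
namespace TF
open Finset Classical

lemma avg1 {V : Type} [Fintype V] {k : ℕ} (F : (V → Fin k) → ℝ) (v : V) :
    (k : ℝ) * ∑ σ, F σ = ∑ σ : V → Fin k, ∑ c : Fin k, F (Function.update σ v c) := by
  have e : Function.Involutive (fun p : (V → Fin k) × Fin k => (Function.update p.1 v p.2, p.1 v)) := by
    rintro ⟨σ, c⟩; simp
  rw [← Fintype.sum_prod_type' (f := fun σ c => F (Function.update σ v c))]
  rw [← Equiv.sum_comp (e.toPerm _)]
  simp [Fintype.sum_prod_type, mul_sum]

lemma avgN {V : Type} [Fintype V] {k : ℕ} (F : (V → Fin k) → ℝ) (N : Finset V) :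
    (Fintype.card (V → Fin k) : ℝ) * ∑ σ, F σ
      = ∑ σ : V → Fin k, ∑ f : V → Fin k, F (N.piecewise f σ) := by
  have e : Function.Involutive (fun p : (V → Fin k) × (V → Fin k) =>
      (N.piecewise p.2 p.1, N.piecewise p.1 p.2)) := by
    rintro ⟨σ, c⟩
    ext x <;> by_cases h : x ∈ N <;> simp [h]
  rw [← Fintype.sum_prod_type' (f := fun σ f => F (N.piecewise f σ))]
  rw [← Equiv.sum_comp (e.toPerm _)]
  have : ∀ p : (V → Fin k) × (V → Fin k), N.piecewise ((e.toPerm _) p).2 ((e.toPerm _) p).1 = p.1 := by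
    rintro ⟨σ, c⟩
    ext x ; by_cases h : x ∈ N <;> simp [h]
  simp only [this]
  rw [Fintype.sum_prod_type]
  simp [mul_sum]

/-- indicator that f takes values in the lists on T -/
noncomputable def W {V : Type} {k : ℕ} (L : V → Finset (Fin k)) (T : Finset V) (f : V → Fin k) : ℝ :=
  ∏ u ∈ T, if f u ∈ L u then 1 else 0

lemma W_nonneg {V : Type} {k : ℕ} (L : V → Finset (Fin k)) (T : Finset V) (f : V → Fin k) :
    0 ≤ W L T f := prod_nonneg (by intros; split_ifs <;> simp)

/-- probability that colour c is missed -/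
noncomputable def q {V : Type} {k : ℕ} (L : V → Finset (Fin k)) (T : Finset V) (c : Fin k) : ℝ :=
  ∏ u ∈ T, if c ∈ L u then 1 - 1 / ((L u).card : ℝ) else 1

lemma q_nonneg {V : Type} {k : ℕ} (L : V → Finset (Fin k)) (T : Finset V) (c : Fin k) :
    0 ≤ q L T c := prod_nonneg (by
      intro u _; split_ifs
      · have := Nat.cast_inv_le_one (α := ℝ) (L u).card
        simpa using this
      · simp)

lemma q_le_one {V : Type} {k : ℕ} (L : V → Finset (Fin k)) (T : Finset V) (c : Fin k) :
    q L T c ≤ 1 := prod_le_one (by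
      intro u _; split_ifs
      · have := Nat.cast_inv_le_one (α := ℝ) (L u).card
        simpa using this
      · simp) (by intro u _; split_ifs <;> simp)

lemma W_insert {V : Type} {k : ℕ} (L : V → Finset (Fin k)) {T : Finset V} {u : V} (hu : u ∉ T)
    (f : V → Fin k) (x : Fin k) :
    W L (insert u T) (Function.update f u x) = (if x ∈ L u then 1 else 0) * W L T f := by
  unfold W
  rw [prod_insert hu]
  congr 1
  · simp
  · apply prod_congr rfl
    intro w hw
    have : w ≠ u := by rintro rfl; exact hu hw
    simp [this]

lemma W_sum_insert {V : Type} [Fintype V] {k : ℕ} (L : V → Finset (Fin k)) {T : Finset V} {u : V}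
    (hu : u ∉ T) : (k : ℝ) * ∑ f, W L (insert u T) f = (L u).card * ∑ f, W L T f := by
  rw [avg1 _ u]
  simp only [W_insert L hu]
  simp [mul_sum]

lemma one_add_sum_le {ι : Type} (s : Finset ι) (r : ι → ℝ) (h : ∀ i ∈ s, 0 ≤ r i) :
    1 + ∑ i ∈ s, r i ≤ ∏ i ∈ s, (1 + r i) := by
  induction s using Finset.induction_on with
  | empty => simp
  | insert a s ha ih =>
    rw [sum_insert ha, prod_insert ha]
    have h1 := ih (fun i hi => h i (mem_insert_of_mem hi))
    have h2 := h a (mem_insert_self _ _)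
    have h3 : 0 ≤ ∑ i ∈ s, r i := sum_nonneg (fun i hi => h i (mem_insert_of_mem hi))
    nlinarith [mul_nonneg h2 h3]

lemma alg (z q n : ℝ) (h : 1 - z * q ≠ 0) (hn : n ≠ 0) :
    1 - z * ((1 - 1 / n) * q) = (1 - z * q) * (1 + z * q / (1 - z * q) / n) := by
  field_simp
  ring

lemma alg2 (z q n S Q : ℝ) (h : 1 - z * q ≠ 0) (hn : n ≠ 0) :
    S * (Q / (1 - z * q)) = S * Q * (1 + n * (z * q / (1 - z * q) / n)) := by
  field_simp
  ring

set_option maxHeartbeats 1000000 in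
lemma negassoc {V : Type} [Fintype V] {k : ℕ} (hk : 0 < k) (L : V → Finset (Fin k)) (T : Finset V) :
    (∀ u ∈ T, (L u).Nonempty) → ∀ (z : Fin k → ℝ), (∀ c, 0 ≤ z c) → (∀ c, z c < 1) →
    ∑ f : V → Fin k, W L T f * ∏ c, (if ∃ u ∈ T, f u = c then 1 else 1 - z c) ≤
      (∑ f : V → Fin k, W L T f) * ∏ c, (1 - z c * q L T c) := by
  have hk' : (0 : ℝ) < k := by exact_mod_cast hk
  induction T using Finset.induction_on with
  | empty => intro _ z _ _; simp [q, sum_mul]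
  | insert u T hu ih =>
    intro hL z z0 z1
    have hLT : ∀ w ∈ T, (L w).Nonempty := fun w hw => hL w (mem_insert_of_mem hw)
    have hLu : (0:ℝ) < (L u).card := by exact_mod_cast (hL u (mem_insert_self _ _)).card_pos
    have hzq : ∀ c, 0 < 1 - z c * q L T c := by
      intro c
      have := q_nonneg L T c
      have := q_le_one L T c
      nlinarith [z0 c, z1 c]
    refine le_of_mul_le_mul_left ?_ hk'
    rw [← mul_assoc, W_sum_insert L hu, avg1 _ u]
    simp only [W_insert L hu]
    rw [sum_comm]
    set Q := ∏ c, (1 - z c * q L T c) with hQ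
    have hQ0 : 0 < Q := prod_pos (fun c _ => hzq c)
    set S := ∑ f : V → Fin k, W L T f with hS
    have hS0 : 0 ≤ S := sum_nonneg (fun f _ => W_nonneg L T f)
    have step : ∀ x : Fin k, ∑ f : V → Fin k, (if x ∈ L u then (1:ℝ) else 0) * W L T f *
        ∏ c, (if ∃ w ∈ insert u T, Function.update f u x w = c then 1 else 1 - z c) ≤
        if x ∈ L u then S * (Q / (1 - z x * q L T x)) else 0 := by
      intro x
      split_ifs with hx
      swap
      · simp
      have h1 := ih hLT (Function.update z x 0) (by
          intro c; by_cases h : c = x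
          · subst h; simp
          · simp [h, z0]) (by
          intro c; by_cases h : c = x
          · subst h; simp
          · simp [h, z1])
      refine le_trans (le_of_eq ?_) (le_trans h1 (le_of_eq ?_))
      · apply sum_congr rfl
        intro f _
        rw [one_mul]
        congr 1
        apply prod_congr rfl
        intro c _
        have hiff : (∃ w ∈ insert u T, Function.update f u x w = c) ↔ (c = x ∨ ∃ w ∈ T, f w = c) := by
          simp only [mem_insert, exists_eq_or_imp, Function.update_self]
          refine or_congr eq_comm (exists_congr fun w => and_congr_right fun hw => ?_)
          have : w ≠ u := by rintro rfl; exact hu hw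
          simp [this]
        simp only [hiff]
        by_cases h : c = x
        · subst h; simp
        · simp [h]
      · congr 1
        rw [eq_div_iff (hzq x).ne', hQ, ← mul_prod_erase univ _ (mem_univ x),
          ← mul_prod_erase univ _ (mem_univ x)]
        simp only [Function.update_self, zero_mul, sub_zero, one_mul]
        rw [mul_comm]
        congr 1
        apply prod_congr rfl
        intro c hc
        rw [Function.update_of_ne (ne_of_mem_erase hc)]
    refine (sum_le_sum fun x _ => step x).trans ?_
    rw [← sum_filter]
    simp only [filter_mem_eq_inter, univ_inter]
    set r : Fin k → ℝ := fun x => z x * q L T x / (1 - z x * q L T x) / (L u).card with hr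
    have hr0 : ∀ x, 0 ≤ r x := fun x =>
      div_nonneg (div_nonneg (mul_nonneg (z0 x) (q_nonneg L T x)) (hzq x).le) hLu.le
    have h2 : ∏ c, (1 - z c * q L (insert u T) c) = Q * ∏ c ∈ L u, (1 + r c) := by
      rw [hQ, ← prod_filter_mul_prod_filter_not univ (fun c => c ∈ L u),
        ← prod_filter_mul_prod_filter_not univ (fun c => c ∈ L u) (fun c => 1 - z c * q L T c)]
      simp only [filter_mem_eq_inter, univ_inter]
      rw [mul_right_comm, ← prod_mul_distrib]
      congr 1
      · apply prod_congr rfl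
        intro c hc
        have := (hzq c).ne'
        rw [show q L (insert u T) c = (1 - 1 / ((L u).card : ℝ)) * q L T c by
          unfold q; rw [prod_insert hu, if_pos hc]]
        exact alg _ _ _ this hLu.ne'
      · apply prod_congr rfl
        intro c hc
        simp only [mem_filter] at hc
        simp only [q]
        rw [prod_insert hu]
        simp [hc.2]
    rw [h2]
    have h3 := one_add_sum_le (L u) r (fun i _ => hr0 i)
    have h4 : ∑ x ∈ L u, S * (Q / (1 - z x * q L T x)) = (L u).card * S * (Q * (1 + ∑ x ∈ L u, r x)) := by
      have : ∀ x ∈ L u, S * (Q / (1 - z x * q L T x)) = S * Q * (1 + (L u).card * r x) := by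
        intro x _
        have := (hzq x).ne'
        exact alg2 _ _ _ _ _ this hLu.ne'
      rw [sum_congr rfl this, ← mul_sum, sum_add_distrib, ← mul_sum]
      simp
      ring
    rw [h4]
    gcongr
end TF

namespace TF
open Finset Classical

lemma chernoff {V : Type} [Fintype V] {k : ℕ} (hk : 0 < k) (L : V → Finset (Fin k)) (T : Finset V)
    (hL : ∀ u ∈ T, (L u).Nonempty) (l : ℝ) (hq : l ≤ ∑ c, q L T c) (hl : 0 ≤ l)
    (δ : ℝ) (h0 : 0 < δ) (h1 : δ < 1) :
    ∑ f : V → Fin k, W L T f *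
      (if (((univ.filter (fun c => ∀ u ∈ T, f u ≠ c)).card : ℝ) < (1 - δ) * l) then 1 else 0) ≤
      Real.exp (-(δ ^ 2 * l) / 2) * ∑ f : V → Fin k, W L T f := by
  have hz0 : 0 ≤ 1 - Real.exp (-δ) := by
    have : Real.exp (-δ) ≤ 1 := Real.exp_le_one_iff.mpr (by linarith)
    linarith
  have hz1 : 1 - Real.exp (-δ) < 1 := by linarith [Real.exp_pos (-δ)]
  have hN := negassoc hk L T hL (fun _ => 1 - Real.exp (-δ)) (fun _ => hz0) (fun _ => hz1)
  have hS0 : 0 ≤ ∑ f : V → Fin k, W L T f := sum_nonneg (fun f _ => W_nonneg L T f)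
  have hpt : ∀ f : V → Fin k, W L T f *
      (if (((univ.filter (fun c => ∀ u ∈ T, f u ≠ c)).card : ℝ) < (1 - δ) * l) then 1 else 0) ≤
      Real.exp (δ * ((1 - δ) * l)) * (W L T f * ∏ c, (if ∃ u ∈ T, f u = c then 1 else
        1 - (1 - Real.exp (-δ)))) := by
    intro f
    rw [mul_left_comm]
    refine mul_le_mul_of_nonneg_left ?_ (W_nonneg L T f)
    rw [prod_ite]
    simp only [prod_const_one, one_mul, sub_sub_cancel, prod_const]
    rw [← Real.exp_nat_mul, ← Real.exp_add]
    split_ifs with h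
    · apply Real.one_le_exp
      have : univ.filter (fun c => ¬ ∃ u ∈ T, f u = c) = univ.filter (fun c => ∀ u ∈ T, f u ≠ c) := by
        ext c; simp
      rw [this]
      nlinarith
    · exact (Real.exp_pos _).le
  refine (sum_le_sum fun f _ => hpt f).trans ?_
  rw [← mul_sum]
  refine (mul_le_mul_of_nonneg_left hN (Real.exp_pos _).le).trans ?_
  have hprod : ∏ c, (1 - (1 - Real.exp (-δ)) * q L T c) ≤ Real.exp (-((1 - Real.exp (-δ)) * l)) := by
    calc _ ≤ ∏ c, Real.exp (-((1 - Real.exp (-δ)) * q L T c)) := by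
            apply prod_le_prod
            · intro c _
              nlinarith [q_le_one L T c, q_nonneg L T c]
            · intro c _
              exact Real.one_sub_le_exp_neg _
      _ = Real.exp (-((1 - Real.exp (-δ)) * ∑ c, q L T c)) := by
            rw [← Real.exp_sum, mul_sum, sum_neg_distrib]
      _ ≤ _ := by
            apply Real.exp_le_exp.mpr
            nlinarith
  have hexp : Real.exp (-δ) ≤ 1 - δ + δ ^ 2 / 2 := by
    have := Real.quadratic_le_exp_of_nonneg h0.le
    rw [Real.exp_neg, inv_le_iff_one_le_mul₀ (Real.exp_pos _)]
    have h3 : 0 < 1 - δ + δ ^ 2 / 2 := by nlinarith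
    nlinarith [mul_le_mul_of_nonneg_left this h3.le, pow_pos h0 4]
  calc _ ≤ Real.exp (δ * ((1 - δ) * l)) * ((∑ f : V → Fin k, W L T f) *
        Real.exp (-((1 - Real.exp (-δ)) * l))) := by gcongr
    _ = Real.exp (δ * ((1 - δ) * l) + -((1 - Real.exp (-δ)) * l)) * ∑ f : V → Fin k, W L T f := by
        rw [Real.exp_add]; ring
    _ ≤ _ := by
        refine mul_le_mul_of_nonneg_right (Real.exp_le_exp.mpr ?_) hS0
        nlinarith [mul_le_mul_of_nonneg_right hexp hl]

lemma term_bound (t j : ℕ) (ht : 2 ≤ t) (hj : t ≤ j) :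
    Real.exp (-((t : ℝ) / (t - 1) * (1 / j))) ≤ 1 - 1 / (j : ℝ) := by
  have ht' : (2 : ℝ) ≤ t := by exact_mod_cast ht
  have hj' : (t : ℝ) ≤ j := by exact_mod_cast hj
  have hj0 : (0 : ℝ) < j := by linarith
  rw [Real.exp_neg]
  apply inv_le_of_inv_le₀
  · rw [sub_pos, div_lt_one hj0]; linarith
  refine le_trans ?_ (Real.add_one_le_exp _)
  rw [inv_le_iff_one_le_mul₀ (by rw [sub_pos, div_lt_one hj0]; linarith)]
  have h1 : (0 : ℝ) < t - 1 := by linarith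
  have : ((t : ℝ) / (t - 1) * (1 / j) + 1) * (1 - 1 / (j : ℝ)) - 1
      = (j - t) / ((t - 1) * j ^ 2) := by
    field_simp
    ring
  have h2 : 0 ≤ ((j : ℝ) - t) / ((t - 1) * j ^ 2) := div_nonneg (by linarith) (by positivity)
  linarith

lemma mu_bound {V : Type} [Fintype V] {k : ℕ} (hk : 0 < k) (L : V → Finset (Fin k)) (T : Finset V)
    (t Δ : ℕ) (ht : 2 ≤ t) (hT : T.card ≤ Δ)
    (hS : ((T.filter (fun u => (L u).card < t)).card : ℝ) ≤ k / (t : ℝ) ^ 2) :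
    (1 - 1 / (t : ℝ)) * k * Real.exp (-(((t : ℝ) / (t - 1)) ^ 2 * (Δ / k))) ≤ ∑ c, q L T c := by
  have ht' : (2 : ℝ) ≤ t := by exact_mod_cast ht
  have hk' : (0 : ℝ) < k := by exact_mod_cast hk
  have ht1 : (0 : ℝ) < t - 1 := by linarith
  set D := (T.filter (fun u => (L u).card < t)).biUnion L with hD
  have hDc : (D.card : ℝ) ≤ k / t := by
    have h1 : D.card ≤ (T.filter (fun u => (L u).card < t)).card * t := by
      apply card_biUnion_le_card_mul
      intro u hu
      exact (mem_filter.mp hu).2.le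
    have h2 : (D.card : ℝ) ≤ (T.filter (fun u => (L u).card < t)).card * t := by exact_mod_cast h1
    refine h2.trans ((mul_le_mul_of_nonneg_right hS (by linarith)).trans (le_of_eq ?_))
    field_simp
  set g : V → Fin k → ℝ := fun u c => if t ≤ (L u).card ∧ c ∈ L u then 1 / ((L u).card : ℝ) else 0
    with hg
  have hg0 : ∀ u c, 0 ≤ g u c := by
    intro u c; simp only [hg]; split_ifs <;> positivity
  set s : Fin k → ℝ := fun c => (t : ℝ) / (t - 1) * ∑ u ∈ T, g u c with hs
  have hs0 : ∀ c, 0 ≤ s c := fun c => mul_nonneg (by positivity) (sum_nonneg fun u _ => hg0 u c)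
  have hqs : ∀ c ∈ Dᶜ, Real.exp (-(s c)) ≤ q L T c := by
    intro c hc
    simp only [hs, q]
    rw [mul_sum, ← sum_neg_distrib, Real.exp_sum]
    apply prod_le_prod
    · intros; exact (Real.exp_pos _).le
    · intro u hu
      by_cases hcu : c ∈ L u
      · have : t ≤ (L u).card := by
          by_contra hlt
          rw [mem_compl] at hc
          exact hc (mem_biUnion.mpr ⟨u, mem_filter.mpr ⟨hu, by omega⟩, hcu⟩)
        simp only [hg, hcu, this, and_self, if_true]
        exact term_bound t _ ht this
      · simp [hg, hcu]
  have hsum : ∑ c, s c ≤ (t : ℝ) / (t - 1) * Δ := by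
    simp only [hs]
    rw [← mul_sum, sum_comm]
    refine mul_le_mul_of_nonneg_left ?_ (by positivity)
    calc ∑ u ∈ T, ∑ c, g u c ≤ ∑ u ∈ T, (1 : ℝ) := by
          apply sum_le_sum
          intro u _
          simp only [hg]
          by_cases h : t ≤ (L u).card
          · have : ((L u).card : ℝ) ≠ 0 := by
              have : 0 < (L u).card := by omega
              positivity
            simp [h, this]
          · simp [h]
      _ ≤ Δ := by simpa using hT
  set s0 : ℝ := ((t : ℝ) / (t - 1)) ^ 2 * (Δ / k) with hs0'
  have hkc : (1 - 1 / (t : ℝ)) * k ≤ (Dᶜ.card : ℝ) := by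
    rw [card_compl, Nat.cast_sub (card_le_univ _), Fintype.card_fin]
    have : (1 - 1 / (t : ℝ)) * k = k - k / t := by ring
    linarith
  have hs00 : 0 ≤ s0 := by positivity
  have hks : (t : ℝ) / (t - 1) * Δ ≤ (Dᶜ.card : ℝ) * s0 := by
    refine le_trans (le_of_eq ?_) (mul_le_mul_of_nonneg_right hkc hs00)
    simp only [hs0']
    field_simp
  calc _ ≤ (Dᶜ.card : ℝ) * Real.exp (-s0) := by gcongr
    _ ≤ ∑ c ∈ Dᶜ, Real.exp (-s0) * (1 - (s c - s0)) := by
        rw [← mul_sum, sum_sub_distrib, sum_sub_distrib]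
        simp only [sum_const, nsmul_eq_mul, mul_one]
        have : ∑ c ∈ Dᶜ, s c ≤ ∑ c, s c :=
          sum_le_sum_of_subset_of_nonneg (subset_univ _) (fun c _ _ => hs0 c)
        rw [mul_comm]
        refine mul_le_mul_of_nonneg_left ?_ (Real.exp_pos _).le
        linarith
    _ ≤ ∑ c ∈ Dᶜ, q L T c := by
        apply sum_le_sum
        intro c hc
        refine le_trans ?_ (hqs c hc)
        have : Real.exp (-(s c)) = Real.exp (-s0) * Real.exp (-(s c - s0)) := by
          rw [← Real.exp_add]; ring_nf
        rw [this]
        exact mul_le_mul_of_nonneg_left (Real.one_sub_le_exp_neg _) (Real.exp_pos _).le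
    _ ≤ _ := sum_le_sum_of_subset_of_nonneg (subset_univ _) (fun c _ _ => q_nonneg L T c)
end TF

namespace TF
open Finset Classical

/-- indicator -/
noncomputable def I (p : Prop) : ℝ := if p then 1 else 0

lemma I_nonneg (p : Prop) : 0 ≤ I p := by unfold I; split_ifs <;> simp
lemma I_le_one (p : Prop) : I p ≤ 1 := by unfold I; split_ifs <;> simp
lemma I_and (p r : Prop) : I (p ∧ r) = I p * I r := by
  unfold I; by_cases p <;> by_cases r <;> simp [*]

section
variable {V : Type} [Fintype V] {k : ℕ}

/-- properness on S -/
def PR (G : SimpleGraph V) (S : Finset V) (σ : V → Fin k) : Prop :=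
  ∀ a ∈ S, ∀ b ∈ S, G.Adj a b → σ a ≠ σ b

/-- list of available colours -/
noncomputable def lst (G : SimpleGraph V) (R : Finset V) (σ : V → Fin k) (u : V) : Finset (Fin k) :=
  univ.filter (fun c => ∀ w ∈ R, G.Adj u w → σ w ≠ c)

/-- number of proper colourings -/
noncomputable def Z (k : ℕ) (G : SimpleGraph V) (S : Finset V) : ℝ :=
  ∑ σ : V → Fin k, I (PR G S σ)

lemma Z_nonneg (G : SimpleGraph V) (S : Finset V) : 0 ≤ Z k G S := sum_nonneg fun _ _ => I_nonneg _

lemma PR_insert (G : SimpleGraph V) {S : Finset V} {v : V} (hv : v ∉ S) (σ : V → Fin k) (c : Fin k) :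
    PR G (insert v S) (Function.update σ v c) ↔ PR G S σ ∧ c ∈ lst G S σ v := by
  have hne : ∀ a ∈ S, a ≠ v := fun a ha h => hv (h ▸ ha)
  simp only [PR, lst, mem_filter, mem_univ, true_and]
  constructor
  · intro h
    refine ⟨fun a ha b hb hab => ?_, fun w hw hvw => ?_⟩
    · have := h a (mem_insert_of_mem ha) b (mem_insert_of_mem hb) hab
      simpa [hne a ha, hne b hb] using this
    · have := h w (mem_insert_of_mem hw) v (mem_insert_self _ _) hvw.symm
      simpa [hne w hw] using this
  · rintro ⟨h1, h2⟩ a ha b hb hab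
    rcases mem_insert.mp ha with rfl | ha' <;> rcases mem_insert.mp hb with rfl | hb'
    · exact absurd hab (G.loopless.irrefl _)
    · simpa [hne b hb'] using (h2 b hb' hab).symm
    · simpa [hne a ha'] using (h2 a ha' hab.symm)
    · simpa [hne a ha', hne b hb'] using h1 a ha' b hb' hab

lemma sum_I_mem (A : Finset (Fin k)) : ∑ c, I (c ∈ A) = A.card := by
  have : ∀ c, I (c ∈ A) = if c ∈ A then 1 else 0 := by
    intro c; by_cases h : c ∈ A <;> simp [I, h]
  simp [this]

lemma sum_insert_avg (G : SimpleGraph V) {S : Finset V} {v : V} (hv : v ∉ S)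
    (J : (V → Fin k) → ℝ) (hJ : ∀ σ c, J (Function.update σ v c) = J σ) :
    (k : ℝ) * ∑ σ, I (PR G (insert v S) σ) * J σ =
      ∑ σ, I (PR G S σ) * (lst G S σ v).card * J σ := by
  rw [avg1 _ v]
  apply sum_congr rfl
  intro σ _
  simp only [PR_insert G hv, hJ, I_and]
  rw [← sum_mul, ← mul_sum, sum_I_mem]

set_option linter.unusedSectionVars false in
lemma tf (G : SimpleGraph V) (hG : G.CliqueFree 3) {v a b : V} (h1 : G.Adj v a) (h2 : G.Adj v b) :
    ¬ G.Adj a b := by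
  intro h
  exact hG {v, a, b} (SimpleGraph.is3Clique_triple_iff.mpr ⟨h1, h2, h⟩)

lemma PR_split (G : SimpleGraph V) (R N : Finset V) (hN : N ⊆ R) (σ : V → Fin k) :
    PR G R σ ↔ PR G (R \ N) σ ∧ ∀ u ∈ N, σ u ∈ lst G R σ u := by
  simp only [PR, lst, mem_filter, mem_univ, true_and]
  constructor
  · intro h
    refine ⟨fun a ha b hb => h a (mem_sdiff.mp ha).1 b (mem_sdiff.mp hb).1, fun u hu w hw huw => ?_⟩
    exact (h u (hN hu) w hw huw).symm
  · rintro ⟨h1, h2⟩ a ha b hb hab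
    by_cases haN : a ∈ N
    · exact (h2 a haN b hb hab).symm
    by_cases hbN : b ∈ N
    · exact h2 b hbN a ha hab.symm
    exact h1 a (mem_sdiff.mpr ⟨ha, haN⟩) b (mem_sdiff.mpr ⟨hb, hbN⟩) hab

lemma I_forall (L : V → Finset (Fin k)) (T : Finset V) (f : V → Fin k) :
    I (∀ u ∈ T, f u ∈ L u) = W L T f := by
  unfold I W
  rw [prod_ite_zero]
  simp

lemma few_part (hk : 0 < k) (G : SimpleGraph V) (hG : G.CliqueFree 3) (R : Finset V) (v : V)
    (N : Finset V) (hN : N = R.filter (G.Adj v)) (t Δ : ℕ) (ht : 2 ≤ t) (hΔ : N.card ≤ Δ) (l : ℝ) (hl : 0 ≤ l)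
    (N4 : l ≤ (1 - 1 / (t : ℝ)) * k * Real.exp (-(((t : ℝ) / (t - 1)) ^ 2 * (Δ / k))))
    (δ : ℝ) (h0 : 0 < δ) (h1 : δ < 1) :
    ∑ σ : V → Fin k, I (PR G R σ) *
      (I (((N.filter (fun u => (lst G R σ u).card < t)).card : ℝ) ≤ k / (t : ℝ) ^ 2) *
        I (((lst G R σ v).card : ℝ) < (1 - δ) * l)) ≤
    Real.exp (-(δ ^ 2 * l) / 2) * Z k G R := by
  have hNR : N ⊆ R := by rw [hN]; exact filter_subset _ _
  have hadj : ∀ u ∈ N, G.Adj v u := by intro u hu; rw [hN] at hu; exact (mem_filter.mp hu).2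
  have e1 : ∀ σ f : V → Fin k, ∀ u ∈ N, lst G R (N.piecewise f σ) u = lst G R σ u := by
    intro σ f u hu
    unfold lst
    apply filter_congr
    intro c _
    refine forall₃_congr fun w hw huw => ?_
    have : w ∉ N := fun hwN => tf G hG (hadj u hu) (hadj w hwN) huw
    simp [this]
  have e2 : ∀ σ f : V → Fin k, PR G (R \ N) (N.piecewise f σ) ↔ PR G (R \ N) σ := by
    intro σ f
    refine forall₂_congr fun a ha => forall₃_congr fun b hb _ => ?_
    simp [(mem_sdiff.mp ha).2, (mem_sdiff.mp hb).2]
  have e3 : ∀ σ f : V → Fin k, lst G R (N.piecewise f σ) v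
      = univ.filter (fun c => ∀ u ∈ N, f u ≠ c) := by
    intro σ f
    unfold lst
    apply filter_congr
    intro c _
    constructor
    · intro h u hu
      have := h u (hNR hu) (hadj u hu)
      simpa [hu] using this
    · intro h w hw hvw
      have hwN : w ∈ N := by rw [hN]; exact mem_filter.mpr ⟨hw, hvw⟩
      simpa [hwN] using h w hwN
  have e4 : ∀ σ f : V → Fin k, I (PR G R (N.piecewise f σ)) =
      I (PR G (R \ N) σ) * W (lst G R σ) N f := by
    intro σ f
    rw [← I_forall, ← I_and]
    congr 1
    rw [PR_split G R N hNR, e2]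
    apply propext
    refine and_congr_right fun _ => forall₂_congr fun u hu => ?_
    rw [e1 σ f u hu]
    simp [hu]
  have e5 : ∀ σ f : V → Fin k, N.filter (fun u => (lst G R (N.piecewise f σ) u).card < t)
      = N.filter (fun u => (lst G R σ u).card < t) := by
    intro σ f
    apply filter_congr
    intro u hu
    rw [e1 σ f u hu]
  have : Nonempty (V → Fin k) := ⟨fun _ => ⟨0, hk⟩⟩
  have hcard : (0 : ℝ) < Fintype.card (V → Fin k) := by exact_mod_cast Fintype.card_pos
  refine le_of_mul_le_mul_left ?_ hcard
  unfold Z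
  rw [mul_left_comm, avgN _ N, avgN _ N, mul_sum]
  apply sum_le_sum
  intro σ _
  simp only [e3, e4, e5]
  by_cases hfew : ((N.filter (fun u => (lst G R σ u).card < t)).card : ℝ) ≤ k / (t : ℝ) ^ 2
  swap
  · have : I (((N.filter (fun u => (lst G R σ u).card < t)).card : ℝ) ≤ k / (t : ℝ) ^ 2) = 0 := by
      simp [I, hfew]
    simp only [this, zero_mul, mul_zero, sum_const_zero]
    exact mul_nonneg (Real.exp_pos _).le (sum_nonneg fun f _ => mul_nonneg (I_nonneg _) (W_nonneg _ _ _))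
  have hI : I (((N.filter (fun u => (lst G R σ u).card < t)).card : ℝ) ≤ k / (t : ℝ) ^ 2) = 1 := by
    simp [I, hfew]
  simp only [hI, one_mul, mul_assoc]
  rw [← mul_sum, ← mul_sum, mul_left_comm]
  refine mul_le_mul_of_nonneg_left ?_ (I_nonneg _)
  by_cases hne : ∀ u ∈ N, (lst G R σ u).Nonempty
  · exact chernoff hk (lst G R σ) N hne l (N4.trans (mu_bound hk _ N t Δ ht hΔ hfew)) hl δ h0 h1
  · push Not at hne
    obtain ⟨u, hu, hue⟩ := hne
    have : ∀ f, W (lst G R σ) N f = 0 := by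
      intro f
      exact prod_eq_zero hu (by simp [hue])
    simp [this]

lemma joint_a (hk : 0 < k) (G : SimpleGraph V) (hG : G.CliqueFree 3) (R : Finset V) (v : V)
    (t : ℕ) (S : Finset V) (hS : S ⊆ R.filter (G.Adj v)) (S' : Finset V) (hS' : S' ⊆ S) :
    (k : ℝ) ^ S'.card * ∑ σ : V → Fin k, I (PR G R σ) * ∏ u ∈ S, I ((lst G R σ u).card < t) ≤
      (t : ℝ) ^ S'.card * ∑ σ : V → Fin k, I (PR G (R \ S') σ) * ∏ u ∈ S, I ((lst G R σ u).card < t) := by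
  induction S' using Finset.induction_on with
  | empty => simp
  | insert u S' hu ih =>
    have hadj : ∀ u ∈ S, G.Adj v u := fun u hu => (mem_filter.mp (hS hu)).2
    have huS : u ∈ S := hS' (mem_insert_self _ _)
    have huR : u ∈ R := (mem_filter.mp (hS huS)).1
    have ih := ih ((subset_insert _ _).trans hS')
    rw [card_insert_of_notMem hu, pow_succ', pow_succ', mul_assoc, mul_assoc]
    have hRS : R \ S' = insert u (R \ insert u S') := by
      ext x; simp only [mem_sdiff, mem_insert]
      by_cases hx : x = u
      · subst hx; simp [huR, hu]
      · simp [hx]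
    have hun : u ∉ R \ insert u S' := by simp
    have hst : (k : ℝ) * ∑ σ : V → Fin k, I (PR G (R \ S') σ) * ∏ u ∈ S, I ((lst G R σ u).card < t) ≤
        t * ∑ σ : V → Fin k, I (PR G (R \ insert u S') σ) * ∏ u ∈ S, I ((lst G R σ u).card < t) := by
      rw [hRS, sum_insert_avg G hun, mul_sum]
      · apply sum_le_sum
        intro σ _
        have hlst : lst G (R \ insert u S') σ u = lst G R σ u := by
          unfold lst
          apply filter_congr
          intro c _
          constructor
          · intro h w hw huw
            refine h w (mem_sdiff.mpr ⟨hw, fun hwS => ?_⟩) huw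
            exact tf G hG (hadj u huS) (hadj w (hS' hwS)) huw
          · intro h w hw huw
            exact h w (mem_sdiff.mp hw).1 huw
        rw [hlst, mul_right_comm, mul_comm (t : ℝ)]
        by_cases hlt : (lst G R σ u).card < t
        · have : ((lst G R σ u).card : ℝ) ≤ t := by exact_mod_cast hlt.le
          exact mul_le_mul_of_nonneg_left this
            (mul_nonneg (I_nonneg _) (prod_nonneg fun _ _ => I_nonneg _))
        · have : ∏ u ∈ S, I ((lst G R σ u).card < t) = 0 := prod_eq_zero huS (by simp [I, hlt])
          simp [this]
      · intro σ c
        apply prod_congr rfl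
        intro w hw
        have : lst G R (Function.update σ u c) w = lst G R σ w := by
          unfold lst
          apply filter_congr
          intro c' _
          refine forall₃_congr fun x hx hwx => ?_
          have : x ≠ u := by
            rintro rfl
            exact tf G hG (hadj w hw) (hadj x huS) hwx
          simp [this]
        rw [this]
    calc _ = (k : ℝ) ^ S'.card * (∑ σ : V → Fin k, I (PR G R σ) * ∏ u ∈ S, I ((lst G R σ u).card < t)) * k := by ring
      _ ≤ (t : ℝ) ^ S'.card * (∑ σ : V → Fin k, I (PR G (R \ S') σ) * ∏ u ∈ S, I ((lst G R σ u).card < t)) * k :=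
        mul_le_mul_of_nonneg_right ih (by positivity)
      _ = (t : ℝ) ^ S'.card * (k * ∑ σ : V → Fin k, I (PR G (R \ S') σ) * ∏ u ∈ S, I ((lst G R σ u).card < t)) := by ring
      _ ≤ (t : ℝ) ^ S'.card * (t * ∑ σ : V → Fin k, I (PR G (R \ insert u S') σ) * ∏ u ∈ S, I ((lst G R σ u).card < t)) :=
        mul_le_mul_of_nonneg_left hst (by positivity)
      _ = _ := by ring

lemma joint_b (G : SimpleGraph V) (R : Finset V) (l : ℝ) (hl : 0 ≤ l)
    (ih : ∀ R' : Finset V, R'.card < R.card → ∀ u ∉ R', l / 4 * Z k G R' ≤ k * Z k G (insert u R'))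
    (S : Finset V) (hS : S ⊆ R) :
    (l / 4) ^ S.card * Z k G (R \ S) ≤ (k : ℝ) ^ S.card * Z k G R := by
  induction S using Finset.induction_on with
  | empty => simp
  | insert u S hu ih2 =>
    have ih2 := ih2 ((subset_insert _ _).trans hS)
    have huR : u ∈ R := hS (mem_insert_self _ _)
    have hRS : R \ S = insert u (R \ insert u S) := by
      ext x; simp only [mem_sdiff, mem_insert]
      by_cases hx : x = u
      · subst hx; simp [huR, hu]
      · simp [hx]
    have h1 := ih (R \ insert u S) (by
      apply card_lt_card
      refine ⟨sdiff_subset, fun h => ?_⟩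
      have := h huR
      simp at this) u (by simp)
    rw [← hRS] at h1
    rw [card_insert_of_notMem hu]
    calc _ = (l / 4) ^ S.card * (l / 4 * Z k G (R \ insert u S)) := by ring
      _ ≤ (l / 4) ^ S.card * (k * Z k G (R \ S)) := mul_le_mul_of_nonneg_left h1 (by positivity)
      _ = ((l / 4) ^ S.card * Z k G (R \ S)) * k := by ring
      _ ≤ (k : ℝ) ^ S.card * Z k G R * k := mul_le_mul_of_nonneg_right ih2 (by positivity)
      _ = _ := by ring

lemma joint (hk : 0 < k) (G : SimpleGraph V) (hG : G.CliqueFree 3) (R : Finset V) (v : V)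
    (t : ℕ) (l : ℝ) (hl : 0 < l)
    (ih : ∀ R' : Finset V, R'.card < R.card → ∀ u ∉ R', l / 4 * Z k G R' ≤ k * Z k G (insert u R'))
    (S : Finset V) (hS : S ⊆ R.filter (G.Adj v)) :
    ∑ σ : V → Fin k, I (PR G R σ) * ∏ u ∈ S, I ((lst G R σ u).card < t) ≤
      (4 * t / l) ^ S.card * Z k G R := by
  have hk' : (0 : ℝ) < k := by exact_mod_cast hk
  have ha := joint_a hk G hG R v t S hS S (Subset.refl _)
  have hb := joint_b G R l hl.le ih S (hS.trans (filter_subset _ _))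
  have hc : ∑ σ : V → Fin k, I (PR G (R \ S) σ) * ∏ u ∈ S, I ((lst G R σ u).card < t) ≤ Z k G (R \ S) := by
    apply sum_le_sum
    intro σ _
    exact mul_le_of_le_one_right (I_nonneg _) (prod_le_one (fun _ _ => I_nonneg _) (fun _ _ => I_le_one _))
  set X := ∑ σ : V → Fin k, I (PR G R σ) * ∏ u ∈ S, I ((lst G R σ u).card < t)
  have h1 : (k : ℝ) ^ S.card * X ≤ (t : ℝ) ^ S.card * Z k G (R \ S) :=
    ha.trans (mul_le_mul_of_nonneg_left hc (by positivity))
  have hkp : (0 : ℝ) < (k : ℝ) ^ S.card * (l / 4) ^ S.card := by positivity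
  refine le_of_mul_le_mul_left ?_ hkp
  calc _ = ((k : ℝ) ^ S.card * X) * (l / 4) ^ S.card := by ring
    _ ≤ ((t : ℝ) ^ S.card * Z k G (R \ S)) * (l / 4) ^ S.card :=
      mul_le_mul_of_nonneg_right h1 (by positivity)
    _ = (t : ℝ) ^ S.card * ((l / 4) ^ S.card * Z k G (R \ S)) := by ring
    _ ≤ (t : ℝ) ^ S.card * ((k : ℝ) ^ S.card * Z k G R) :=
      mul_le_mul_of_nonneg_left hb (by positivity)
    _ = _ := by
      have : (l / 4) ^ S.card * (4 * t / l) ^ S.card = (t : ℝ) ^ S.card := by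
        rw [← mul_pow]; congr 1; field_simp
      calc _ = (k : ℝ) ^ S.card * (t : ℝ) ^ S.card * Z k G R := by ring
        _ = (k : ℝ) ^ S.card * ((l / 4) ^ S.card * (4 * t / l) ^ S.card) * Z k G R := by rw [this]
        _ = _ := by ring

lemma notfew (hk : 0 < k) (G : SimpleGraph V) (hG : G.CliqueFree 3) (R : Finset V) (v : V)
    (N : Finset V) (hN : N = R.filter (G.Adj v))
    (t Δ : ℕ) (ht : 2 ≤ t) (hΔ : N.card ≤ Δ) (l : ℝ) (hl : 0 < l)
    (ih : ∀ R' : Finset V, R'.card < R.card → ∀ u ∉ R', l / 4 * Z k G R' ≤ k * Z k G (insert u R'))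
    (N2 : 16 * (t : ℝ) ^ 3 * Δ ≤ k * l) (N3 : l ≤ k / (t : ℝ) ^ 2) :
    ∑ σ : V → Fin k, I (PR G R σ) *
      I (¬ ((N.filter (fun u => (lst G R σ u).card < t)).card : ℝ) ≤ k / (t : ℝ) ^ 2) ≤
    Real.exp (-l / 2) * Z k G R := by
  have ht0 : (0 : ℝ) < t := by exact_mod_cast (by omega : 0 < t)
  have hpt : ∀ σ : V → Fin k,
      I (¬ ((N.filter (fun u => (lst G R σ u).card < t)).card : ℝ) ≤ k / (t : ℝ) ^ 2) ≤
      Real.exp (-(k / (t : ℝ) ^ 2)) * ∏ u ∈ N, (1 + 2 * I ((lst G R σ u).card < t)) := by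
    intro σ
    have h1 : ∏ u ∈ N, (1 + 2 * I ((lst G R σ u).card < t)) =
        3 ^ (N.filter (fun u => (lst G R σ u).card < t)).card := by
      rw [← prod_const, prod_filter]
      apply prod_congr rfl
      intro u _
      unfold I; split_ifs <;> norm_num
    rw [h1]
    set n := (N.filter (fun u => (lst G R σ u).card < t)).card
    unfold I
    split_ifs with h
    · positivity
    · have h2 : Real.exp (n : ℝ) ≤ 3 ^ n := by
        rw [← mul_one (n : ℝ), Real.exp_nat_mul]
        exact pow_le_pow_left₀ (Real.exp_pos _).le (Real.exp_one_lt_d9.le.trans (by norm_num)) _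
      calc (1 : ℝ) ≤ Real.exp (-(k / (t : ℝ) ^ 2)) * Real.exp n := by
            rw [← Real.exp_add]; apply Real.one_le_exp; linarith
        _ ≤ _ := mul_le_mul_of_nonneg_left h2 (Real.exp_pos _).le
  calc _ ≤ ∑ σ : V → Fin k, I (PR G R σ) *
        (Real.exp (-(k / (t : ℝ) ^ 2)) * ∏ u ∈ N, (1 + 2 * I ((lst G R σ u).card < t))) :=
        sum_le_sum fun σ _ => mul_le_mul_of_nonneg_left (hpt σ) (I_nonneg _)
    _ = Real.exp (-(k / (t : ℝ) ^ 2)) * ∑ S ∈ N.powerset, 2 ^ S.card *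
          ∑ σ : V → Fin k, I (PR G R σ) * ∏ u ∈ S, I ((lst G R σ u).card < t) := by
        simp only [mul_sum]
        rw [sum_comm]
        apply sum_congr rfl
        intro σ _
        rw [prod_one_add, mul_sum, mul_sum]
        apply sum_congr rfl
        intro S _
        rw [prod_mul_distrib, prod_const]
        ring
    _ ≤ Real.exp (-(k / (t : ℝ) ^ 2)) * ∑ S ∈ N.powerset, 2 ^ S.card *
          ((4 * t / l) ^ S.card * Z k G R) := by
        refine mul_le_mul_of_nonneg_left (sum_le_sum fun S hS => ?_) (Real.exp_pos _).le
        refine mul_le_mul_of_nonneg_left ?_ (by positivity)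
        exact joint hk G hG R v t l hl ih S (hN ▸ mem_powerset.mp hS)
    _ = Real.exp (-(k / (t : ℝ) ^ 2)) * ((1 + 8 * t / l) ^ N.card * Z k G R) := by
        congr 1
        rw [← prod_const, prod_one_add, sum_mul]
        apply sum_congr rfl
        intro S _
        rw [prod_const, ← mul_assoc, ← mul_pow]
        ring
    _ ≤ Real.exp (-(k / (t : ℝ) ^ 2)) * (Real.exp (Δ * (8 * t / l)) * Z k G R) := by
        refine mul_le_mul_of_nonneg_left (mul_le_mul_of_nonneg_right ?_ (Z_nonneg _ _)) (Real.exp_pos _).le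
        calc (1 + 8 * t / l) ^ N.card ≤ (1 + 8 * t / l) ^ Δ :=
              pow_le_pow_right₀ (by have : 0 ≤ 8 * t / l := by positivity
                                    linarith) hΔ
          _ ≤ Real.exp (8 * t / l) ^ Δ := by
              apply pow_le_pow_left₀ (by positivity)
              rw [add_comm]; exact Real.add_one_le_exp _
          _ = _ := by rw [← Real.exp_nat_mul]
    _ = Real.exp (-(k / (t : ℝ) ^ 2) + Δ * (8 * t / l)) * Z k G R := by
        rw [Real.exp_add]; ring
    _ ≤ _ := by
        refine mul_le_mul_of_nonneg_right (Real.exp_le_exp.mpr ?_) (Z_nonneg _ _)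
        have : (Δ : ℝ) * (8 * t / l) ≤ k / (t : ℝ) ^ 2 / 2 := by
          rw [div_div, mul_div_assoc', div_le_div_iff₀ hl (by positivity)]
          nlinarith
        linarith

lemma tail (hk : 0 < k) (G : SimpleGraph V) (hG : G.CliqueFree 3) (R : Finset V) (v : V)
    (t Δ : ℕ) (ht : 2 ≤ t) (hΔ : (R.filter (G.Adj v)).card ≤ Δ) (l : ℝ) (hl : 0 < l)
    (ih : ∀ R' : Finset V, R'.card < R.card → ∀ u ∉ R', l / 4 * Z k G R' ≤ k * Z k G (insert u R'))
    (N2 : 16 * (t : ℝ) ^ 3 * Δ ≤ k * l) (N3 : l ≤ k / (t : ℝ) ^ 2)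
    (N4 : l ≤ (1 - 1 / (t : ℝ)) * k * Real.exp (-(((t : ℝ) / (t - 1)) ^ 2 * (Δ / k))))
    (δ : ℝ) (h0 : 0 < δ) (h1 : δ < 1) :
    ∑ σ : V → Fin k, I (PR G R σ) * I (((lst G R σ v).card : ℝ) < (1 - δ) * l) ≤
      2 * Real.exp (-(δ ^ 2 * l) / 2) * Z k G R := by
  have hA := few_part hk G hG R v _ rfl t Δ ht hΔ l hl.le N4 δ h0 h1
  have hB := notfew hk G hG R v _ rfl t Δ ht hΔ l hl ih N2 N3
  have hC : Real.exp (-l / 2) * Z k G R ≤ Real.exp (-(δ ^ 2 * l) / 2) * Z k G R := by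
    refine mul_le_mul_of_nonneg_right (Real.exp_le_exp.mpr ?_) (Z_nonneg _ _)
    have : δ ^ 2 ≤ 1 := by nlinarith
    nlinarith
  have hD : ∑ σ : V → Fin k, I (PR G R σ) * I (((lst G R σ v).card : ℝ) < (1 - δ) * l) ≤
    ∑ σ : V → Fin k, I (PR G R σ) *
      (I ((((R.filter (G.Adj v)).filter (fun u => (lst G R σ u).card < t)).card : ℝ) ≤ k / (t : ℝ) ^ 2) *
        I (((lst G R σ v).card : ℝ) < (1 - δ) * l)) +
    ∑ σ : V → Fin k, I (PR G R σ) *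
      I (¬ (((R.filter (G.Adj v)).filter (fun u => (lst G R σ u).card < t)).card : ℝ) ≤ k / (t : ℝ) ^ 2) := by
    rw [← sum_add_distrib]
    apply sum_le_sum
    intro σ _
    rw [← mul_add]
    refine mul_le_mul_of_nonneg_left ?_ (I_nonneg _)
    generalize ((((R.filter (G.Adj v)).filter (fun u => (lst G R σ u).card < t)).card : ℝ) ≤ k / (t : ℝ) ^ 2) = p
    have := I_le_one (((lst G R σ v).card : ℝ) < (1 - δ) * l)
    by_cases hp : p
    · simp [I, hp]
    · have h1 : I p = 0 := by simp [I, hp]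
      have h2 : I (¬ p) = 1 := by simp [I, hp]
      rw [h1, h2]; linarith
  linarith

lemma growth (hk : 0 < k) (G : SimpleGraph V) (hG : G.CliqueFree 3)
    (t Δ : ℕ) (ht : 2 ≤ t) (hΔ : ∀ (R : Finset V) v, (R.filter (G.Adj v)).card ≤ Δ) (l : ℝ) (hl : 16 ≤ l)
    (N2 : 16 * (t : ℝ) ^ 3 * Δ ≤ k * l) (N3 : l ≤ k / (t : ℝ) ^ 2)
    (N4 : l ≤ (1 - 1 / (t : ℝ)) * k * Real.exp (-(((t : ℝ) / (t - 1)) ^ 2 * (Δ / k)))) :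
    ∀ (n : ℕ) (R : Finset V), R.card = n → ∀ v ∉ R, l / 4 * Z k G R ≤ k * Z k G (insert v R) := by
  intro n
  induction n using Nat.strong_induction_on with
  | _ n ih =>
  intro R hR v hv
  have hT := tail hk G hG R v t Δ ht (hΔ R v) l (by linarith)
    (fun R' hR' u hu => ih R'.card (hR ▸ hR') R' rfl u hu) N2 N3 N4 (1 / 2) (by norm_num) (by norm_num)
  have hS := sum_insert_avg (k := k) G hv (fun _ => 1) (fun _ _ => rfl)
  simp only [mul_one] at hS
  have hexp : Real.exp (-((1 / 2 : ℝ) ^ 2 * l) / 2) ≤ 1 / 4 := by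
    have h1 : -((1 / 2 : ℝ) ^ 2 * l) / 2 ≤ -2 := by linarith
    refine (Real.exp_le_exp.mpr h1).trans ?_
    rw [Real.exp_neg, inv_le_comm₀ (Real.exp_pos _) (by norm_num)]
    have : Real.exp 2 = Real.exp 1 * Real.exp 1 := by rw [← Real.exp_add]; norm_num
    rw [this]
    nlinarith [Real.exp_one_gt_d9]
  have hZ := Z_nonneg (k := k) G R
  have hpt : l / 2 * Z k G R - l / 2 * ∑ σ : V → Fin k, I (PR G R σ) * I (((lst G R σ v).card : ℝ) < (1 - 1 / 2) * l)
      ≤ ∑ σ : V → Fin k, I (PR G R σ) * (lst G R σ v).card := by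
    unfold Z
    rw [mul_sum, mul_sum, ← sum_sub_distrib]
    apply sum_le_sum
    intro σ _
    have : l / 2 - l / 2 * I (((lst G R σ v).card : ℝ) < (1 - 1 / 2) * l) ≤ (lst G R σ v).card := by
      unfold I
      split_ifs with h
      · simp
      · linarith
    nlinarith [I_nonneg (PR G R σ), mul_le_mul_of_nonneg_left this (I_nonneg (PR G R σ))]
  have hS' : (k : ℝ) * Z k G (insert v R) = _ := hS
  rw [hS']
  refine le_trans ?_ hpt
  have h5 : 2 * Real.exp (-((1 / 2 : ℝ) ^ 2 * l) / 2) * Z k G R ≤ 1 / 2 * Z k G R :=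
    mul_le_mul_of_nonneg_right (by linarith) hZ
  have h6 := mul_le_mul_of_nonneg_left (hT.trans h5) (by linarith : 0 ≤ l / 2)
  linarith
end
end TF

namespace TF
open Finset Classical

lemma sum_restrict {V : Type} [Fintype V] {k : ℕ} (v : V) (F : ({u : V // u ≠ v} → Fin k) → ℝ) :
    ∑ σ : V → Fin k, F (fun u => σ u.1) = k * ∑ τ, F τ := by
  rw [← Equiv.sum_comp (Equiv.funSplitAt v (Fin k)).symm, Fintype.sum_prod_type]
  have : ∀ (c : Fin k) (τ : {u : V // u ≠ v} → Fin k),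
      (fun u : {u : V // u ≠ v} => (Equiv.funSplitAt v (Fin k)).symm (c, τ) u.1) = τ := by
    intro c τ
    ext u
    simp [Equiv.funSplitAt, Equiv.piSplitAt, u.2]
  simp only [this]
  simp

lemma numerics (ε : ℝ) (hε0 : 0 < ε) (hε1 : ε < 1) :
    ∃ (t : ℕ) (Δ₀ : ℕ), 2 ≤ t ∧ ∀ Δ : ℕ, Δ₀ ≤ Δ → ∀ k : ℕ, (Δ : ℝ) ≤ (1 - ε) * k * Real.log k →
      0 < k ∧ 16 ≤ (Δ : ℝ) ^ (ε / 2) ∧ 16 * (t : ℝ) ^ 3 * Δ ≤ k * (Δ : ℝ) ^ (ε / 2) ∧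
      (Δ : ℝ) ^ (ε / 2) ≤ k / (t : ℝ) ^ 2 ∧
      (Δ : ℝ) ^ (ε / 2) ≤ (1 - 1 / (t : ℝ)) * k * Real.exp (-(((t : ℝ) / (t - 1)) ^ 2 * (Δ / k))) := by
  obtain ⟨t, ht⟩ : ∃ t : ℕ, 16 / ε + 2 ≤ t := exists_nat_ge _
  have h16 : 0 < 16 / ε := by positivity
  have ht2 : (2 : ℝ) ≤ t := by linarith
  have ht1 : (0 : ℝ) < t - 1 := by linarith
  have ev : ∀ a C : ℝ, 0 < a → ∀ᶠ n : ℕ in Filter.atTop, C ≤ (n : ℝ) ^ a := fun a C ha =>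
    ((tendsto_rpow_atTop ha).comp tendsto_natCast_atTop_atTop).eventually_ge_atTop C
  have hall := (ev (ε / 2) 16 (by linarith)).and <| (ev (3 * ε / 8) (16 * (t : ℝ) ^ 3) (by linarith)).and <|
    (ev (1 - 5 * ε / 8) ((t : ℝ) ^ 2) (by linarith)).and <|
    (ev (5 * ε / 32) 2 (by linarith)).and <| (ev (ε / 16) (16 / ε) (by linarith)).and
      (Filter.eventually_ge_atTop 1)
  obtain ⟨Δ₀, hΔ₀⟩ := Filter.eventually_atTop.mp hall
  refine ⟨t, Δ₀, by exact_mod_cast ht2, fun Δ hΔ k hk => ?_⟩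
  obtain ⟨E1, E2, E3, E4, E5, E6⟩ := hΔ₀ Δ hΔ
  have D1 : (1 : ℝ) ≤ Δ := by exact_mod_cast E6
  have D0 : (0 : ℝ) < Δ := by linarith
  generalize (Δ : ℝ) = D at *
  have hk0 : 0 < k := by
    rcases Nat.eq_zero_or_pos k with rfl | h
    · simp at hk; linarith
    · exact h
  have k1 : (1 : ℝ) ≤ k := by exact_mod_cast hk0
  have k0 : (0 : ℝ) < k := by linarith
  generalize (k : ℝ) = κ at *
  have hlog : 0 ≤ Real.log κ := Real.log_nonneg k1
  have hkD : D ^ (1 - ε / 8) ≤ κ := by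
    by_contra hlt
    push Not at hlt
    have h1 : Real.log κ ≤ κ ^ (ε / 16) / (ε / 16) := Real.log_le_rpow_div k0.le (by linarith)
    have h2 : D ≤ κ * Real.log κ := by nlinarith [mul_nonneg k0.le hlog]
    have h3 : D ≤ κ ^ (1 + ε / 16) / (ε / 16) := by
      rw [Real.rpow_add k0, Real.rpow_one, mul_div_assoc]
      exact h2.trans (mul_le_mul_of_nonneg_left h1 k0.le)
    have h4 : κ ^ (1 + ε / 16) < D ^ (1 - ε / 16) := by
      calc κ ^ (1 + ε / 16) < (D ^ (1 - ε / 8)) ^ (1 + ε / 16) :=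
            Real.rpow_lt_rpow k0.le hlt (by linarith)
        _ = D ^ ((1 - ε / 8) * (1 + ε / 16)) := by rw [Real.rpow_mul D0.le]
        _ ≤ D ^ (1 - ε / 16) := Real.rpow_le_rpow_of_exponent_le D1 (by nlinarith)
    have h5 : D ^ (1 - ε / 16) * D ^ (ε / 16) = D := by
      rw [← Real.rpow_add D0]; simp
    have h6 : 0 < D ^ (1 - ε / 16) := Real.rpow_pos_of_pos D0 _
    rw [le_div_iff₀ (by positivity)] at h3
    have h7 : D ^ (1 - ε / 16) * (16 / ε) ≤ D := by
      calc _ ≤ D ^ (1 - ε / 16) * D ^ (ε / 16) := mul_le_mul_of_nonneg_left E5 h6.le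
        _ = D := h5
    have h8 : D ^ (1 - ε / 16) * (16 / ε) * (ε / 16) = D ^ (1 - ε / 16) := by field_simp
    have h9 := mul_le_mul_of_nonneg_right h7 (by positivity : 0 ≤ ε / 16)
    linarith
  refine ⟨hk0, E1, ?_, ?_, ?_⟩
  · have : D * D ^ (3 * ε / 8) = D ^ (1 - ε / 8) * D ^ (ε / 2) := by
      rw [← Real.rpow_add D0]
      nth_rewrite 1 [← Real.rpow_one D]
      rw [← Real.rpow_add D0]; congr 1; ring
    calc _ ≤ D ^ (3 * ε / 8) * D := mul_le_mul_of_nonneg_right E2 D0.le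
      _ = D ^ (1 - ε / 8) * D ^ (ε / 2) := by rw [← this]; ring
      _ ≤ _ := mul_le_mul_of_nonneg_right hkD (by positivity)
  · rw [le_div_iff₀ (by positivity)]
    calc _ ≤ D ^ (ε / 2) * D ^ (1 - 5 * ε / 8) := mul_le_mul_of_nonneg_left E3 (by positivity)
      _ = D ^ (1 - ε / 8) := by rw [← Real.rpow_add D0]; congr 1; ring
      _ ≤ _ := hkD
  · have hr : ((t : ℝ) / (t - 1)) ^ 2 ≤ 1 + ε / 4 := by
      have : (t : ℝ) / (t - 1) ≤ 1 + ε / 16 := by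
        rw [div_le_iff₀ ht1]
        have : 16 / ε * ε = 16 := by field_simp
        nlinarith
      have h0 : 0 ≤ (t : ℝ) / (t - 1) := by positivity
      nlinarith
    have hDk : D / κ ≤ (1 - ε) * Real.log κ := by
      rw [div_le_iff₀ k0]; linarith
    have hex : ((t : ℝ) / (t - 1)) ^ 2 * (D / κ) ≤ (1 - 3 * ε / 4) * Real.log κ := by
      calc _ ≤ (1 + ε / 4) * ((1 - ε) * Real.log κ) :=
            mul_le_mul hr hDk (by positivity) (by linarith)
        _ ≤ _ := by nlinarith [mul_nonneg hlog (sq_nonneg ε)]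
    have hke : κ ^ (3 * ε / 4) ≤ κ * Real.exp (-(((t : ℝ) / (t - 1)) ^ 2 * (D / κ))) := by
      calc κ ^ (3 * ε / 4) = κ * Real.exp (-((1 - 3 * ε / 4) * Real.log κ)) := by
            rw [Real.rpow_def_of_pos k0]
            nth_rewrite 2 [← Real.exp_log k0]
            rw [← Real.exp_add]; congr 1; ring
        _ ≤ _ := mul_le_mul_of_nonneg_left (Real.exp_le_exp.mpr (by linarith)) k0.le
    have hD : 2 * D ^ (ε / 2) ≤ κ ^ (3 * ε / 4) := by
      calc 2 * D ^ (ε / 2) ≤ D ^ (5 * ε / 32) * D ^ (ε / 2) :=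
            mul_le_mul_of_nonneg_right E4 (by positivity)
        _ = D ^ (5 * ε / 32 + ε / 2) := by rw [← Real.rpow_add D0]
        _ ≤ D ^ ((1 - ε / 8) * (3 * ε / 4)) := Real.rpow_le_rpow_of_exponent_le D1 (by nlinarith)
        _ = (D ^ (1 - ε / 8)) ^ (3 * ε / 4) := by rw [Real.rpow_mul D0.le]
        _ ≤ _ := Real.rpow_le_rpow (by positivity) hkD (by linarith)
    have h12 : (1 : ℝ) / 2 ≤ 1 - 1 / (t : ℝ) := by
      have : 1 / (t : ℝ) ≤ 1 / 2 := one_div_le_one_div_of_le (by norm_num) ht2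
      linarith
    have hpos : 0 ≤ κ * Real.exp (-(((t : ℝ) / (t - 1)) ^ 2 * (D / κ))) := by positivity
    have := mul_le_mul_of_nonneg_right h12 hpos
    rw [mul_assoc]
    linarith
end TF


namespace TF
open Classical in
lemma final {V : Type} [Fintype V] {k : ℕ} (hk : 0 < k) (G : SimpleGraph V)
    (hG : G.CliqueFree 3)
    (t Δ : ℕ) (ht : 2 ≤ t)
    (hΔ : ∀ (R : Finset V) v, (R.filter (G.Adj v)).card ≤ Δ) (l : ℝ) (hl : 16 ≤ l)
    (N2 : 16 * (t : ℝ) ^ 3 * Δ ≤ k * l) (N3 : l ≤ k / (t : ℝ) ^ 2)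
    (N4 : l ≤ (1 - 1 / (t : ℝ)) * k * Real.exp (-(((t : ℝ) / (t - 1)) ^ 2 * (Δ / k))))
    (v : V) (δ : ℝ) (h0 : 0 < δ) (h1 : δ < 1) :
      ((Finset.univ.filter (fun σ : {u : V // u ≠ v} → Fin k =>
            (∀ a b : {u : V // u ≠ v}, G.Adj a.1 b.1 → σ a ≠ σ b) ∧
              ((Finset.univ.filter (fun c : Fin k =>
                ∀ u : {u : V // u ≠ v}, G.Adj u.1 v → σ u ≠ c)).card : ℝ) <
                (1 - δ) * l)).card : ℝ) /
          ((Finset.univ.filter (fun σ : {u : V // u ≠ v} → Fin k =>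
            ∀ a b : {u : V // u ≠ v}, G.Adj a.1 b.1 → σ a ≠ σ b)).card : ℝ) ≤
        2 * Real.exp (-(δ ^ 2 * l) / 2) := by
  have hk' : (0 : ℝ) < k := by exact_mod_cast hk
  have hT := tail hk G hG (Finset.univ.erase v) v t Δ ht (hΔ _ v) l (by linarith)
    (fun R' _ u hu => by
      convert growth hk G hG t Δ ht hΔ l hl N2 N3 N4 _ R' rfl u hu) N2 N3 N4 δ h0 h1
  have hp : ∀ σ : V → Fin k, PR G (Finset.univ.erase v) σ ↔
      ∀ a b : {u : V // u ≠ v}, G.Adj a.1 b.1 → σ a.1 ≠ σ b.1 := by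
    intro σ
    constructor
    · intro h a b
      exact h a.1 (by simpa using a.2) b.1 (by simpa using b.2)
    · intro h a ha b hb
      exact h ⟨a, by simpa using ha⟩ ⟨b, by simpa using hb⟩
  have hc : ∀ σ : V → Fin k, (lst G (Finset.univ.erase v) σ v).card =
      (Finset.univ.filter (fun c : Fin k =>
                ∀ u : {u : V // u ≠ v}, G.Adj u.1 v → σ u.1 ≠ c)).card := by
    intro σ
    congr 1
    ext c
    simp only [lst, Finset.mem_filter, Finset.mem_univ, true_and, Finset.mem_erase, and_true]
    constructor
    · intro h u hu
      exact h u.1 u.2 hu.symm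
    · intro h w hw hvw
      exact h ⟨w, hw⟩ hvw.symm
  have hA : ∑ σ : V → Fin k, I (PR G (Finset.univ.erase v) σ) *
      I (((lst G (Finset.univ.erase v) σ v).card : ℝ) < (1 - δ) * l) =
      k * ((Finset.univ.filter (fun σ : {u : V // u ≠ v} → Fin k =>
            (∀ a b : {u : V // u ≠ v}, G.Adj a.1 b.1 → σ a ≠ σ b) ∧
              ((Finset.univ.filter (fun c : Fin k =>
                ∀ u : {u : V // u ≠ v}, G.Adj u.1 v → σ u ≠ c)).card : ℝ) <
                (1 - δ) * l)).card : ℝ) := by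
    rw [← Finset.sum_boole]
    refine Eq.trans ?_ (sum_restrict v _)
    apply Finset.sum_congr rfl
    intro σ _
    rw [← I_and, hp, hc]
    unfold I
    congr
  have hB : Z k G (Finset.univ.erase v) = k * ((Finset.univ.filter (fun σ : {u : V // u ≠ v} → Fin k =>
            ∀ a b : {u : V // u ≠ v}, G.Adj a.1 b.1 → σ a ≠ σ b)).card : ℝ) := by
    rw [← Finset.sum_boole]
    refine Eq.trans ?_ (sum_restrict v _)
    apply Finset.sum_congr rfl
    intro σ _
    rw [hp]
    unfold I
    congr
  rw [hA, hB] at hT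
  apply div_le_of_le_mul₀ (by positivity) (by positivity)
  refine le_of_mul_le_mul_left ?_ hk'
  linarith
end TF

theorem stmt_17 (ε : ℝ) (hε0 : 0 < ε) (hε1 : ε < 1) :
    ∃ Δ₀ : ℕ, ∀ Δ : ℕ, Δ₀ ≤ Δ → ∀ k : ℕ, (Δ : ℝ) ≤ (1 - ε) * k * Real.log k →
    ∀ (V : Type) [Fintype V] [DecidableEq V] (G : SimpleGraph V) [DecidableRel G.Adj],
      G.CliqueFree 3 → G.maxDegree ≤ Δ → ∀ v : V, ∀ δ : ℝ, 0 < δ → δ < 1 →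
      ((Finset.univ.filter (fun σ : {u : V // u ≠ v} → Fin k =>
            (∀ a b : {u : V // u ≠ v}, G.Adj a.1 b.1 → σ a ≠ σ b) ∧
              ((Finset.univ.filter (fun c : Fin k =>
                ∀ u : {u : V // u ≠ v}, G.Adj u.1 v → σ u ≠ c)).card : ℝ) <
                (1 - δ) * (Δ : ℝ) ^ (ε / 2))).card : ℝ) /
          ((Finset.univ.filter (fun σ : {u : V // u ≠ v} → Fin k =>
            ∀ a b : {u : V // u ≠ v}, G.Adj a.1 b.1 → σ a ≠ σ b)).card : ℝ) ≤
        2 * Real.exp (-(δ ^ 2 * (Δ : ℝ) ^ (ε / 2)) / 2) := by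
  obtain ⟨t, Δ₀, ht, hnum⟩ := TF.numerics ε hε0 hε1
  refine ⟨Δ₀, fun Δ hΔ k hk V _ _ G _ hG hdeg v δ hδ0 hδ1 => ?_⟩
  obtain ⟨hk0, hl, N2, N3, N4⟩ := hnum Δ hΔ k hk
  have hΔ' : ∀ (R : Finset V) v, ((@Finset.filter V (G.Adj v) (fun _ => Classical.propDecidable _) R)).card ≤ Δ := by
    intro R w
    refine le_trans ?_ ((G.degree_le_maxDegree w).trans hdeg)
    rw [← G.card_neighborFinset_eq_degree]
    apply Finset.card_le_card
    intro x hx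
    simp only [Finset.mem_filter] at hx
    simpa using hx.2
  convert TF.final hk0 G hG t Δ ht hΔ' _ hl N2 N3 N4 v δ hδ0 hδ1
end
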